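/- arXiv:math/0611488 — 3 statements merged into one kernel-verified Lean document; each statement's English description precedes it below -/
import Mathlib

section
/- Let J = (f_1,...,f_n) ⊆ S = k[x_1,...,x_n] be generated by a homogeneous regular sequence with deg(f_i) = a_i, let I be a homogeneous ideal containing J, and let s = Σ_{i=1}^n (a_i − 1). Then H(S/J, t) = H(S/I, t) + H(S/(J : I), s − t) for all 0 ≤ t ≤ s. -/
open MvPolynomial

/-- Hilbert function of a homogeneous ideal `I`: the `K`-dimension of its degree-`d` piece. -/
noncomputable def hilb {K : Type} [Field K] {n : ℕ}
    (I : Ideal (MvPolynomial (Fin n) K)) (d : ℕ) : ℕ :=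
  Module.finrank K ↥(Submodule.restrictScalars K I ⊓ homogeneousSubmodule (Fin n) K d)

/-- Hilbert function of the quotient `S/I` in degree `d`. -/
noncomputable def hilbQ {K : Type} [Field K] {n : ℕ}
    (I : Ideal (MvPolynomial (Fin n) K)) (d : ℕ) : ℕ :=
  Module.finrank K
    ((homogeneousSubmodule (Fin n) K d).map (Ideal.Quotient.mkₐ K I).toLinearMap)

/-- A homogeneous ideal: closed under taking homogeneous components. -/
def IsHomog {K : Type} [Field K] {n : ℕ} (I : Ideal (MvPolynomial (Fin n) K)) : Prop :=
  ∀ f ∈ I, ∀ d : ℕ, homogeneousComponent d f ∈ I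

/-- `f 0, ..., f (r-1)` is a regular sequence: it generates a proper ideal and each `f i`
is a nonzerodivisor modulo the ideal generated by the previous elements. -/
def IsRegSeq {K : Type} [Field K] {n r : ℕ} (f : Fin r → MvPolynomial (Fin n) K) : Prop :=
  Ideal.span (Set.range f) ≠ ⊤ ∧
  ∀ i : Fin r, ∀ g : MvPolynomial (Fin n) K,
    f i * g ∈ Ideal.span (f '' {j : Fin r | j < i}) →
      g ∈ Ideal.span (f '' {j : Fin r | j < i})

/-- A monomial ideal: generated by monomials. -/
def IsMonomialIdeal {K : Type} [Field K] {n : ℕ} (I : Ideal (MvPolynomial (Fin n) K)) : Prop :=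
  ∃ T : Set (Fin n →₀ ℕ), I = Ideal.span ((fun u => monomial u (1 : K)) '' T)

/-- `x^v` is lexicographically greater than `x^u` (for `x_0 > x_1 > ... > x_{n-1}`). -/
def lexGT {n : ℕ} (v u : Fin n →₀ ℕ) : Prop :=
  ∃ i : Fin n, u i < v i ∧ ∀ j : Fin n, j < i → v j = u j

open CategoryTheory CategoryTheory.Abelian RingTheory.Sequence in
theorem rees_aux {R : Type} [CommRing R] (N : ModuleCat.{0} R) (rs : List R) :
    ∀ (M : ModuleCat.{0} R), IsWeaklyRegular M rs → (∀ r ∈ rs, r ∈ Module.annihilator R N) →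
      (∀ i < rs.length, Subsingleton (Ext N M i)) ∧
      Nonempty (Ext N M rs.length ≃ₗ[R]
        (N →ₗ[R] (M ⧸ (Ideal.ofList rs • (⊤ : Submodule R M))))) := by
  induction rs with
  | nil =>
    intro M _ _
    refine ⟨by simp, ⟨?_⟩⟩
    have h : (Ideal.ofList ([] : List R) • (⊤ : Submodule R M)) = ⊥ := by simp
    exact (Ext.linearEquiv₀ (R := R)).trans (ModuleCat.homLinearEquiv.trans
      (LinearEquiv.congrRight (Submodule.quotEquivOfEqBot _ h).symm))
  | cons a rs ih =>
    intro M hreg hann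
    rw [isWeaklyRegular_cons_iff] at hreg
    obtain ⟨ha, hrs⟩ := hreg
    obtain ⟨hvan, ⟨e⟩⟩ := ih (ModuleCat.of R (QuotSMulTop a M)) hrs
      (fun r hr => hann r (List.mem_cons_of_mem _ hr))
    have hse := ha.smulShortComplex_shortExact
    have haN := hann a List.mem_cons_self
    have hzero : ∀ i (x : Ext N M i), x.comp (Ext.mk₀ (M.smulShortComplex a).f) (add_zero i) = 0 := by
      intro i x
      have := Ext.postcomp_smul_id_eq_zero_of_mem_annihilator (M := M) haN i
      exact congrArg (fun f => f.hom x) this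
    have hsurj : ∀ i (x : Ext N M (i+1)), ∃ y : Ext N (ModuleCat.of R (QuotSMulTop a M)) i,
        y.comp hse.extClass rfl = x := fun i x =>
      Ext.covariant_sequence_exact₁ N hse x (hzero _ x) rfl
    have hv : ∀ i < (a :: rs).length, Subsingleton (Ext N M i) := by
      intro i hi
      match i with
      | 0 =>
        have : Subsingleton (N →ₗ[R] M) :=
          IsSMulRegular.linearMap_subsingleton_of_mem_annihilator ha haN
        exact (Ext.addEquiv₀.trans ModuleCat.homAddEquiv).subsingleton
      | i + 1 =>
        have := hvan i (by simpa using hi)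
        refine ⟨fun x y => ?_⟩
        obtain ⟨x', rfl⟩ := hsurj i x
        obtain ⟨y', rfl⟩ := hsurj i y
        rw [Subsingleton.elim x' y']
    refine ⟨hv, ⟨?_⟩⟩
    let δ : Ext N (ModuleCat.of R (QuotSMulTop a M)) rs.length →ₗ[R] Ext N M (rs.length + 1) :=
      { toFun := fun y => y.comp hse.extClass rfl
        map_add' := by intro x y; exact Ext.add_comp _ _ _ _
        map_smul' := by intro r x; exact Ext.smul_comp _ _ _ _ }
    have hδ : Function.Bijective δ := by
      constructor
      · rw [injective_iff_map_eq_zero]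
        intro x hx
        obtain ⟨y, rfl⟩ := Ext.covariant_sequence_exact₃ N hse x rfl hx
        have := hv rs.length (by simp)
        have hy : y = 0 := Subsingleton.elim (α := Ext N M rs.length) _ _
        rw [hy, Ext.zero_comp]; rfl
      · exact hsurj _
    exact (LinearEquiv.ofBijective δ hδ).symm.trans (e.trans (LinearEquiv.congrRight
      (Submodule.quotOfListConsSMulTopEquivQuotSMulTopInner M a rs).symm))



open RingTheory.Sequence in
theorem weaklyRegular_of_isRegSeq {K : Type} [Field K] {n r : ℕ}
    {f : Fin r → MvPolynomial (Fin n) K} (h : ∀ i : Fin r, ∀ g : MvPolynomial (Fin n) K,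
    f i * g ∈ Ideal.span (f '' {j : Fin r | j < i}) →
      g ∈ Ideal.span (f '' {j : Fin r | j < i})) :
    IsWeaklyRegular (MvPolynomial (Fin n) K) (List.ofFn f) := by
  constructor
  intro i hi
  have hi' : i < r := by simpa using hi
  have hset : {x | x ∈ (List.ofFn f).take i} = f '' {j : Fin r | j < ⟨i, hi'⟩} := by
    ext x
    simp only [Set.mem_ofPred_eq, List.mem_take_iff_getElem, List.getElem_ofFn, Set.mem_image]
    constructor
    · rintro ⟨j, hj, rfl⟩
      exact ⟨⟨j, by simp at hj; omega⟩, by simp [Fin.lt_def]; omega, rfl⟩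
    · rintro ⟨j, hj, rfl⟩
      exact ⟨j, by simp [Fin.lt_def] at hj ⊢; omega, rfl⟩
  rw [isSMulRegular_quotient_iff_mem_of_smul_mem]
  intro x hx
  rw [Ideal.smul_eq_mul, Ideal.mul_top, Ideal.ofList, hset] at hx ⊢
  simp only [List.getElem_ofFn, smul_eq_mul] at hx
  exact h ⟨i, hi'⟩ x hx

theorem X_isRegSeq {K : Type} [Field K] {n : ℕ} (i : Fin n) (g : MvPolynomial (Fin n) K)
    (h : X i * g ∈ Ideal.span ((X : Fin n → MvPolynomial (Fin n) K) '' {j : Fin n | j < i})) :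
      g ∈ Ideal.span ((X : Fin n → MvPolynomial (Fin n) K) '' {j : Fin n | j < i}) := by
  rw [mem_ideal_span_X_image] at h ⊢
  intro m hm
  obtain ⟨j, hj, hj'⟩ := h (Finsupp.single i 1 + m) (by
    rw [mem_support_iff, coeff_X_mul]; exact mem_support_iff.mp hm)
  refine ⟨j, hj, ?_⟩
  have : i ≠ j := by rintro rfl; simp at hj
  simpa [Finsupp.single_apply, this] using hj'

theorem ofList_ofFn {K : Type} [Field K] {n r : ℕ}
    (f : Fin r → MvPolynomial (Fin n) K) :
    (Ideal.ofList (List.ofFn f) • (⊤ : Submodule (MvPolynomial (Fin n) K) (MvPolynomial (Fin n) K)))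
      = Ideal.span (Set.range f) := by
  rw [Ideal.smul_eq_mul, Ideal.mul_top, Ideal.ofList]
  congr 1
  ext x
  simp [List.mem_ofFn]

open CategoryTheory CategoryTheory.Abelian in
theorem socle_cyclic {K : Type} [Field K] {n : ℕ}
    {f : Fin n → MvPolynomial (Fin n) K} (hreg : IsRegSeq f)
    (hJm : Ideal.span (Set.range f) ≤ Ideal.span (Set.range (X : Fin n → MvPolynomial (Fin n) K))) :
    ∃ w : MvPolynomial (Fin n) K, (∀ i, X i * w ∈ Ideal.span (Set.range f)) ∧
      ∀ u : MvPolynomial (Fin n) K,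
      (∀ i, X i * u ∈ Ideal.span (Set.range f)) →
      ∃ r : MvPolynomial (Fin n) K, u - r * w ∈ Ideal.span (Set.range f) := by
  set m := Ideal.span (Set.range (X : Fin n → MvPolynomial (Fin n) K)) with hm
  set J := Ideal.span (Set.range f) with hJ
  let N := ModuleCat.of (MvPolynomial (Fin n) K) (MvPolynomial (Fin n) K ⧸ m)
  have hannN : Module.annihilator (MvPolynomial (Fin n) K) N = m := Ideal.annihilator_quotient
  obtain ⟨-, ⟨e1⟩⟩ := rees_aux N (List.ofFn f) (ModuleCat.of _ (MvPolynomial (Fin n) K))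
    (weaklyRegular_of_isRegSeq hreg.2) (by
      intro r hr
      rw [hannN]
      rw [List.mem_ofFn] at hr
      exact hJm (Ideal.subset_span hr))
  obtain ⟨-, ⟨e2⟩⟩ := rees_aux N (List.ofFn (X : Fin n → MvPolynomial (Fin n) K))
    (ModuleCat.of _ (MvPolynomial (Fin n) K))
    (weaklyRegular_of_isRegSeq X_isRegSeq) (by
      intro r hr
      rw [hannN]
      rw [List.mem_ofFn] at hr
      exact Ideal.subset_span hr)
  rw [List.length_ofFn] at e1 e2
  let e : ((MvPolynomial (Fin n) K ⧸ m) →ₗ[MvPolynomial (Fin n) K] (MvPolynomial (Fin n) K ⧸ J)) ≃ₗ[MvPolynomial (Fin n) K]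
    ((MvPolynomial (Fin n) K ⧸ m) →ₗ[MvPolynomial (Fin n) K] (MvPolynomial (Fin n) K ⧸ m)) :=
    (LinearEquiv.congrRight (Submodule.quotEquivOfEq _ _ (ofList_ofFn f).symm)).trans
      (e1.symm.trans (e2.trans (LinearEquiv.congrRight (Submodule.quotEquivOfEq _ _ (ofList_ofFn X)))))
  obtain ⟨w, hw⟩ := Ideal.Quotient.mk_surjective (e.symm LinearMap.id (Ideal.Quotient.mk m 1))
  refine ⟨w, fun i => ?_, fun u hu => ?_⟩
  · rw [← Ideal.Quotient.eq_zero_iff_mem, map_mul, hw]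
    have h1 := (e.symm LinearMap.id).map_smul (X i) (Ideal.Quotient.mk m 1)
    have h2 : (X i : MvPolynomial (Fin n) K) • (Ideal.Quotient.mk m 1) = 0 := by
      refine Ideal.Quotient.eq_zero_iff_mem.mpr ?_
      exact Ideal.mul_mem_right _ _ (Ideal.subset_span ⟨i, rfl⟩)
    rw [h2, map_zero] at h1
    exact h1.symm
  let ψ : (MvPolynomial (Fin n) K ⧸ m) →ₗ[MvPolynomial (Fin n) K] (MvPolynomial (Fin n) K ⧸ J) :=
    Submodule.liftQ m (LinearMap.toSpanSingleton _ _ (Ideal.Quotient.mk J u)) (by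
      rw [hm, Ideal.span, Submodule.span_le]
      rintro _ ⟨i, rfl⟩
      rw [SetLike.mem_coe, LinearMap.mem_ker, LinearMap.toSpanSingleton_apply]
      exact Ideal.Quotient.eq_zero_iff_mem.mpr (hu i))
  have hψ : ψ (Ideal.Quotient.mk m 1) = Ideal.Quotient.mk J u := by
    refine (Submodule.liftQ_apply _ _ _).trans ?_
    simp
  obtain ⟨r, hr⟩ := Ideal.Quotient.mk_surjective (e ψ (Ideal.Quotient.mk m 1))
  refine ⟨r, ?_⟩
  have h1 : e ψ = r • LinearMap.id := by
    ext
    simp only [LinearMap.comp_apply]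
    refine hr.symm.trans ?_
    change _ = r • Ideal.Quotient.mk m 1
    exact (congrArg (Ideal.Quotient.mk m) (mul_one r)).symm
  have h2 : ψ = r • e.symm LinearMap.id := by
    rw [← map_smul, ← h1, e.symm_apply_apply]
  rw [← Ideal.Quotient.eq, ← hψ, h2, LinearMap.smul_apply, ← hw]
  rfl

section hilb
attribute [local instance] MvPolynomial.gradedAlgebra

theorem isHomog_span {K : Type} [Field K] {n : ℕ} (s : Set (MvPolynomial (Fin n) K))
    (hs : ∀ x ∈ s, ∃ d, x.IsHomogeneous d) : IsHomog (Ideal.span s) := by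
  intro g hg d
  refine homogeneousComponent_mem_of_mem (Ideal.homogeneous_span _ s ?_) hg d
  intro x hx
  obtain ⟨d, hd⟩ := hs x hx
  exact ⟨d, hd⟩

theorem homogComp_mul {K : Type} [Field K] {n a : ℕ} {f : MvPolynomial (Fin n) K}
    (hf : f.IsHomogeneous a) (g : MvPolynomial (Fin n) K) (t : ℕ) :
    homogeneousComponent (t + a) (f * g) = f * homogeneousComponent t g := by
  have := DirectSum.coe_decompose_mul_of_left_mem_of_le (𝒜 := homogeneousSubmodule (Fin n) K)
    (n := t + a) (i := a) (a := f) (b := g) hf (by omega)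
  rw [Nat.add_sub_cancel] at this
  rw [← decomposition.decompose'_apply, ← decomposition.decompose'_apply]
  exact this

theorem homogComp_mul_lt {K : Type} [Field K] {n a : ℕ} {f : MvPolynomial (Fin n) K}
    (hf : f.IsHomogeneous a) (g : MvPolynomial (Fin n) K) (t : ℕ) (h : t < a) :
    homogeneousComponent t (f * g) = 0 := by
  rw [← decomposition.decompose'_apply]
  exact DirectSum.coe_decompose_mul_of_left_mem_of_not_le (𝒜 := homogeneousSubmodule (Fin n) K)
    (n := t) (i := a) (a := f) (b := g) hf (by omega)
end hilb

instance finHomog {K : Type} [Field K] {n : ℕ} (d : ℕ) :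
    FiniteDimensional K (homogeneousSubmodule (Fin n) K d) :=
  Module.Finite.iff_fg.mpr (homogeneousSubmodule_fg _ _ _)

/-- Rank-nullity for a linear map restricted to a subspace. -/
theorem finrank_map_add {K V W : Type} [Field K] [AddCommGroup V] [Module K V] [AddCommGroup W]
    [Module K W] (φ : V →ₗ[K] W) (U : Submodule K V) [FiniteDimensional K U] :
    Module.finrank K (U.map φ) + Module.finrank K ↥(LinearMap.ker φ ⊓ U) = Module.finrank K U := by
  have h := LinearMap.finrank_range_add_finrank_ker (φ.domRestrict U)
  rw [LinearMap.range_domRestrict] at h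
  rw [← h]
  congr 1
  have : LinearMap.ker (φ.domRestrict U) = (LinearMap.ker φ ⊓ U).comap U.subtype := by
    ext x; simp
  rw [this]
  exact (LinearEquiv.finrank_eq (Submodule.comapSubtypeEquivOfLe inf_le_right)).symm

theorem ker_mk {K : Type} [Field K] {n : ℕ} (I : Ideal (MvPolynomial (Fin n) K)) :
    LinearMap.ker (Ideal.Quotient.mkₐ K I).toLinearMap = Submodule.restrictScalars K I := by
  ext x
  simp [Ideal.Quotient.eq_zero_iff_mem]

theorem hilbQ_add_hilb {K : Type} [Field K] {n : ℕ} (I : Ideal (MvPolynomial (Fin n) K)) (d : ℕ) :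
    hilbQ I d + hilb I d = Module.finrank K (homogeneousSubmodule (Fin n) K d) := by
  have := finrank_map_add (Ideal.Quotient.mkₐ K I).toLinearMap (homogeneousSubmodule (Fin n) K d)
  rwa [ker_mk] at this

theorem hilb_step {K : Type} [Field K] {n a : ℕ} {J : Ideal (MvPolynomial (Fin n) K)}
    (hJ : IsHomog J) {f : MvPolynomial (Fin n) K} (hf : f.IsHomogeneous a)
    (hreg : ∀ g, f * g ∈ J → g ∈ J) (t : ℕ) :
    hilbQ (J ⊔ Ideal.span {f}) (t + a) + hilbQ J t = hilbQ J (t + a) := by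
  have h1 := hilbQ_add_hilb (J ⊔ Ideal.span {f}) (t + a)
  have h2 := hilbQ_add_hilb J (t + a)
  have h3 := hilbQ_add_hilb J t
  let π := (Ideal.Quotient.mkₐ K J).toLinearMap
  have hker := ker_mk J
  set V := homogeneousSubmodule (Fin n) K t
  let U := Submodule.restrictScalars K (J ⊔ Ideal.span {f}) ⊓ homogeneousSubmodule (Fin n) K (t + a)
  have : FiniteDimensional K U := Submodule.finiteDimensional_inf_right _ _
  let μ := π ∘ₗ LinearMap.mulLeft K f
  have h4 := finrank_map_add π U
  have h5 := finrank_map_add μ V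
  have hk1 : LinearMap.ker π ⊓ U = Submodule.restrictScalars K J ⊓
      homogeneousSubmodule (Fin n) K (t + a) := by
    rw [hker, ← inf_assoc]
    congr 1
    exact inf_eq_left.mpr (fun x hx => (le_sup_left : J ≤ J ⊔ Ideal.span {f}) hx)
  have hk2 : LinearMap.ker μ = Submodule.restrictScalars K J := by
    ext x
    simp only [μ, LinearMap.mem_ker, LinearMap.comp_apply, LinearMap.mulLeft_apply]
    rw [← LinearMap.mem_ker, hker]
    exact ⟨fun h => hreg x h, fun h => J.mul_mem_left _ h⟩
  have hr : U.map π = V.map μ := by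
    ext y
    constructor
    · rintro ⟨x, ⟨hx, hx'⟩, rfl⟩
      obtain ⟨j, hj, k, hk, rfl⟩ := Submodule.mem_sup.mp hx
      obtain ⟨g, rfl⟩ := Ideal.mem_span_singleton'.mp hk
      refine ⟨homogeneousComponent t g, homogeneousComponent_mem _ _, ?_⟩
      have e1 : homogeneousComponent (t + a) (j + g * f) = j + g * f :=
        homogeneousComponent_eq_self hx'
      rw [map_add, mul_comm g f, homogComp_mul hf] at e1
      rw [mul_comm g f, ← e1, map_add]
      have : π (homogeneousComponent (t + a) j) = 0 := by
        rw [← LinearMap.mem_ker, hker]; exact hJ j hj _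
      rw [this, zero_add]; rfl
    · rintro ⟨x, hx, rfl⟩
      refine ⟨f * x, ⟨?_, ?_⟩, rfl⟩
      · exact (le_sup_right : _ ≤ J ⊔ Ideal.span {f})
          (Ideal.mul_mem_right _ _ (Ideal.mem_span_singleton_self f))
      · have := hf.mul hx
        rw [add_comm] at this
        exact this
  rw [hk1] at h4
  rw [hk2] at h5
  rw [hr] at h4
  unfold hilb at h1 h2 h3
  change _ + Module.finrank K U = _ at h1
  change _ + Module.finrank K ↥(Submodule.restrictScalars K J ⊓ V) = _ at h3
  omega

theorem hilb_step_lt {K : Type} [Field K] {n a : ℕ} {J : Ideal (MvPolynomial (Fin n) K)}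
    (hJ : IsHomog J) {f : MvPolynomial (Fin n) K} (hf : f.IsHomogeneous a)
    (t : ℕ) (ht : t < a) :
    hilbQ (J ⊔ Ideal.span {f}) t = hilbQ J t := by
  have h1 := hilbQ_add_hilb (J ⊔ Ideal.span {f}) t
  have h2 := hilbQ_add_hilb J t
  have : Submodule.restrictScalars K (J ⊔ Ideal.span {f}) ⊓ homogeneousSubmodule (Fin n) K t =
      Submodule.restrictScalars K J ⊓ homogeneousSubmodule (Fin n) K t := by
    refine le_antisymm ?_ (inf_le_inf_right _ (fun x hx => (le_sup_left : J ≤ J ⊔ Ideal.span {f}) hx))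
    rintro x ⟨hx, hx'⟩
    refine ⟨?_, hx'⟩
    obtain ⟨j, hj, k, hk, rfl⟩ := Submodule.mem_sup.mp hx
    obtain ⟨g, rfl⟩ := Ideal.mem_span_singleton'.mp hk
    have e1 : homogeneousComponent t (j + g * f) = j + g * f :=
      homogeneousComponent_eq_self hx'
    rw [map_add, mul_comm g f, homogComp_mul_lt hf _ _ ht, add_zero] at e1
    rw [mul_comm g f, ← e1]
    exact hJ j hj _
  unfold hilb at h1 h2
  rw [this] at h1
  omega

/-- Hilbert series of `S/J`. -/
noncomputable def hilbSeries {K : Type} [Field K] {n : ℕ} (J : Ideal (MvPolynomial (Fin n) K)) :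
    PowerSeries ℤ := PowerSeries.mk (fun t => (hilbQ J t : ℤ))

theorem hilbSeries_step {K : Type} [Field K] {n a : ℕ} {J : Ideal (MvPolynomial (Fin n) K)}
    (hJ : IsHomog J) {f : MvPolynomial (Fin n) K} (hf : f.IsHomogeneous a)
    (hreg : ∀ g, f * g ∈ J → g ∈ J) :
    hilbSeries (J ⊔ Ideal.span {f}) = (1 - PowerSeries.X ^ a) * hilbSeries J := by
  rw [sub_mul, one_mul, eq_sub_iff_add_eq]
  ext t
  rw [map_add, PowerSeries.coeff_X_pow_mul']
  simp only [hilbSeries, PowerSeries.coeff_mk]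
  split_ifs with h
  · obtain ⟨t, rfl⟩ := Nat.exists_eq_add_of_le' h
    rw [Nat.add_sub_cancel]
    exact_mod_cast hilb_step hJ hf hreg t
  · rw [add_zero, hilb_step_lt hJ hf t (by omega)]

theorem hilbSeries_prod {K : Type} [Field K] {n r : ℕ} (f : Fin r → MvPolynomial (Fin n) K)
    (a : Fin r → ℕ) (hhom : ∀ i, (f i).IsHomogeneous (a i))
    (hreg : ∀ i : Fin r, ∀ g : MvPolynomial (Fin n) K,
    f i * g ∈ Ideal.span (f '' {j : Fin r | j < i}) →
      g ∈ Ideal.span (f '' {j : Fin r | j < i})) :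
    hilbSeries (Ideal.span (Set.range f)) =
      (∏ i, (1 - PowerSeries.X ^ a i)) * hilbSeries (⊥ : Ideal (MvPolynomial (Fin n) K)) := by
  have key : ∀ k ≤ r, hilbSeries (Ideal.span (f '' {j : Fin r | j.val < k})) =
      (∏ i with i.val < k, (1 - PowerSeries.X ^ a i)) *
        hilbSeries (⊥ : Ideal (MvPolynomial (Fin n) K)) := by
    intro k
    induction k with
    | zero => intro _; simp
    | succ k ih =>
      intro hk
      have hset : {j : Fin r | j.val < k + 1} = {j : Fin r | j.val < k} ∪ {⟨k, hk⟩} := by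
        ext j; simp [Fin.ext_iff]; omega
      have hset' : (Finset.univ.filter fun j : Fin r => j.val < k + 1) =
          insert ⟨k, hk⟩ (Finset.univ.filter fun j : Fin r => j.val < k) := by
        ext j; simp [Fin.ext_iff]; omega
      rw [hset, Set.image_union, Set.image_singleton, Ideal.span_union,
        hilbSeries_step (a := a ⟨k, hk⟩) ?_ (hhom _), ih (by omega), hset',
        Finset.prod_insert (by simp), mul_assoc]
      · exact fun g hg => hreg ⟨k, hk⟩ g hg
      · apply isHomog_span
        rintro _ ⟨j, -, rfl⟩
        exact ⟨_, hhom j⟩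
  have := key r le_rfl
  simpa using this

theorem hilbQ_eq_zero_iff {K : Type} [Field K] {n : ℕ} (J : Ideal (MvPolynomial (Fin n) K)) (t : ℕ) :
    hilbQ J t = 0 ↔ ∀ g : MvPolynomial (Fin n) K, g.IsHomogeneous t → g ∈ J := by
  unfold hilbQ
  rw [Submodule.finrank_eq_zero, ← le_bot_iff, Submodule.map_le_iff_le_comap, Submodule.comap_bot, ker_mk]
  rfl

theorem mem_m {K : Type} [Field K] {n t : ℕ} (ht : t ≠ 0) {g : MvPolynomial (Fin n) K}
    (hg : g.IsHomogeneous t) : g ∈ Ideal.span (Set.range (X : Fin n → MvPolynomial (Fin n) K)) := by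
  rw [← Set.image_univ, mem_ideal_span_X_image]
  intro m hm
  by_contra! h
  have h0 : m = 0 := by ext i; exact h i trivial
  have := hg.degree_eq_sum_deg_support hm
  subst h0
  simp at this
  exact ht this

theorem coeff_zero_of_mem_m {K : Type} [Field K] {n : ℕ} {g : MvPolynomial (Fin n) K}
    (hg : g ∈ Ideal.span (Set.range (X : Fin n → MvPolynomial (Fin n) K))) : coeff 0 g = 0 := by
  rw [← Set.image_univ, mem_ideal_span_X_image] at hg
  by_contra h
  obtain ⟨i, -, hi⟩ := hg 0 (mem_support_iff.mpr h)
  simp at hi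

theorem hom_zero {K : Type} [Field K] {n : ℕ} {g : MvPolynomial (Fin n) K}
    (hg : g.IsHomogeneous 0) : g = C (coeff 0 g) := by
  rw [← homogeneousComponent_zero, homogeneousComponent_eq_self hg]

theorem hilbSeries_X {K : Type} [Field K] {n : ℕ} :
    hilbSeries (Ideal.span (Set.range (X : Fin n → MvPolynomial (Fin n) K))) = 1 := by
  ext t
  rw [PowerSeries.coeff_one, hilbSeries, PowerSeries.coeff_mk]
  split_ifs with h
  · subst h
    have h := hilbQ_add_hilb (Ideal.span (Set.range (X : Fin n → MvPolynomial (Fin n) K))) 0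
    have h1 : hilb (Ideal.span (Set.range (X : Fin n → MvPolynomial (Fin n) K))) 0 = 0 := by
      unfold hilb
      rw [Submodule.finrank_eq_zero, eq_bot_iff]
      · rintro x ⟨hx, hx'⟩
        rw [Submodule.mem_bot, hom_zero hx', coeff_zero_of_mem_m hx, C_0]
    have h2 : homogeneousSubmodule (Fin n) K 0 = Submodule.span K {1} := by
      refine le_antisymm ?_ ?_
      · intro x hx
        rw [Submodule.mem_span_singleton]
        exact ⟨coeff 0 x, by rw [smul_eq_C_mul, mul_one, ← hom_zero hx]⟩
      · rw [Submodule.span_singleton_le_iff_mem]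
        exact isHomogeneous_one _ _
    rw [h2, finrank_span_singleton one_ne_zero, h1] at h
    exact_mod_cast h
  · have := (hilbQ_eq_zero_iff (Ideal.span (Set.range (X : Fin n → MvPolynomial (Fin n) K))) t).mpr
      (fun g hg => mem_m h hg)
    exact_mod_cast this

theorem deg_pos {K : Type} [Field K] {n : ℕ}
    {f : Fin n → MvPolynomial (Fin n) K} {a : Fin n → ℕ}
    (hreg : IsRegSeq f) (hhom : ∀ i, (f i).IsHomogeneous (a i)) (i : Fin n) : a i ≠ 0 := by
  intro h
  have h0 := hhom i
  rw [h] at h0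
  have h1 := hom_zero h0
  by_cases hc : coeff 0 (f i) = 0
  · rw [hc, C_0] at h1
    have := hreg.2 i 1 (by rw [h1, zero_mul]; exact zero_mem _)
    apply hreg.1
    rw [Ideal.eq_top_iff_one]
    exact Ideal.span_mono (Set.image_subset_range _ _) this
  · apply hreg.1
    refine Ideal.eq_top_of_isUnit_mem _ (Ideal.subset_span ⟨i, rfl⟩) ?_
    rw [h1]
    exact (isUnit_iff_ne_zero.mpr hc).map C

open Polynomial in
theorem hilbSeries_J {K : Type} [Field K] {n : ℕ}
    {f : Fin n → MvPolynomial (Fin n) K} {a : Fin n → ℕ}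
    (hreg : IsRegSeq f) (hhom : ∀ i, (f i).IsHomogeneous (a i)) :
    hilbSeries (Ideal.span (Set.range f)) =
      ((∏ i, ∑ j ∈ Finset.range (a i), (Polynomial.X : ℤ[X]) ^ j : ℤ[X]) : PowerSeries ℤ) := by
  have h1 := hilbSeries_prod f a hhom hreg.2
  have h2 := hilbSeries_prod (K := K) (n := n) MvPolynomial.X (fun _ => 1)
    (fun i => isHomogeneous_X K i) X_isRegSeq
  rw [hilbSeries_X] at h2
  have h3 : ∀ i, (1 - PowerSeries.X ^ a i : PowerSeries ℤ) =
      (∑ j ∈ Finset.range (a i), PowerSeries.X ^ j) * (1 - PowerSeries.X ^ 1) := by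
    intro i
    rw [pow_one, geom_sum_mul_neg]
  rw [h1, Finset.prod_congr rfl (fun i _ => h3 i), Finset.prod_mul_distrib, mul_assoc, ← h2, mul_one]
  have := map_prod (Polynomial.coeToPowerSeries.ringHom (R := ℤ))
    (fun i => ∑ j ∈ Finset.range (a i), (Polynomial.X : ℤ[X]) ^ j) Finset.univ
  rw [Polynomial.coeToPowerSeries.ringHom_apply] at this
  rw [this]
  refine Finset.prod_congr rfl (fun i _ => ?_)
  rw [map_sum]
  simp

open Polynomial in
theorem hilb_top {K : Type} [Field K] {n : ℕ}
    {f : Fin n → MvPolynomial (Fin n) K} {a : Fin n → ℕ}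
    (hreg : IsRegSeq f) (hhom : ∀ i, (f i).IsHomogeneous (a i)) :
    hilbQ (Ideal.span (Set.range f)) (∑ i, (a i - 1)) = 1 ∧
    ∀ t > ∑ i, (a i - 1), hilbQ (Ideal.span (Set.range f)) t = 0 := by
  have h := hilbSeries_J hreg hhom
  set P := (∏ i, ∑ j ∈ Finset.range (a i), (Polynomial.X : ℤ[X]) ^ j : ℤ[X]) with hP
  have hm : ∀ i, (∑ j ∈ Finset.range (a i), (Polynomial.X : ℤ[X]) ^ j).Monic :=
    fun i => monic_geom_sum_X (deg_pos hreg hhom i)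
  have hPm : P.Monic := monic_prod_of_monic _ _ (fun i _ => hm i)
  have hPd : P.natDegree = ∑ i, (a i - 1) := by
    rw [hP, natDegree_prod_of_monic _ _ (fun i _ => hm i)]
    refine Finset.sum_congr rfl (fun i _ => ?_)
    obtain ⟨b, hb⟩ := Nat.exists_eq_succ_of_ne_zero (deg_pos hreg hhom i)
    rw [hb]
    have h4 := congrArg natDegree (mul_geom_sum (Polynomial.X : ℤ[X]) (b + 1))
    rw [← Polynomial.C_1, (monic_X_sub_C (1 : ℤ)).natDegree_mul (monic_geom_sum_X (by simp)),
      natDegree_X_sub_C, natDegree_X_pow_sub_C] at h4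
    simp at h4 ⊢
    omega
  have hc : ∀ t, (hilbQ (Ideal.span (Set.range f)) t : ℤ) = P.coeff t := by
    intro t
    have := congrArg (PowerSeries.coeff t) h
    rwa [hilbSeries, PowerSeries.coeff_mk, Polynomial.coeff_coe] at this
  constructor
  · have := hc (∑ i, (a i - 1))
    rw [← hPd, hPm.coeff_natDegree] at this
    rw [← hPd]
    exact_mod_cast this
  · intro t ht
    have := hc t
    rw [coeff_eq_zero_of_natDegree_lt (by omega)] at this
    exact_mod_cast this

theorem mul_sub_const_mem {K : Type} [Field K] {n : ℕ} {J : Ideal (MvPolynomial (Fin n) K)}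
    {w : MvPolynomial (Fin n) K} (hw : ∀ i, X i * w ∈ J) (r : MvPolynomial (Fin n) K) :
    r * w - C (coeff 0 r) * w ∈ J := by
  rw [← sub_mul]
  have h1 : r - C (coeff 0 r) ∈ Ideal.span (Set.range (X : Fin n → MvPolynomial (Fin n) K)) := by
    rw [← Set.image_univ, mem_ideal_span_X_image]
    intro m hm
    by_contra! h
    have h0 : m = 0 := by ext i; exact h i trivial
    subst h0
    simp at hm
  have h2 : Ideal.span (Set.range (X : Fin n → MvPolynomial (Fin n) K)) ≤
      Submodule.comap (LinearMap.mulRight (MvPolynomial (Fin n) K) w) J := by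
    rw [Ideal.span, Submodule.span_le]
    rintro _ ⟨i, rfl⟩
    exact hw i
  exact h2 h1

theorem socle_one {K : Type} [Field K] {n : ℕ}
    {f : Fin n → MvPolynomial (Fin n) K} {a : Fin n → ℕ}
    (hreg : IsRegSeq f) (hhom : ∀ i, (f i).IsHomogeneous (a i))
    {w u : MvPolynomial (Fin n) K} (hw : ∀ i, X i * w ∈ Ideal.span (Set.range f))
    (hw' : w ∉ Ideal.span (Set.range f)) (hu : ∀ i, X i * u ∈ Ideal.span (Set.range f)) :
    ∃ c : K, u - C c * w ∈ Ideal.span (Set.range f) := by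
  obtain ⟨v, hv, hv'⟩ := socle_cyclic hreg (by
    rw [Ideal.span_le]
    rintro _ ⟨i, rfl⟩
    exact mem_m (deg_pos hreg hhom i) (hhom i))
  set J := Ideal.span (Set.range f)
  have key : ∀ u, (∀ i, X i * u ∈ J) → ∃ c : K, u - C c * v ∈ J := by
    intro u hu
    obtain ⟨r, hr⟩ := hv' u hu
    refine ⟨coeff 0 r, ?_⟩
    have := J.add_mem hr (mul_sub_const_mem hv r)
    convert this using 1
    ring
  obtain ⟨c, hc⟩ := key u hu
  obtain ⟨d, hd⟩ := key w hw
  have hd0 : d ≠ 0 := by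
    rintro rfl
    apply hw'
    simpa using hd
  refine ⟨c / d, ?_⟩
  have := J.sub_mem hc (J.mul_mem_left (C (c / d)) hd)
  convert this using 1
  have : (C c : MvPolynomial (Fin n) K) = C (c / d) * C d := by
    rw [← C_mul, div_mul_cancel₀ _ hd0]
  rw [this]
  ring

theorem prolong {K : Type} [Field K] {n : ℕ}
    {f : Fin n → MvPolynomial (Fin n) K} {a : Fin n → ℕ}
    (hreg : IsRegSeq f) (hhom : ∀ i, (f i).IsHomogeneous (a i))
    {s : ℕ} (hs : s = ∑ i, (a i - 1)) (k : ℕ) : ∀ (j : ℕ) (_ : j + k = s)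
    (u : MvPolynomial (Fin n) K) (_ : u.IsHomogeneous j) (_ : u ∉ Ideal.span (Set.range f)),
    ∃ h : MvPolynomial (Fin n) K, h.IsHomogeneous k ∧ u * h ∉ Ideal.span (Set.range f) := by
  obtain ⟨ht1, ht2⟩ := hilb_top hreg hhom
  rw [← hs] at ht1 ht2
  have hJhom : IsHomog (Ideal.span (Set.range f)) := by
    apply isHomog_span
    rintro _ ⟨j, rfl⟩
    exact ⟨_, hhom j⟩
  induction k with
  | zero => 
    intro j _ u _ hu
    exact ⟨1, isHomogeneous_one _ _, by simpa using hu⟩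
  | succ k ih =>
    intro j hj u huj hu
    have : ∃ i, X i * u ∉ Ideal.span (Set.range f) := by
      by_contra! hsoc
      have hne : hilbQ (Ideal.span (Set.range f)) s ≠ 0 := by omega
      rw [Ne, hilbQ_eq_zero_iff] at hne
      push Not at hne
      obtain ⟨w, hws, hw⟩ := hne
      have hwsoc : ∀ i, X i * w ∈ Ideal.span (Set.range f) := by
        intro i
        exact (hilbQ_eq_zero_iff _ _).mp (ht2 (1 + s) (by omega)) _ ((isHomogeneous_X K i).mul hws)
      obtain ⟨c, hc⟩ := socle_one hreg hhom hwsoc hw hsoc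
      have := hJhom _ hc j
      rw [map_sub, homogeneousComponent_C_mul, homogeneousComponent_eq_self huj,
        homogeneousComponent_of_mem hws, if_neg (by omega), mul_zero, sub_zero] at this
      exact hu this
    obtain ⟨i, hi⟩ := this
    obtain ⟨h, hh, hh'⟩ := ih (1 + j) (by omega) (X i * u) ((isHomogeneous_X K i).mul huj) hi
    refine ⟨X i * h, ?_, ?_⟩
    · rw [add_comm]; exact (isHomogeneous_X K i).mul hh
    · convert hh' using 2
      ring

theorem exists_functional {K : Type} [Field K] {n : ℕ}
    {f : Fin n → MvPolynomial (Fin n) K} {a : Fin n → ℕ}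
    (hreg : IsRegSeq f) (hhom : ∀ i, (f i).IsHomogeneous (a i))
    {s : ℕ} (hs : s = ∑ i, (a i - 1)) :
    ∃ φ : MvPolynomial (Fin n) K →ₗ[K] K,
      ∀ g : MvPolynomial (Fin n) K, g.IsHomogeneous s →
        (φ g = 0 ↔ g ∈ Ideal.span (Set.range f)) := by
  obtain ⟨ht1, ht2⟩ := hilb_top hreg hhom
  rw [← hs] at ht1 ht2
  have hne : hilbQ (Ideal.span (Set.range f)) s ≠ 0 := by omega
  rw [Ne, hilbQ_eq_zero_iff] at hne
  push Not at hne
  obtain ⟨w, hws, hw⟩ := hne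
  have hsoc : ∀ g : MvPolynomial (Fin n) K, g.IsHomogeneous s → ∀ i,
      X i * g ∈ Ideal.span (Set.range f) := by
    intro g hg i
    exact (hilbQ_eq_zero_iff _ _).mp (ht2 (1 + s) (by omega)) _ ((isHomogeneous_X K i).mul hg)
  obtain ⟨ψ, hψ⟩ : ∃ ψ : Module.Dual K (MvPolynomial (Fin n) K ⧸ Ideal.span (Set.range f)),
      ψ (Ideal.Quotient.mk _ w) ≠ 0 := by
    by_contra! h
    exact hw (Ideal.Quotient.eq_zero_iff_mem.mp ((Module.forall_dual_apply_eq_zero_iff K _).mp h))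
  refine ⟨ψ ∘ₗ (Ideal.Quotient.mkₐ K _).toLinearMap, fun g hg => ?_⟩
  have hJ0 : ∀ x ∈ Ideal.span (Set.range f),
      (ψ ∘ₗ (Ideal.Quotient.mkₐ K (Ideal.span (Set.range f))).toLinearMap) x = 0 := by
    intro x hx
    have : (Ideal.Quotient.mkₐ K (Ideal.span (Set.range f))).toLinearMap x = 0 :=
      Ideal.Quotient.eq_zero_iff_mem.mpr hx
    rw [LinearMap.comp_apply, this, map_zero]
  refine ⟨fun h => ?_, hJ0 g⟩
  obtain ⟨c, hc⟩ := socle_one hreg hhom (hsoc w hws) hw (hsoc g hg)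
  have h1 := hJ0 _ hc
  rw [map_sub, h, zero_sub, neg_eq_zero, ← smul_eq_C_mul, map_smul, smul_eq_zero] at h1
  rcases h1 with h1 | h1
  · simpa [h1] using hc
  · exact absurd h1 hψ

/-- liaison formula `H(S/J,t) = H(S/I,t) + H(S/(J:I), s-t)` for `0 ≤ t ≤ s`,
where `J` is generated by a full homogeneous regular sequence of degrees `a i`,
`J ⊆ I`, and `s = Σ (a i - 1)`. -/
theorem stmt4 {K : Type} [Field K] {n : ℕ}
    (f : Fin n → MvPolynomial (Fin n) K) (a : Fin n → ℕ)
    (hreg : IsRegSeq f) (hhom : ∀ i, (f i).IsHomogeneous (a i))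
    (I : Ideal (MvPolynomial (Fin n) K)) (hI : IsHomog I)
    (hJI : Ideal.span (Set.range f) ≤ I)
    (s : ℕ) (hs : s = ∑ i, (a i - 1)) :
    ∀ t : ℕ, t ≤ s →
      hilbQ (Ideal.span (Set.range f)) t =
        hilbQ I t + hilbQ (Submodule.colon (Ideal.span (Set.range f)) I) (s - t) := by
  intro t ht
  obtain ⟨ht1, ht2⟩ := hilb_top hreg hhom
  rw [← hs] at ht1 ht2
  obtain ⟨φ, hφ⟩ := exists_functional hreg hhom hs
  have hpro := prolong hreg hhom hs
  set J := Ideal.span (Set.range f) with hJ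
  have h1 := hilbQ_add_hilb J t
  have h2 := hilbQ_add_hilb I t
  have h3 := hilbQ_add_hilb (Submodule.colon J I) (s - t)
  let W := homogeneousSubmodule (Fin n) K (s - t)
  let U := Submodule.restrictScalars K I ⊓ homogeneousSubmodule (Fin n) K t
  have : FiniteDimensional K U := Submodule.finiteDimensional_inf_right _ _
  let β : MvPolynomial (Fin n) K →ₗ[K] Module.Dual K W :=
    ((LinearMap.mul K (MvPolynomial (Fin n) K)).compr₂ φ).compl₂ W.subtype
  have hβ : ∀ g (h : W), β g h = φ (g * h) := fun g h => rfl
  have h4 := finrank_map_add β U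
  have hker : LinearMap.ker β ⊓ U = Submodule.restrictScalars K J ⊓
      homogeneousSubmodule (Fin n) K t := by
    ext g
    constructor
    · rintro ⟨hg, -, hg'⟩
      refine ⟨?_, hg'⟩
      by_contra hgJ
      obtain ⟨h, hh, hh'⟩ := hpro (s - t) t (by omega) g hg' hgJ
      apply hh'
      have hd := IsHomogeneous.mul hg' hh
      rw [Nat.add_sub_cancel' ht] at hd
      rw [← hφ _ hd]
      have := LinearMap.congr_fun (LinearMap.mem_ker.mp hg) ⟨h, hh⟩
      exact this
    · rintro ⟨hg, hg'⟩
      refine ⟨?_, hJI hg, hg'⟩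
      rw [SetLike.mem_coe, LinearMap.mem_ker]
      ext h
      have hd := IsHomogeneous.mul hg' h.2
      rw [Nat.add_sub_cancel' ht] at hd
      exact (hφ _ hd).mpr (J.mul_mem_right _ hg)
  have hco : (U.map β).dualCoannihilator.map W.subtype =
      Submodule.restrictScalars K (Submodule.colon J I) ⊓ W := by
    ext h
    constructor
    · rintro ⟨⟨h, hW⟩, hh, rfl⟩
      refine ⟨?_, hW⟩
      change h ∈ Submodule.colon J I
      rw [Submodule.mem_colon]
      intro g hg
      rw [smul_eq_mul]
      rw [SetLike.mem_coe, Submodule.mem_dualCoannihilator] at hh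
      have hcomp : ∀ d, h * homogeneousComponent d g ∈ J := by
        intro d
        have hd : (h * homogeneousComponent d g).IsHomogeneous (s - t + d) :=
          IsHomogeneous.mul hW (homogeneousComponent_isHomogeneous d g)
        by_cases hdt : d ≤ t
        · by_contra hnot
          obtain ⟨y, hy, hy'⟩ := hpro (t - d) (s - t + d) (by omega) _ hd hnot
          apply hy'
          have hy2 := hd.mul hy
          rw [show s - t + d + (t - d) = s by omega] at hy2
          rw [← hφ _ hy2]
          have hgy := (homogeneousComponent_isHomogeneous d g).mul hy
          rw [Nat.add_sub_cancel' hdt] at hgy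
          have := hh (β (homogeneousComponent d g * y))
            ⟨_, ⟨I.mul_mem_right _ (hI g hg d), hgy⟩, rfl⟩
          rw [hβ] at this
          rw [← this]
          congr 1
          ring
        · exact (hilbQ_eq_zero_iff _ _).mp (ht2 (s - t + d) (by omega)) _ hd
      rw [← sum_homogeneousComponent g, Finset.mul_sum]
      exact J.sum_mem (fun d _ => hcomp d)
    · rintro ⟨hh, hW⟩
      refine ⟨⟨h, hW⟩, ?_, rfl⟩
      rw [SetLike.mem_coe, Submodule.mem_dualCoannihilator]
      rintro _ ⟨g, ⟨hg, hg'⟩, rfl⟩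
      rw [hβ]
      have hd := IsHomogeneous.mul hg' hW
      rw [Nat.add_sub_cancel' ht] at hd
      refine (hφ _ hd).mpr ?_
      rw [mul_comm]
      exact Submodule.mem_colon.mp hh g hg
  have h5 := Subspace.finrank_add_finrank_dualCoannihilator_eq (U.map β)
  have h6 : Module.finrank K (U.map β).dualCoannihilator =
      hilb (Submodule.colon J I) (s - t) := by
    change _ = Module.finrank K ↥(Submodule.restrictScalars K (Submodule.colon J I) ⊓ W)
    rw [← hco]
    exact (Submodule.equivMapOfInjective W.subtype W.injective_subtype _).finrank_eq
  rw [hker] at h4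
  change Module.finrank K (U.map β) + hilb J t = hilb I t at h4
  change _ = Module.finrank K W at h3
  omega
end

section
/- Fix degrees a_1 ≤ ... ≤ a_n and s = Σ_{i=1}^n (a_i − 1). For a nonnegative integer d, the statement EGH_{a,n}(d) holds if and only if EGH_{a,n}(s − d − 1) holds. -/
open MvPolynomial

/-- `EGHd K n a d`: every homogeneous ideal of `K[x_1,...,x_n]` containing a homogeneous
regular sequence of degrees `a 0, ..., a (n-1)` has the same Hilbert function in degrees
`d` and `d+1` as some homogeneous ideal containing the pure powers `x_i^{a i}`. -/
def EGHd (K : Type) [Field K] (n : ℕ) (a : Fin n → ℕ) (d : ℕ) : Prop :=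
  ∀ I : Ideal (MvPolynomial (Fin n) K), IsHomog I →
    (∃ f : Fin n → MvPolynomial (Fin n) K,
      IsRegSeq f ∧ (∀ i, (f i).IsHomogeneous (a i)) ∧ ∀ i, f i ∈ I) →
    ∃ J : Ideal (MvPolynomial (Fin n) K), IsHomog J ∧
      (∀ i : Fin n, (X i : MvPolynomial (Fin n) K) ^ a i ∈ J) ∧
      hilb I d = hilb J d ∧ hilb I (d + 1) = hilb J (d + 1)


section ReesPart
open CategoryTheory Abelian RingTheory.Sequence

theorem egh_smul_ext_zero {R : Type} [CommRing R] {N M : ModuleCat.{0} R} {r : R}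
    (hr : ∀ x : N, r • x = 0) (i : ℕ) (e : Ext N M i) : r • e = 0 := by
  have h : r • 𝟙 N = 0 := by
    ext x
    exact hr x
  have smul_eq : r • e = (Ext.mk₀ (r • 𝟙 N)).comp e (zero_add i) := by simp [Ext.mk₀_smul]
  rw [smul_eq, h]
  simp

theorem egh_rees {R : Type} [CommRing R] (N : ModuleCat.{0} R) (rs : List R)
    (hN : ∀ r ∈ rs, ∀ x : N, r • x = 0) (M : ModuleCat.{0} R)
    (hreg : IsWeaklyRegular M rs) :
    (∀ i < rs.length, Subsingleton (Ext N M i)) ∧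
    Nonempty (Ext N M rs.length ≃ₗ[R]
      (N →ₗ[R] (M ⧸ (Ideal.ofList rs • ⊤ : Submodule R M)))) := by
  induction rs generalizing M with
  | nil =>
    refine ⟨by simp, ⟨?_⟩⟩
    have e1 : Ext N M 0 ≃ₗ[R] (N ⟶ M) := Ext.linearEquiv₀
    have e2 : (N ⟶ M) ≃ₗ[R] (N →ₗ[R] M) := ModuleCat.homLinearEquiv
    have e3 : M ≃ₗ[R] (M ⧸ (Ideal.ofList ([] : List R) • ⊤ : Submodule R M)) :=
      (Submodule.quotEquivOfEqBot _ (by simp)).symm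
    have e4 : (N →ₗ[R] M) ≃ₗ[R]
        (N →ₗ[R] (M ⧸ (Ideal.ofList ([] : List R) • ⊤ : Submodule R M))) :=
      LinearEquiv.congrRight e3
    exact e1.trans (e2.trans e4)
  | cons r rs ih =>
    rw [isWeaklyRegular_cons_iff] at hreg
    obtain ⟨hr, hrs⟩ := hreg
    have hN' : ∀ r ∈ rs, ∀ x : N, r • x = 0 := fun q hq => hN q (by simp [hq])
    have hrN : ∀ x : N, r • x = 0 := hN r (by simp)
    obtain ⟨h1, ⟨e⟩⟩ := ih hN' (ModuleCat.of R (QuotSMulTop r M)) hrs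
    have hS := hr.smulShortComplex_shortExact (M := M)
    have hsurj : ∀ i (x : Ext N M (i+1)), ∃ y : Ext N (ModuleCat.of R (QuotSMulTop r M)) i,
        y.comp hS.extClass rfl = x := by
      intro i x
      apply Ext.covariant_sequence_exact₁ N hS x _ rfl
      have := egh_smul_ext_zero hrN _ x
      exact (Ext.smul_eq_comp_mk₀ x r).symm.trans this
    have hvan : ∀ i < (r :: rs).length, Subsingleton (Ext N M i) := by
      intro i hi
      match i with
      | 0 =>
        have : Subsingleton (N →ₗ[R] M) := by
          refine ⟨fun f g => ?_⟩
          ext x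
          apply hr
          simp only [← map_smul, hrN, map_zero]
        exact (Ext.addEquiv₀.trans ModuleCat.homAddEquiv).subsingleton
      | i + 1 =>
        have := h1 i (by simpa using hi)
        refine ⟨fun x y => ?_⟩
        obtain ⟨x', rfl⟩ := hsurj i x
        obtain ⟨y', rfl⟩ := hsurj i y
        rw [Subsingleton.elim x' y']
    refine ⟨hvan, ⟨?_⟩⟩
    let φ : Ext N (ModuleCat.of R (QuotSMulTop r M)) rs.length →ₗ[R] Ext N M (rs.length + 1) :=
      Ext.postcompOfLinear (hS.extClass) R N rfl
    have hφ : Function.Bijective φ := by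
      constructor
      · rw [injective_iff_map_eq_zero]
        intro x hx
        obtain ⟨y, rfl⟩ := Ext.covariant_sequence_exact₃ N hS x rfl hx
        have := hvan rs.length (by simp)
        have hy : y = 0 := Subsingleton.elim (α := Ext N M rs.length) y 0
        rw [hy]; exact Ext.zero_comp _ _ _ _ _
      · intro x
        exact hsurj _ x
    have e5 : (QuotSMulTop r M ⧸ (Ideal.ofList rs • ⊤ : Submodule R (QuotSMulTop r M))) ≃ₗ[R]
        (M ⧸ (Ideal.ofList (r :: rs) • ⊤ : Submodule R M)) :=
      (Submodule.quotOfListConsSMulTopEquivQuotSMulTopInner M r rs).symm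
    have e6 : (N →ₗ[R] (QuotSMulTop r M ⧸ (Ideal.ofList rs • ⊤ : Submodule R (QuotSMulTop r M))))
        ≃ₗ[R] (N →ₗ[R] (M ⧸ (Ideal.ofList (r :: rs) • ⊤ : Submodule R M))) :=
      LinearEquiv.congrRight e5
    exact (LinearEquiv.ofBijective φ hφ).symm.trans (e.trans e6)

/-- If two weakly regular sequences of the same length, both contained in `m`, and the second
generates the maximal ideal `m`, then the socle of `R/(rs)` is cyclic over each nonzero element. -/
theorem egh_socle {R : Type} [CommRing R] (m : Ideal R) [m.IsMaximal] (rs xs : List R)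
    (hlen : rs.length = xs.length) (hrs : ∀ r ∈ rs, r ∈ m) (hx : Ideal.ofList xs = m)
    (h1 : IsWeaklyRegular R rs) (h2 : IsWeaklyRegular R xs)
    (u v : R) (hu : u ∉ Ideal.ofList rs) (hum : ∀ y ∈ m, y * u ∈ Ideal.ofList rs)
    (hvm : ∀ y ∈ m, y * v ∈ Ideal.ofList rs) : ∃ c : R, v - c * u ∈ Ideal.ofList rs := by
  have hann : ∀ r ∈ m, ∀ x : R ⧸ m, r • x = 0 := by
    intro r hr x
    obtain ⟨x, rfl⟩ := Ideal.Quotient.mk_surjective x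
    rw [← Ideal.Quotient.mk_eq_mk, ← Submodule.Quotient.mk_smul, Submodule.Quotient.mk_eq_zero]
    exact m.mul_mem_right x hr
  obtain ⟨-, ⟨e1⟩⟩ := egh_rees (ModuleCat.of R (R ⧸ m)) rs (fun r hr => hann r (hrs r hr))
    (ModuleCat.of R R) h1
  obtain ⟨-, ⟨e2⟩⟩ := egh_rees (ModuleCat.of R (R ⧸ m)) xs
    (fun r hr => hann r (by rw [← hx]; exact Ideal.subset_span hr)) (ModuleCat.of R R) h2
  rw [← hlen] at e2
  have e := e1.symm.trans e2
  have key : ∀ F : Ideal R, (F • ⊤ : Submodule R R) = F := fun F => by simp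
  have rank : ∀ φ ψ : (R ⧸ m) →ₗ[R] (R ⧸ (Ideal.ofList xs • ⊤ : Submodule R R)), φ ≠ 0 →
      ∃ c : R, ψ = c • φ := by
    rw [key, hx]
    intro φ ψ hφ
    have h0 : φ (Ideal.Quotient.mk m 1) ≠ 0 := by
      intro h
      apply hφ
      ext
      simpa using h
    obtain ⟨p, hp⟩ := Ideal.Quotient.mk_surjective (φ (Ideal.Quotient.mk m 1))
    obtain ⟨q, hq⟩ := Ideal.Quotient.mk_surjective (ψ (Ideal.Quotient.mk m 1))
    let _ := Ideal.Quotient.field m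
    obtain ⟨c, hc⟩ := Ideal.Quotient.mk_surjective
      (Ideal.Quotient.mk m q / Ideal.Quotient.mk m p)
    refine ⟨c, ?_⟩
    rw [← hp] at h0
    have : ψ (Ideal.Quotient.mk m 1) = c • φ (Ideal.Quotient.mk m 1) := by
      rw [← hp, ← hq, Algebra.smul_def, Ideal.Quotient.algebraMap_eq, hc]
      field_simp
    ext
    simpa using this
  have mkhom : ∀ w : R, (∀ y ∈ m, y * w ∈ Ideal.ofList rs) →
      ∃ φ : (R ⧸ m) →ₗ[R] (R ⧸ (Ideal.ofList rs • ⊤ : Submodule R R)),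
        φ (Submodule.Quotient.mk 1) = Submodule.Quotient.mk w := by
    intro w hw
    rw [key]
    refine ⟨Submodule.liftQ m ((Submodule.mkQ (Ideal.ofList rs)).comp
      (LinearMap.mulRight R w)) ?_, ?_⟩
    · intro y hy
      rw [LinearMap.mem_ker]
      exact (Submodule.Quotient.mk_eq_zero _).2 (hw y hy)
    · refine (Submodule.liftQ_apply _ _ _).trans ?_
      change Submodule.Quotient.mk (1 * w) = _
      rw [one_mul]
  obtain ⟨φ, hφ⟩ := mkhom u hum
  obtain ⟨ψ, hψ⟩ := mkhom v hvm
  have hφ0 : e φ ≠ 0 := by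
    intro h
    have h' : φ = 0 := by simpa using h
    rw [h'] at hφ
    apply hu
    rw [← key (Ideal.ofList rs), ← Submodule.Quotient.mk_eq_zero, ← hφ]
    rfl
  obtain ⟨c, hc⟩ := rank (e φ) (e ψ) hφ0
  refine ⟨c, ?_⟩
  rw [← map_smul] at hc
  have := e.injective hc
  rw [← key (Ideal.ofList rs), ← Submodule.Quotient.mk_eq_zero, Submodule.Quotient.mk_sub, ← hψ,
    this, ← smul_eq_mul, Submodule.Quotient.mk_smul, ← hφ]
  simp
end ReesPart

section HilbPart
attribute [local instance] MvPolynomial.gradedAlgebra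

theorem egh_comp_eq {K : Type} [Field K] {n : ℕ} (p : MvPolynomial (Fin n) K) (i : ℕ) :
    ((DirectSum.decompose (homogeneousSubmodule (Fin n) K) p i : homogeneousSubmodule (Fin n) K i) :
      MvPolynomial (Fin n) K) = homogeneousComponent i p :=
  decomposition.decompose'_apply p i

theorem egh_comp_mul_le {K : Type} [Field K] {n : ℕ} (f g : MvPolynomial (Fin n) K) {a d : ℕ}
    (hf : f.IsHomogeneous a) (h : a ≤ d) :
    homogeneousComponent d (f * g) = f * homogeneousComponent (d - a) g := by
  rw [← egh_comp_eq, ← egh_comp_eq]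
  exact DirectSum.coe_decompose_mul_of_left_mem_of_le (homogeneousSubmodule (Fin n) K) hf h

theorem egh_comp_mul_not_le {K : Type} [Field K] {n : ℕ} (f g : MvPolynomial (Fin n) K) {a d : ℕ}
    (hf : f.IsHomogeneous a) (h : ¬ a ≤ d) :
    homogeneousComponent d (f * g) = 0 := by
  rw [← egh_comp_eq]
  exact DirectSum.coe_decompose_mul_of_left_mem_of_not_le (homogeneousSubmodule (Fin n) K) hf h

theorem egh_homog_span {K : Type} [Field K] {n : ℕ} (T : Set (MvPolynomial (Fin n) K))
    (hT : ∀ p ∈ T, ∃ a, p.IsHomogeneous a) : IsHomog (Ideal.span T) := by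
  intro f hf d
  exact homogeneousComponent_mem_of_mem
    (Ideal.homogeneous_span (homogeneousSubmodule (Fin n) K) T hT) hf d

end HilbPart

instance egh_fin {K : Type} [Field K] {n : ℕ} (d : ℕ) :
    FiniteDimensional K (homogeneousSubmodule (Fin n) K d) :=
  Module.Finite.iff_fg.mpr (homogeneousSubmodule_fg (Fin n) K d)

/-- Membership of an element in a homogeneous ideal from its components. -/
theorem egh_mem_of_comp {K : Type} [Field K] {n : ℕ} (I : Ideal (MvPolynomial (Fin n) K))
    (p : MvPolynomial (Fin n) K) (h : ∀ d, homogeneousComponent d p ∈ I) : p ∈ I := by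
  rw [← sum_homogeneousComponent p]
  exact I.sum_mem fun i _ => h i

/-- The degree `d` piece of an ideal. -/
noncomputable def eghPiece {K : Type} [Field K] {n : ℕ} (I : Ideal (MvPolynomial (Fin n) K))
    (d : ℕ) : Submodule K (MvPolynomial (Fin n) K) :=
  Submodule.restrictScalars K I ⊓ homogeneousSubmodule (Fin n) K d

theorem egh_mem_piece {K : Type} [Field K] {n : ℕ} {I : Ideal (MvPolynomial (Fin n) K)}
    {d : ℕ} {p : MvPolynomial (Fin n) K} : p ∈ eghPiece I d ↔ p ∈ I ∧ p.IsHomogeneous d :=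
  Iff.rfl

instance egh_fin_piece {K : Type} [Field K] {n : ℕ} (I : Ideal (MvPolynomial (Fin n) K)) (d : ℕ) :
    FiniteDimensional K (eghPiece I d) :=
  Submodule.finiteDimensional_of_le (S₂ := homogeneousSubmodule (Fin n) K d) inf_le_right

/-- Hilbert function of a hypersurface section. -/
theorem egh_hilb_step {K : Type} [Field K] {n : ℕ} (F : Ideal (MvPolynomial (Fin n) K))
    (hF : IsHomog F) (f : MvPolynomial (Fin n) K) (a : ℕ) (hf : f.IsHomogeneous a) (hf0 : f ≠ 0)
    (hreg : ∀ g, f * g ∈ F → g ∈ F) (d : ℕ) :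
    (a ≤ d → hilb (F ⊔ Ideal.span {f}) d + hilb F (d - a) =
      hilb F d + Module.finrank K (homogeneousSubmodule (Fin n) K (d - a))) ∧
    (¬ a ≤ d → hilb (F ⊔ Ideal.span {f}) d = hilb F d) := by
  have hdec : ∀ p ∈ F ⊔ Ideal.span {f}, ∃ q ∈ F, ∃ r, p = q + f * r := by
    intro p hp
    obtain ⟨q, hq, r, hr, rfl⟩ := Submodule.mem_sup.1 hp
    obtain ⟨r, rfl⟩ := Ideal.mem_span_singleton'.1 hr
    exact ⟨q, hq, r, by ring⟩
  have hle : F ≤ F ⊔ Ideal.span {f} := le_sup_left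
  have hfm : f ∈ F ⊔ Ideal.span {f} :=
    (le_sup_right : Ideal.span {f} ≤ F ⊔ Ideal.span {f}) (Ideal.mem_span_singleton_self f)
  constructor
  · intro had
    let μ : MvPolynomial (Fin n) K →ₗ[K] MvPolynomial (Fin n) K := LinearMap.mulLeft K f
    have hμ : Function.Injective μ := fun x y hxy => mul_left_cancel₀ hf0 hxy
    have e1 : eghPiece (F ⊔ Ideal.span {f}) d =
        eghPiece F d ⊔ (homogeneousSubmodule (Fin n) K (d - a)).map μ := by
      apply le_antisymm
      · intro p hp
        obtain ⟨q, hq, r, h⟩ := hdec p hp.1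
        have : p = homogeneousComponent d q + f * homogeneousComponent (d - a) r := by
          rw [← egh_comp_mul_le f r hf had, ← map_add, ← h, homogeneousComponent_eq_self hp.2]
        rw [this]
        exact Submodule.add_mem_sup ⟨hF q hq d, homogeneousComponent_isHomogeneous d q⟩
          ⟨_, homogeneousComponent_isHomogeneous (d - a) r, rfl⟩
      · apply sup_le
        · intro p hp
          exact ⟨hle hp.1, hp.2⟩
        · rintro _ ⟨r, hr, rfl⟩
          refine ⟨Ideal.mul_mem_right r _ hfm, ?_⟩
          have := hf.mul hr
          rwa [Nat.add_sub_cancel' had] at this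
    have e2 : eghPiece F d ⊓ (homogeneousSubmodule (Fin n) K (d - a)).map μ =
        (eghPiece F (d - a)).map μ := by
      apply le_antisymm
      · rintro _ ⟨hp, r, hr, rfl⟩
        exact ⟨r, ⟨hreg r hp.1, hr⟩, rfl⟩
      · rintro _ ⟨r, hr, rfl⟩
        refine ⟨⟨Ideal.mul_mem_left _ f hr.1, ?_⟩, r, hr.2, rfl⟩
        have := hf.mul hr.2
        rwa [Nat.add_sub_cancel' had] at this
    have e3 := Submodule.finrank_sup_add_finrank_inf_eq (eghPiece F d)
      ((homogeneousSubmodule (Fin n) K (d - a)).map μ)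
    rw [← e1, e2, ← (Submodule.equivMapOfInjective μ hμ _).finrank_eq,
      ← (Submodule.equivMapOfInjective μ hμ _).finrank_eq] at e3
    exact e3
  · intro had
    have e1 : eghPiece (F ⊔ Ideal.span {f}) d = eghPiece F d := by
      apply le_antisymm
      · intro p hp
        obtain ⟨q, hq, r, h⟩ := hdec p hp.1
        have : p = homogeneousComponent d q := by
          rw [← add_zero (homogeneousComponent d q), ← egh_comp_mul_not_le f r hf had, ← map_add,
            ← h, homogeneousComponent_eq_self hp.2]
        rw [this]
        exact ⟨hF q hq d, homogeneousComponent_isHomogeneous d q⟩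
      · intro p hp
        exact ⟨hle hp.1, hp.2⟩
    unfold hilb
    exact congrArg (fun V : Submodule K (MvPolynomial (Fin n) K) => Module.finrank K V) e1

/-- Ideals generated by initial segments of a sequence. -/
noncomputable def eghChain {K : Type} [Field K] {n r : ℕ} (f : Fin r → MvPolynomial (Fin n) K)
    (i : ℕ) : Ideal (MvPolynomial (Fin n) K) :=
  Ideal.span (f '' {j : Fin r | (j : ℕ) < i})

theorem egh_chain_succ {K : Type} [Field K] {n r : ℕ} (f : Fin r → MvPolynomial (Fin n) K)
    (i : Fin r) : eghChain f (i + 1) = eghChain f i ⊔ Ideal.span {f i} := by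
  unfold eghChain
  rw [← Ideal.span_union]
  congr 1
  have : {j : Fin r | (j : ℕ) < i + 1} = {j : Fin r | (j : ℕ) < i} ∪ {i} := by
    ext j
    simp only [Set.mem_ofPred_eq, Set.mem_union, Set.mem_singleton_iff, Fin.ext_iff]
    omega
  rw [this, Set.image_union, Set.image_singleton]

theorem egh_chain_full {K : Type} [Field K] {n r : ℕ} (f : Fin r → MvPolynomial (Fin n) K) :
    eghChain f r = Ideal.span (Set.range f) := by
  unfold eghChain
  congr 1
  ext p
  simp

theorem egh_chain_homog {K : Type} [Field K] {n r : ℕ} (f : Fin r → MvPolynomial (Fin n) K)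
    (a : Fin r → ℕ) (hf : ∀ i, (f i).IsHomogeneous (a i)) (i : ℕ) : IsHomog (eghChain f i) := by
  apply egh_homog_span
  rintro _ ⟨j, -, rfl⟩
  exact ⟨a j, hf j⟩

theorem egh_regseq_ne_zero {K : Type} [Field K] {n r : ℕ} (f : Fin r → MvPolynomial (Fin n) K)
    (h : IsRegSeq f) (i : Fin r) : f i ≠ 0 := by
  intro h0
  apply h.1
  rw [Ideal.eq_top_iff_one]
  have := h.2 i 1 (by rw [h0]; simp)
  exact Ideal.span_mono (Set.image_subset_range _ _) this

/-- The Hilbert function of a complete intersection depends only on the degrees. -/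
theorem egh_hilb_ci {K : Type} [Field K] {n r : ℕ} (f g : Fin r → MvPolynomial (Fin n) K)
    (a : Fin r → ℕ) (hf : ∀ i, (f i).IsHomogeneous (a i)) (hg : ∀ i, (g i).IsHomogeneous (a i))
    (hfr : IsRegSeq f) (hgr : IsRegSeq g) (d : ℕ) :
    hilb (Ideal.span (Set.range f)) d = hilb (Ideal.span (Set.range g)) d := by
  rw [← egh_chain_full, ← egh_chain_full]
  suffices H : ∀ i ≤ r, ∀ d, hilb (eghChain f i) d = hilb (eghChain g i) d from H r le_rfl d
  intro i
  induction i with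
  | zero => intro _ d; simp [eghChain]
  | succ i ih =>
    intro hi d
    have hi' := ih (by omega)
    have h1 := egh_hilb_step (eghChain f i) (egh_chain_homog f a hf i) (f ⟨i, hi⟩) (a ⟨i, hi⟩)
      (hf _) (egh_regseq_ne_zero f hfr _) (hfr.2 ⟨i, hi⟩) d
    have h2 := egh_hilb_step (eghChain g i) (egh_chain_homog g a hg i) (g ⟨i, hi⟩) (a ⟨i, hi⟩)
      (hg _) (egh_regseq_ne_zero g hgr _) (hgr.2 ⟨i, hi⟩) d
    have c1 := egh_chain_succ f ⟨i, hi⟩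
    have c2 := egh_chain_succ g ⟨i, hi⟩
    simp only at c1 c2
    rw [c1, c2]
    by_cases had : a ⟨i, hi⟩ ≤ d
    · have h1 := h1.1 had
      have h2 := h2.1 had
      rw [hi', hi'] at h1
      omega
    · rw [h1.2 had, h2.2 had, hi']

theorem egh_powers_mem {K : Type} [Field K] {n : ℕ} (b : Fin n → ℕ) (T : Set (Fin n))
    (p : MvPolynomial (Fin n) K) :
    p ∈ Ideal.span ((fun i => (X i : MvPolynomial (Fin n) K) ^ b i) '' T) ↔
      ∀ m ∈ p.support, ∃ i ∈ T, b i ≤ m i := by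
  have : (fun i => (X i : MvPolynomial (Fin n) K) ^ b i) '' T =
      (fun s => monomial s (1 : K)) '' ((fun i => Finsupp.single i (b i)) '' T) := by
    rw [Set.image_image]
    apply Set.image_congr
    intro i _
    rw [X_pow_eq_monomial]
  rw [this, mem_ideal_span_monomial_image]
  simp

theorem egh_powers_regseq {K : Type} [Field K] {n : ℕ} (b : Fin n → ℕ) (hb : ∀ i, 1 ≤ b i) :
    IsRegSeq (fun i => (X i : MvPolynomial (Fin n) K) ^ b i) := by
  constructor
  · rw [Ne, Ideal.eq_top_iff_one, ← Set.image_univ, egh_powers_mem]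
    push Not
    refine ⟨0, by simp, fun i _ => ?_⟩
    have := hb i
    simp only [Finsupp.coe_zero, Pi.zero_apply]
    omega
  · intro i g hg
    rw [egh_powers_mem] at hg ⊢
    intro m hm
    have : m + Finsupp.single i (b i) ∈ ((X i : MvPolynomial (Fin n) K) ^ b i * g).support := by
      rw [X_pow_eq_monomial, mem_support_iff, add_comm, coeff_monomial_mul, one_mul]
      exact mem_support_iff.1 hm
    obtain ⟨j, hj, hle⟩ := hg _ this
    refine ⟨j, hj, ?_⟩
    have hji : i ≠ j := (ne_of_lt hj).symm
    simpa [Finsupp.single_eq_of_ne hji.symm] using hle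

theorem egh_regseq_weakly {K : Type} [Field K] {n r : ℕ} (f : Fin r → MvPolynomial (Fin n) K)
    (h : IsRegSeq f) :
    RingTheory.Sequence.IsWeaklyRegular (MvPolynomial (Fin n) K) (List.ofFn f) := by
  constructor
  intro i hi
  have hi' : i < r := by simpa using hi
  have e : (Ideal.ofList ((List.ofFn f).take i) • ⊤ :
      Submodule (MvPolynomial (Fin n) K) (MvPolynomial (Fin n) K)) =
      Ideal.span (f '' {j : Fin r | j < ⟨i, hi'⟩}) := by
    rw [smul_eq_mul, Ideal.mul_top]
    unfold Ideal.ofList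
    congr 1
    ext p
    simp only [Set.mem_ofPred_eq, List.mem_take_iff_getElem, Set.mem_image]
    constructor
    · rintro ⟨j, hj, rfl⟩
      have hj' : j < i ∧ j < r := by simpa using hj
      exact ⟨⟨j, hj'.2⟩, hj'.1, by simp⟩
    · rintro ⟨j, hj, rfl⟩
      exact ⟨j, by simpa using Fin.lt_def.1 hj, by simp⟩
  rw [e, isSMulRegular_iff_right_eq_zero_of_smul]
  intro x hx
  obtain ⟨x, rfl⟩ := Submodule.Quotient.mk_surjective _ x
  rw [← Submodule.Quotient.mk_smul, Submodule.Quotient.mk_eq_zero] at hx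
  rw [Submodule.Quotient.mk_eq_zero]
  apply h.2 ⟨i, hi'⟩ x
  simpa using hx

theorem egh_ofList_ofFn {K : Type} [Field K] {n r : ℕ} (f : Fin r → MvPolynomial (Fin n) K) :
    Ideal.ofList (List.ofFn f) = Ideal.span (Set.range f) := by
  unfold Ideal.ofList
  congr 1
  ext p
  simp

theorem egh_vars_eq {K : Type} [Field K] {n : ℕ} :
    Ideal.span (Set.range fun i => (X i : MvPolynomial (Fin n) K) ^ 1) =
      RingHom.ker (constantCoeff : MvPolynomial (Fin n) K →+* K) := by
  ext p
  rw [← Set.image_univ, egh_powers_mem (fun _ => 1), RingHom.mem_ker, constantCoeff_eq]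
  constructor
  · intro h
    by_contra h0
    obtain ⟨i, -, hi⟩ := h 0 (mem_support_iff.2 h0)
    simp at hi
  · intro h m hm
    by_contra! hc
    have : m = 0 := by
      ext i
      have := hc i trivial
      simpa using this
    rw [this] at hm
    exact mem_support_iff.1 hm h

section CI
variable {K : Type} [Field K] {n : ℕ} {a : Fin n → ℕ} {s : ℕ}
  {f : Fin n → MvPolynomial (Fin n) K}

theorem egh_piece_eq_iff (I : Ideal (MvPolynomial (Fin n) K)) (t : ℕ) :
    hilb I t = Module.finrank K (homogeneousSubmodule (Fin n) K t) ↔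
      ∀ p : MvPolynomial (Fin n) K, p.IsHomogeneous t → p ∈ I := by
  constructor
  · intro h p hp
    have hle : eghPiece I t ≤ homogeneousSubmodule (Fin n) K t := inf_le_right
    have := Submodule.eq_of_le_of_finrank_eq hle h
    have hp' : p ∈ eghPiece I t := by rw [this]; exact hp
    exact hp'.1
  · intro h
    have : eghPiece I t = homogeneousSubmodule (Fin n) K t :=
      le_antisymm inf_le_right fun p hp => ⟨h p hp, hp⟩
    unfold hilb
    exact congrArg (fun V : Submodule K (MvPolynomial (Fin n) K) => Module.finrank K V) this

theorem egh_powers_homog (i : Fin n) :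
    ((fun i => (X i : MvPolynomial (Fin n) K) ^ a i) i).IsHomogeneous (a i) :=
  isHomogeneous_X_pow i (a i)

theorem egh_ci_high (ha : ∀ i, 2 ≤ a i) (hs : s = ∑ i, (a i - 1))
    (hf : ∀ i, (f i).IsHomogeneous (a i)) (hfr : IsRegSeq f) (t : ℕ) (ht : s < t)
    (p : MvPolynomial (Fin n) K) (hp : p.IsHomogeneous t) : p ∈ Ideal.span (Set.range f) := by
  revert p
  rw [← egh_piece_eq_iff, egh_hilb_ci f _ a hf egh_powers_homog hfr
    (egh_powers_regseq a fun i => le_trans (by norm_num) (ha i)), egh_piece_eq_iff]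
  intro p hp
  rw [← Set.image_univ, egh_powers_mem]
  intro m hm
  have hdeg : m.degree = t := by
    by_contra hne
    exact mem_support_iff.1 hm (hp.coeff_eq_zero hne)
  by_contra! hc
  have : ∑ i, m i ≤ ∑ i, (a i - 1) := Finset.sum_le_sum fun i _ => by
    have := hc i trivial
    omega
  rw [Finsupp.degree_eq_sum] at hdeg
  omega

theorem egh_ci_top (ha : ∀ i, 2 ≤ a i) (hs : s = ∑ i, (a i - 1))
    (hf : ∀ i, (f i).IsHomogeneous (a i)) (hfr : IsRegSeq f) :
    ∃ u : MvPolynomial (Fin n) K, u.IsHomogeneous s ∧ u ∉ Ideal.span (Set.range f) := by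
  by_contra! hc
  rw [← egh_piece_eq_iff, egh_hilb_ci f _ a hf egh_powers_homog hfr
    (egh_powers_regseq a fun i => le_trans (by norm_num) (ha i)), egh_piece_eq_iff] at hc
  let m : Fin n →₀ ℕ := Finsupp.equivFunOnFinite.symm fun i => a i - 1
  have h1 := hc (monomial m 1) (isHomogeneous_monomial 1 (by
    rw [Finsupp.degree_eq_sum, hs]; rfl))
  rw [← Set.image_univ, egh_powers_mem] at h1
  obtain ⟨i, -, hi⟩ := h1 m (by simp)
  have h2 : m i = a i - 1 := rfl
  have := ha i
  omega

theorem egh_ci_socle (ha : ∀ i, 2 ≤ a i) 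
    (hf : ∀ i, (f i).IsHomogeneous (a i)) (hfr : IsRegSeq f) (u v : MvPolynomial (Fin n) K)
    (hu : u ∉ Ideal.span (Set.range f)) (hum : ∀ i, X i * u ∈ Ideal.span (Set.range f))
    (hvm : ∀ i, X i * v ∈ Ideal.span (Set.range f)) :
    ∃ c, v - c * u ∈ Ideal.span (Set.range f) := by
  have hmax : (RingHom.ker (constantCoeff : MvPolynomial (Fin n) K →+* K)).IsMaximal :=
    RingHom.ker_isMaximal_of_surjective _ fun c => ⟨C c, by simp⟩
  have hx1 : IsRegSeq (fun i : Fin n => (X i : MvPolynomial (Fin n) K) ^ 1) :=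
    egh_powers_regseq (fun _ => 1) fun _ => le_rfl
  have hcol : ∀ w : MvPolynomial (Fin n) K, (∀ i, X i * w ∈ Ideal.span (Set.range f)) →
      ∀ y ∈ RingHom.ker (constantCoeff : MvPolynomial (Fin n) K →+* K),
        y * w ∈ Ideal.span (Set.range f) := by
    intro w hw y hy
    rw [← egh_vars_eq] at hy
    have : Ideal.span (Set.range fun i => (X i : MvPolynomial (Fin n) K) ^ 1) ≤
        Submodule.colon (Ideal.span (Set.range f)) {w} := by
      rw [Ideal.span_le]
      rintro _ ⟨i, rfl⟩
      rw [SetLike.mem_coe, Submodule.mem_colon_singleton]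
      simpa using hw i
    exact Submodule.mem_colon_singleton.1 (this hy)
  have := egh_socle (RingHom.ker (constantCoeff : MvPolynomial (Fin n) K →+* K))
    (List.ofFn f) (List.ofFn fun i : Fin n => (X i : MvPolynomial (Fin n) K) ^ 1) (by simp)
    (by
      intro r hr
      obtain ⟨i, rfl⟩ := List.mem_ofFn.1 hr
      rw [RingHom.mem_ker, constantCoeff_eq]
      apply (hf i).coeff_eq_zero
      have := ha i
      simp only [map_zero]
      omega)
    (by rw [egh_ofList_ofFn, egh_vars_eq]) (egh_regseq_weakly _ hfr) (egh_regseq_weakly _ hx1) u v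
  rw [egh_ofList_ofFn] at this
  exact this hu (hcol u hum) (hcol v hvm)

theorem egh_ci_homog (hf : ∀ i, (f i).IsHomogeneous (a i)) :
    IsHomog (Ideal.span (Set.range f)) := by
  apply egh_homog_span
  rintro _ ⟨j, rfl⟩
  exact ⟨a j, hf j⟩

theorem egh_X_mul_homog {t : ℕ} {p : MvPolynomial (Fin n) K} (hp : p.IsHomogeneous t) (i : Fin n) :
    (X i * p).IsHomogeneous (t + 1) := by
  have := (isHomogeneous_X K i).mul hp
  rwa [add_comm] at this

theorem egh_ci_low (ha : ∀ i, 2 ≤ a i) (hs : s = ∑ i, (a i - 1))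
    (hf : ∀ i, (f i).IsHomogeneous (a i)) (hfr : IsRegSeq f) (t : ℕ) (ht : t < s)
    (p : MvPolynomial (Fin n) K) (hp : p.IsHomogeneous t)
    (h : ∀ i, X i * p ∈ Ideal.span (Set.range f)) : p ∈ Ideal.span (Set.range f) := by
  obtain ⟨u, hus, hu⟩ := egh_ci_top ha hs hf hfr
  obtain ⟨c, hc⟩ := egh_ci_socle ha hf hfr u p hu
    (fun i => egh_ci_high ha hs hf hfr (s + 1) (by omega) _ (egh_X_mul_homog hus i)) h
  have := egh_ci_homog hf _ hc t
  rwa [map_sub, mul_comm c u, egh_comp_mul_not_le u c hus (by omega), sub_zero,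
    homogeneousComponent_eq_self hp] at this

theorem egh_ci_one (ha : ∀ i, 2 ≤ a i) (hs : s = ∑ i, (a i - 1))
    (hf : ∀ i, (f i).IsHomogeneous (a i)) (hfr : IsRegSeq f)
    (u w : MvPolynomial (Fin n) K) (hus : u.IsHomogeneous s) (hws : w.IsHomogeneous s)
    (hu : u ∉ Ideal.span (Set.range f)) : ∃ c : K, w - c • u ∈ Ideal.span (Set.range f) := by
  obtain ⟨c, hc⟩ := egh_ci_socle ha hf hfr u w hu
    (fun i => egh_ci_high ha hs hf hfr (s + 1) (by omega) _ (egh_X_mul_homog hus i))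
    (fun i => egh_ci_high ha hs hf hfr (s + 1) (by omega) _ (egh_X_mul_homog hws i))
  have := egh_ci_homog hf _ hc s
  refine ⟨coeff 0 c, ?_⟩
  rwa [map_sub, mul_comm c u, egh_comp_mul_le u c hus le_rfl, Nat.sub_self,
    homogeneousComponent_eq_self hws, homogeneousComponent_zero, mul_comm, ← smul_eq_C_mul] at this

theorem egh_ci_nondeg (ha : ∀ i, 2 ≤ a i) (hs : s = ∑ i, (a i - 1))
    (hf : ∀ i, (f i).IsHomogeneous (a i)) (hfr : IsRegSeq f) (k : ℕ) :
    ∀ t, t + k = s → ∀ p : MvPolynomial (Fin n) K, p.IsHomogeneous t →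
      (∀ q : MvPolynomial (Fin n) K, q.IsHomogeneous k → q * p ∈ Ideal.span (Set.range f)) →
      p ∈ Ideal.span (Set.range f) := by
  induction k with
  | zero =>
    intro t _ p _ h
    simpa using h 1 (isHomogeneous_one _ _)
  | succ k ih =>
    intro t ht p hp h
    apply egh_ci_low ha hs hf hfr t (by omega) p hp
    intro i
    apply ih (t + 1) (by omega) _ (egh_X_mul_homog hp i)
    intro q hq
    have := h (X i * q) (egh_X_mul_homog hq i)
    convert this using 1
    ring

theorem egh_colon_homog (F I : Ideal (MvPolynomial (Fin n) K)) (hF : IsHomog F) (hI : IsHomog I) :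
    IsHomog (Submodule.colon F (I : Set (MvPolynomial (Fin n) K))) := by
  intro q hq d
  rw [Submodule.mem_colon] at hq ⊢
  intro p hp
  rw [smul_eq_mul, mul_comm]
  rw [← sum_homogeneousComponent p, Finset.sum_mul]
  refine F.sum_mem fun k _ => ?_
  have h1 := hF _ (hq _ (hI p hp k)) (k + d)
  rw [smul_eq_mul, mul_comm, egh_comp_mul_le _ q (homogeneousComponent_isHomogeneous k p)
    (by omega), Nat.add_sub_cancel_left] at h1
  exact h1

/-- The liaison identity. -/
theorem egh_liaison (ha : ∀ i, 2 ≤ a i) (hs : s = ∑ i, (a i - 1))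
    (hf : ∀ i, (f i).IsHomogeneous (a i)) (hfr : IsRegSeq f)
    (I : Ideal (MvPolynomial (Fin n) K)) (hI : IsHomog I) (hfI : ∀ i, f i ∈ I)
    (t e : ℕ) (hte : t + e = s) :
    hilb I t + hilb (Submodule.colon (Ideal.span (Set.range f))
        (I : Set (MvPolynomial (Fin n) K))) e =
      hilb (Ideal.span (Set.range f)) t +
        Module.finrank K (homogeneousSubmodule (Fin n) K e) := by
  set F := Ideal.span (Set.range f) with hFdef
  have hFI : F ≤ I := Ideal.span_le.2 (by rintro _ ⟨i, rfl⟩; exact hfI i)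
  have hFh : IsHomog F := egh_ci_homog hf
  obtain ⟨u, hus, hu⟩ := egh_ci_top ha hs hf hfr
  obtain ⟨φ, hφu, hφF⟩ := Submodule.exists_le_ker_of_notMem
    (p := Submodule.restrictScalars K F) (v := u) hu
  have hφ : ∀ w : MvPolynomial (Fin n) K, w.IsHomogeneous s → (φ w = 0 ↔ w ∈ F) := by
    intro w hw
    refine ⟨fun h => ?_, fun h => hφF h⟩
    obtain ⟨c, hc⟩ := egh_ci_one ha hs hf hfr u w hus hw hu
    have h0 : φ (w - c • u) = 0 := hφF hc
    rw [map_sub, h, map_smul, zero_sub, neg_eq_zero, smul_eq_mul, mul_eq_zero] at h0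
    have hc0 : c = 0 := h0.resolve_right hφu
    simpa [hc0] using hc
  let V := homogeneousSubmodule (Fin n) K e
  let Φ : MvPolynomial (Fin n) K →ₗ[K] Module.Dual K V :=
    ((LinearMap.mul K (MvPolynomial (Fin n) K)).compr₂ φ).domRestrict₂ V
  have hΦ : ∀ p (q : V), Φ p q = φ (p * q) := fun p q => rfl
  let Φt := Φ.domRestrict (eghPiece I t)
  have h1 := LinearMap.finrank_range_add_finrank_ker Φt
  have h2 := Subspace.finrank_add_finrank_dualCoannihilator_eq (LinearMap.range Φt)
  have h3 : (LinearMap.ker Φt).map (eghPiece I t).subtype = eghPiece F t := by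
    ext p
    constructor
    · rintro ⟨⟨p, hp⟩, hk, rfl⟩
      refine ⟨?_, hp.2⟩
      apply egh_ci_nondeg ha hs hf hfr e t hte p hp.2
      intro q hq
      have h : Φ p ⟨q, hq⟩ = 0 := LinearMap.congr_fun (LinearMap.mem_ker.1 hk) ⟨q, hq⟩
      rw [hΦ, hφ] at h
      · rwa [mul_comm]
      · rw [← hte]; exact hp.2.mul hq
    · intro hp
      refine ⟨⟨p, hFI hp.1, hp.2⟩, ?_, rfl⟩
      rw [SetLike.mem_coe, LinearMap.mem_ker]
      ext q
      exact hφF (F.mul_mem_right _ hp.1)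
  have h4 : (LinearMap.range Φt).dualCoannihilator.map V.subtype =
      eghPiece (Submodule.colon F (I : Set (MvPolynomial (Fin n) K))) e := by
    ext q
    constructor
    · rintro ⟨⟨q, hq⟩, hk, rfl⟩
      refine ⟨?_, hq⟩
      have hk' : ∀ p ∈ eghPiece I t, q * p ∈ F := by
        intro p hp
        have h : Φ p ⟨q, hq⟩ = 0 :=
          (Submodule.mem_dualCoannihilator _).1 hk _ ⟨⟨p, hp⟩, rfl⟩
        rw [hΦ, hφ] at h
        · rwa [mul_comm]
        · rw [← hte]; exact hp.2.mul hq
      change q ∈ Submodule.colon F (I : Set (MvPolynomial (Fin n) K))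
      rw [Submodule.mem_colon]
      intro p hp
      rw [smul_eq_mul, ← sum_homogeneousComponent p, Finset.mul_sum]
      refine F.sum_mem fun k _ => ?_
      have hk1 := hI p hp k
      have hk2 := homogeneousComponent_isHomogeneous k p
      generalize homogeneousComponent k p = pk at hk1 hk2
      have hqp : (q * pk).IsHomogeneous (e + k) := IsHomogeneous.mul hq hk2
      by_cases hkt : k ≤ t
      · apply egh_ci_nondeg ha hs hf hfr (t - k) (e + k) (by omega) _ hqp
        intro r hr
        have := hk' (r * pk) ⟨I.mul_mem_left _ hk1, by
          have := hr.mul hk2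
          rwa [Nat.sub_add_cancel hkt] at this⟩
        convert this using 1
        ring
      · exact egh_ci_high ha hs hf hfr (e + k) (by omega) _ hqp
    · intro hq
      refine ⟨⟨q, hq.2⟩, ?_, rfl⟩
      rw [SetLike.mem_coe, Submodule.mem_dualCoannihilator]
      rintro _ ⟨⟨p, hp⟩, rfl⟩
      have h5 : q * p ∈ F := Submodule.mem_colon.1 hq.1 p hp.1
      have h6 : φ (p * q) = 0 := hφF (by rw [mul_comm]; exact h5)
      exact h6
  have h3' := Submodule.finrank_map_subtype_eq _ (LinearMap.ker Φt)
  have h4' := Submodule.finrank_map_subtype_eq _ (LinearMap.range Φt).dualCoannihilator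
  rw [h3] at h3'
  rw [h4] at h4'
  have h7 : hilb I t = Module.finrank K (eghPiece I t) := rfl
  have h8 : hilb (Submodule.colon F (I : Set (MvPolynomial (Fin n) K))) e =
    Module.finrank K (LinearMap.range Φt).dualCoannihilator := h4'
  have h9 : hilb F t = Module.finrank K (LinearMap.ker Φt) := h3'
  have h10 : Module.finrank K (homogeneousSubmodule (Fin n) K e) = Module.finrank K V := rfl
  rw [h7, h8, h9, h10]
  omega

theorem egh_symm (ha : ∀ i, 2 ≤ a i) (hs : s = ∑ i, (a i - 1))
    (hf : ∀ i, (f i).IsHomogeneous (a i)) (hfr : IsRegSeq f) (t e : ℕ) (hte : t + e = s) :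
    hilb (Ideal.span (Set.range f)) t + Module.finrank K (homogeneousSubmodule (Fin n) K e) =
      hilb (Ideal.span (Set.range f)) e +
        Module.finrank K (homogeneousSubmodule (Fin n) K t) := by
  have l := egh_liaison ha hs hf hfr ⊤ (fun _ _ _ => trivial) (fun _ => trivial) t e hte
  have h1 : hilb (⊤ : Ideal (MvPolynomial (Fin n) K)) t =
      Module.finrank K (homogeneousSubmodule (Fin n) K t) :=
    (egh_piece_eq_iff ⊤ t).2 fun _ _ => trivial
  have h2 : Submodule.colon (Ideal.span (Set.range f))
      ((⊤ : Ideal (MvPolynomial (Fin n) K)) : Set (MvPolynomial (Fin n) K)) =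
      Ideal.span (Set.range f) := by
    ext p
    rw [Submodule.mem_colon]
    refine ⟨fun h => ?_, fun h q _ => Ideal.mul_mem_right _ _ h⟩
    simpa using h 1 trivial
  rw [h1, h2] at l
  omega

theorem egh_half (ha : ∀ i, 2 ≤ a i) (hs : s = ∑ i, (a i - 1)) (d e : ℕ) (hde : d + e + 1 = s)
    (h : EGHd K n a d) : EGHd K n a e := by
  rintro I hI ⟨f, hfr, hf, hfI⟩
  have hcol : ∀ (J : Ideal (MvPolynomial (Fin n) K)) (g : Fin n → MvPolynomial (Fin n) K) (i),
      g i ∈ Submodule.colon (Ideal.span (Set.range g)) (J : Set (MvPolynomial (Fin n) K)) := by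
    intro J g i
    rw [Submodule.mem_colon]
    intro p _
    exact Ideal.mul_mem_right _ _ (Ideal.subset_span ⟨i, rfl⟩)
  obtain ⟨J', hJ', hXJ', h1, h2⟩ := h
    (Submodule.colon (Ideal.span (Set.range f)) (I : Set (MvPolynomial (Fin n) K)))
    (egh_colon_homog _ _ (egh_ci_homog hf) hI) ⟨f, hfr, hf, hcol I f⟩
  have hXr : IsRegSeq (fun i => (X i : MvPolynomial (Fin n) K) ^ a i) :=
    egh_powers_regseq a fun i => le_trans (by norm_num) (ha i)
  have hXh := egh_powers_homog (K := K) (a := a)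
  refine ⟨Submodule.colon (Ideal.span (Set.range fun i => (X i : MvPolynomial (Fin n) K) ^ a i))
    (J' : Set (MvPolynomial (Fin n) K)), egh_colon_homog _ _ (egh_ci_homog hXh) hJ',
    hcol J' (fun i => (X i : MvPolynomial (Fin n) K) ^ a i), ?_, ?_⟩
  · have l1 := egh_liaison ha hs hf hfr I hI hfI e (d + 1) (by omega)
    have l2 := egh_liaison ha hs hXh hXr J' hJ' hXJ' (d + 1) e (by omega)
    have l3 := egh_symm ha hs hXh hXr e (d + 1) (by omega)
    have l4 := egh_hilb_ci f _ a hf hXh hfr hXr e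
    omega
  · have l1 := egh_liaison ha hs hf hfr I hI hfI (e + 1) d (by omega)
    have l2 := egh_liaison ha hs hXh hXr J' hJ' hXJ' d (e + 1) (by omega)
    have l3 := egh_symm ha hs hXh hXr (e + 1) d (by omega)
    have l4 := egh_hilb_ci f _ a hf hXh hfr hXr (e + 1)
    omega

end CI

/-- with `s = Σ (a i − 1)`, `EGH_{a,n}(d)` holds iff `EGH_{a,n}(s−d−1)` holds. -/
theorem stmt9 {K : Type} [Field K] {n : ℕ} (a : Fin n → ℕ)
    (ha2 : ∀ i, 2 ≤ a i) (hmono : Monotone a)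
    (s : ℕ) (hs : s = ∑ i, (a i - 1)) (d : ℕ) (hd : d < s) :
    EGHd K n a d ↔ EGHd K n a (s - d - 1) := by
  exact ⟨egh_half ha2 hs d (s - d - 1) (by omega), egh_half ha2 hs (s - d - 1) d (by omega)⟩
end

section
/- Let a = (a_1,...,a_r) with 2 ≤ a_1 ≤ ... ≤ a_r. If every homogeneous ideal of k[x_1,...,x_r] containing a regular sequence of degrees a_1,...,a_r has the same Hilbert function as an ideal containing x_1^{a_1},...,x_r^{a_r} (i.e., EGH_{a,r} holds), then for every n ≥ r, every homogeneous ideal of k[x_1,...,x_n] containing a homogeneous regular sequence of degrees a_1,...,a_r has the same Hilbert function as an ideal of k[x_1,...,x_n] containing x_1^{a_1},...,x_r^{a_r}. -/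
open MvPolynomial

/-- `EGHnr K n r h a`: every homogeneous ideal of `K[x_1,...,x_n]` containing a homogeneous
regular sequence of length `r` and degrees `a 0, ..., a (r-1)` has the same Hilbert function
as some ideal containing the pure powers `x_i^{a i}` for `1 ≤ i ≤ r`. -/
def EGHnr (K : Type) [Field K] (n r : ℕ) (h : r ≤ n) (a : Fin r → ℕ) : Prop :=
  ∀ I : Ideal (MvPolynomial (Fin n) K), IsHomog I →
    (∃ f : Fin r → MvPolynomial (Fin n) K,
      IsRegSeq f ∧ (∀ i, (f i).IsHomogeneous (a i)) ∧ ∀ i, f i ∈ I) →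
    ∃ J : Ideal (MvPolynomial (Fin n) K),
      (∀ i : Fin r, (X (Fin.castLE h i) : MvPolynomial (Fin n) K) ^ a i ∈ J) ∧
      ∀ d : ℕ, hilb I d = hilb J d



namespace CLx

/-- Points of the box `l ≤ u ≤ h` with coordinate sum `d`. -/
def Box {n : ℕ} (l h : Fin n → ℕ) (d : ℕ) : Finset (Fin n → ℕ) :=
  (Finset.Icc l h).filter (fun u => ∑ i, u i = d)

open Classical in
/-- Upper shadow inside the box. -/
noncomputable def up {n : ℕ} (l h : Fin n → ℕ) (A : Finset (Fin n → ℕ)) : Finset (Fin n → ℕ) :=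
  (Finset.Icc l h).filter (fun y => ∃ u ∈ A, ∃ i, y = u + Pi.single i 1)

def IsSeg {n : ℕ} (l h : Fin n → ℕ) (d : ℕ) (S : Finset (Fin n → ℕ)) : Prop :=
  S ⊆ Box l h d ∧ ∀ v ∈ S, ∀ u ∈ Box l h d, toLex v ≤ toLex u → u ∈ S

theorem mem_Box {n : ℕ} {l h u : Fin n → ℕ} {d : ℕ} :
    u ∈ Box l h d ↔ (∀ i, l i ≤ u i) ∧ (∀ i, u i ≤ h i) ∧ ∑ i, u i = d := by
  simp only [Box, Finset.mem_filter, Finset.mem_Icc, Pi.le_def, and_assoc]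

theorem mem_up {n : ℕ} {l h y : Fin n → ℕ} {A : Finset (Fin n → ℕ)} :
    y ∈ up l h A ↔ (∀ i, l i ≤ y i) ∧ (∀ i, y i ≤ h i) ∧
      ∃ u ∈ A, ∃ i, y = u + Pi.single i 1 := by
  simp only [up, Finset.mem_filter, Finset.mem_Icc, Pi.le_def, and_assoc]

theorem sum_add_single {n : ℕ} (u : Fin n → ℕ) (i : Fin n) :
    ∑ j, (u + Pi.single i 1 : Fin n → ℕ) j = ∑ j, u j + 1 := by
  simp [Finset.sum_add_distrib]

theorem up_subset_Box {n : ℕ} {l h : Fin n → ℕ} {d : ℕ} {A : Finset (Fin n → ℕ)}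
    (hA : A ⊆ Box l h d) : up l h A ⊆ Box l h (d + 1) := by
  intro y hy
  obtain ⟨h1, h2, u, hu, i, rfl⟩ := mem_up.1 hy
  refine mem_Box.2 ⟨h1, h2, ?_⟩
  rw [sum_add_single, (mem_Box.1 (hA hu)).2.2]

theorem up_mono {n : ℕ} {l h : Fin n → ℕ} {A B : Finset (Fin n → ℕ)} (hAB : A ⊆ B) :
    up l h A ⊆ up l h B := by
  intro y hy
  obtain ⟨h1, h2, u, hu, i, rfl⟩ := mem_up.1 hy
  exact mem_up.2 ⟨h1, h2, u, hAB hu, i, rfl⟩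

theorem lex_lt_of {n : ℕ} {u w : Fin n → ℕ} (p : Fin n) (h1 : ∀ q < p, u q ≤ w q)
    (h2 : u p < w p) : toLex u < toLex w := by
  by_contra hc
  have hc' := not_lt.1 hc
  rcases hc'.lt_or_eq with hlt | heq
  · obtain ⟨q, hq1, hq2⟩ := hlt
    simp only [Pi.toLex_apply] at hq1 hq2
    change w q < u q at hq2
    rcases lt_trichotomy q p with h | h | h
    · have := h1 q h; omega
    · subst h; omega
    · have := hq1 p h; change w p = u p at this; omega
  · have : w = u := toLex_inj.1 heq
    subst this; omega

theorem lex_lt_iff {n : ℕ} {u w : Fin n → ℕ} :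
    toLex u < toLex w ↔ ∃ p, (∀ q < p, u q = w q) ∧ u p < w p := Iff.rfl

theorem eq_of_le_of_sum {n : ℕ} {u w : Fin n → ℕ} (h : ∀ i, w i ≤ u i)
    (hs : ∑ i, w i = ∑ i, u i) : w = u := by
  funext i
  exact (Finset.sum_eq_sum_iff_of_le (fun i _ => h i)).1 hs i (Finset.mem_univ i)

theorem lex_add {n : ℕ} {u w : Fin n → ℕ} (z : Fin n → ℕ) :
    toLex (u + z) < toLex (w + z) ↔ toLex u < toLex w := by
  rw [lex_lt_iff, lex_lt_iff]
  simp

theorem lex_add_le {n : ℕ} {u w : Fin n → ℕ} (z : Fin n → ℕ) :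
    toLex (u + z) ≤ toLex (w + z) ↔ toLex u ≤ toLex w := by
  rw [← not_lt, ← not_lt, not_iff_not]; exact lex_add z

/-- Remove one unit at coordinate `j`. -/
theorem exists_sub {n : ℕ} {l h y : Fin n → ℕ} {d : ℕ} {j : Fin n} (hy : y ∈ Box l h (d + 1))
    (hj : l j < y j) : ∃ w ∈ Box l h d, y = w + Pi.single j 1 := by
  obtain ⟨h1, h2, h3⟩ := mem_Box.1 hy
  have key : y = (fun q => y q - (Pi.single j 1 : Fin n → ℕ) q) + Pi.single j 1 := by
    funext q
    by_cases hq : q = j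
    · subst hq; simp; omega
    · simp [hq]
  refine ⟨fun q => y q - (Pi.single j 1 : Fin n → ℕ) q, mem_Box.2 ⟨?_, ?_, ?_⟩, key⟩
  · intro q
    by_cases hq : q = j
    · subst hq; simp; omega
    · simpa [hq] using h1 q
  · intro q
    have := h2 q
    omega
  · have := sum_add_single (fun q => y q - (Pi.single j 1 : Fin n → ℕ) q) j
    rw [← key, h3] at this
    omega

theorem up_seg {n : ℕ} {l h : Fin n → ℕ} {d : ℕ} {S : Finset (Fin n → ℕ)}
    (hS : IsSeg l h d S) : IsSeg l h (d + 1) (up l h S) := by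
  refine ⟨up_subset_Box hS.1, ?_⟩
  intro y hy y' hy' hle
  rcases hle.lt_or_eq with hlt | heq
  swap
  · rwa [← toLex_inj.1 heq]
  obtain ⟨h1, h2, u, hu, i, hyu⟩ := mem_up.1 hy
  obtain ⟨h1', h2', h3'⟩ := mem_Box.1 hy'
  have hub := mem_Box.1 (hS.1 hu)
  obtain ⟨p, hp1, hp2⟩ := lex_lt_iff.1 hlt
  have huy : ∀ q, u q ≤ y q := by intro q; rw [hyu]; simp
  -- it is enough to find a good j
  suffices H : ∃ j, l j < y' j ∧ ∀ w ∈ Box l h d, y' = w + Pi.single j 1 → toLex u ≤ toLex w by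
    obtain ⟨j, hj, hw⟩ := H
    obtain ⟨w, hwB, hwe⟩ := exists_sub hy' hj
    exact mem_up.2 ⟨h1', h2', w, hS.2 u hu w hwB (hw w hwB hwe), j, hwe⟩
  by_cases hex : ∃ j, p < j ∧ l j < y' j
  · obtain ⟨j, hpj, hj⟩ := hex
    refine ⟨j, hj, fun w hw hwe => (lex_lt_of p ?_ ?_).le⟩
    · intro q hq
      have e : y' q = w q := by rw [hwe]; simp [(hq.trans hpj).ne]
      rw [← e, ← hp1 q hq]; exact huy q
    · have e : y' p = w p := by rw [hwe]; simp [hpj.ne]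
      rw [← e]; exact (huy p).trans_lt hp2
  · push Not at hex
    refine ⟨p, (h1 p).trans_lt hp2, fun w hw hwe => ?_⟩
    have hwb := mem_Box.1 hw
    have ewp : y' p = w p + 1 := by rw [hwe]; simp
    have ewq : ∀ q, q ≠ p → y' q = w q := by intro q hq; rw [hwe]; simp [hq]
    have hle : ∀ q ≤ p, u q ≤ w q := by
      intro q hq
      rcases hq.lt_or_eq with hq | hq
      · rw [← ewq q hq.ne, ← hp1 q hq]; exact huy q
      · subst hq; have := huy q; omega
    by_cases hh : ∃ q ≤ p, u q < w q
    · obtain ⟨q, hq, hq2⟩ := hh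
      exact (lex_lt_of q (fun q' hq' => hle q' (hq'.le.trans hq)) hq2).le
    · push Not at hh
      have : w = u := by
        apply eq_of_le_of_sum
        · intro q
          rcases le_or_gt q p with hq | hq
          · exact hh q hq
          · rw [← ewq q hq.ne']; exact (hex q hq).trans (hub.1 q)
        · rw [hwb.2.2, hub.2.2]
      rw [this]

theorem seg_subset {n : ℕ} {l h : Fin n → ℕ} {d : ℕ} {S R : Finset (Fin n → ℕ)}
    (hS : IsSeg l h d S) (hR : IsSeg l h d R) : S ⊆ R ∨ R ⊆ S := by
  by_contra hc
  push Not at hc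
  obtain ⟨h1, h2⟩ := hc
  obtain ⟨x, hx, hx'⟩ := Finset.not_subset.1 h1
  obtain ⟨y, hy, hy'⟩ := Finset.not_subset.1 h2
  rcases le_total (toLex x) (toLex y) with h | h
  · exact hy' (hS.2 x hx y (hR.1 hy) h)
  · exact hx' (hR.2 y hy x (hS.1 hx) h)

theorem seg_subset_of_card {n : ℕ} {l h : Fin n → ℕ} {d : ℕ} {S R : Finset (Fin n → ℕ)}
    (hS : IsSeg l h d S) (hR : IsSeg l h d R) (hc : S.card ≤ R.card) : S ⊆ R := by
  rcases seg_subset hS hR with h | h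
  · exact h
  · rw [Finset.eq_of_subset_of_card_le h hc]

open Classical in
/-- The `m` lex-largest elements of a finset. -/
noncomputable def ini {n : ℕ} (Y : Finset (Fin n → ℕ)) (m : ℕ) : Finset (Fin n → ℕ) :=
  Y.filter (fun u => (Y.filter (fun w => toLex u < toLex w)).card < m)

theorem ini_upper {n : ℕ} {Y : Finset (Fin n → ℕ)} {m : ℕ} {v u : Fin n → ℕ} (hv : v ∈ ini Y m)
    (hu : u ∈ Y) (h : toLex v ≤ toLex u) : u ∈ ini Y m := by
  classical
  simp only [ini, Finset.mem_filter] at hv ⊢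
  refine ⟨hu, lt_of_le_of_lt (Finset.card_le_card ?_) hv.2⟩
  intro w hw
  simp only [Finset.mem_filter] at hw ⊢
  exact ⟨hw.1, h.trans_lt hw.2⟩

theorem exists_upper {n : ℕ} (Y : Finset (Fin n → ℕ)) (m : ℕ) (hm : m ≤ Y.card) :
    ∃ S ⊆ Y, S.card = m ∧ ∀ v ∈ S, ∀ u ∈ Y, toLex v ≤ toLex u → u ∈ S := by
  classical
  induction m with
  | zero => exact ⟨∅, by simp, by simp, by simp⟩
  | succ m ih =>
    obtain ⟨S, hSY, hc, hS⟩ := ih (by omega)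
    have hne : (Y \ S).Nonempty := by
      rw [← Finset.card_pos, Finset.card_sdiff_of_subset hSY]; omega
    obtain ⟨x, hx, hmax⟩ := Finset.exists_max_image (Y \ S) toLex hne
    have hx' := Finset.mem_sdiff.1 hx
    refine ⟨insert x S, Finset.insert_subset hx'.1 hSY, ?_, ?_⟩
    · rw [Finset.card_insert_of_notMem hx'.2, hc]
    · intro v hv u hu hvu
      rcases Finset.mem_insert.1 hv with rfl | hv
      · by_cases hus : u ∈ S
        · exact Finset.mem_insert_of_mem hus
        · have := hmax u (Finset.mem_sdiff.2 ⟨hu, hus⟩)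
          rw [toLex_inj.1 (le_antisymm hvu this)]
          exact Finset.mem_insert_self _ _
      · exact Finset.mem_insert_of_mem (hS v hv u hu hvu)

theorem card_ini {n : ℕ} (Y : Finset (Fin n → ℕ)) (m : ℕ) (hm : m ≤ Y.card) :
    (ini Y m).card = m := by
  classical
  obtain ⟨S, hSY, hc, hS⟩ := exists_upper Y m hm
  have : ini Y m = S := by
    ext u
    simp only [ini, Finset.mem_filter]
    constructor
    · rintro ⟨hu, hlt⟩
      by_contra hus
      have : S ⊆ Y.filter (fun w => toLex u < toLex w) := by
        intro w hw
        simp only [Finset.mem_filter]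
        refine ⟨hSY hw, ?_⟩
        by_contra hcon
        exact hus (hS w hw u hu (not_lt.1 hcon))
      have := Finset.card_le_card this
      omega
    · intro hu
      refine ⟨hSY hu, ?_⟩
      have : Y.filter (fun w => toLex u < toLex w) ⊆ S.erase u := by
        intro w hw
        simp only [Finset.mem_filter] at hw
        refine Finset.mem_erase.2 ⟨?_, hS u hu w hw.1 hw.2.le⟩
        rintro rfl; exact lt_irrefl _ hw.2
      have := Finset.card_le_card this
      rw [Finset.card_erase_of_mem hu] at this
      have := Finset.card_pos.2 ⟨u, hu⟩
      omega
  rw [this, hc]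

theorem ini_subset {n : ℕ} (Y : Finset (Fin n → ℕ)) (m : ℕ) : ini Y m ⊆ Y := by
  classical
  exact Finset.filter_subset _ _

theorem ini_seg {n : ℕ} (l h : Fin n → ℕ) (d m : ℕ) : IsSeg l h d (ini (Box l h d) m) :=
  ⟨ini_subset _ _, fun _ hv _ hu hle => ini_upper hv hu hle⟩

/-- rank-sum potential -/
noncomputable def rk {n : ℕ} (Y : Finset (Fin n → ℕ)) (u : Fin n → ℕ) : ℕ := by
  classical
  exact (Y.filter (fun w => toLex u < toLex w)).card

theorem rk_lt {n : ℕ} {Y : Finset (Fin n → ℕ)} {u v : Fin n → ℕ} (hu : u ∈ Y)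
    (h : toLex v < toLex u) : rk Y u < rk Y v := by
  classical
  unfold rk
  apply Finset.card_lt_card
  rw [Finset.ssubset_iff_of_subset]
  · exact ⟨u, by simp [hu, h], by simp only [Finset.mem_filter, not_and]; exact fun _ => lt_irrefl _⟩
  · intro w hw
    simp only [Finset.mem_filter] at hw ⊢
    exact ⟨hw.1, h.trans hw.2⟩

theorem sum_lt_of_swap {α : Type} [DecidableEq α] (f : α → ℕ) {P Q : Finset α}
    (hc : P.card = Q.card) (hlt : ∀ x ∈ P \ Q, ∀ y ∈ Q \ P, f x < f y) :
    ∑ x ∈ P, f x ≤ ∑ x ∈ Q, f x ∧ (P ≠ Q → ∑ x ∈ P, f x < ∑ x ∈ Q, f x) := by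
  have hcc : (P \ Q).card = (Q \ P).card := by
    have h1 := Finset.card_sdiff_add_card_inter P Q
    have h2 := Finset.card_sdiff_add_card_inter Q P
    rw [Finset.inter_comm] at h2
    omega
  have e1 : ∑ x ∈ P, f x = ∑ x ∈ P ∩ Q, f x + ∑ x ∈ P \ Q, f x :=
    (Finset.sum_inter_add_sum_sdiff P Q f).symm
  have e2 : ∑ x ∈ Q, f x = ∑ x ∈ P ∩ Q, f x + ∑ x ∈ Q \ P, f x := by
    rw [Finset.inter_comm]; exact (Finset.sum_inter_add_sum_sdiff Q P f).symm
  by_cases hPQ : P = Q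
  · subst hPQ; simp
  have hne : (P \ Q).Nonempty := by
    by_contra hcon
    rw [Finset.not_nonempty_iff_eq_empty, Finset.sdiff_eq_empty_iff_subset] at hcon
    exact hPQ (Finset.eq_of_subset_of_card_le hcon hc.symm.le)
  have e := Finset.equivOfCardEq hcc
  have : ∑ x ∈ P \ Q, f x < ∑ x ∈ Q \ P, f x := by
    rw [← Finset.sum_coe_sort (P \ Q), ← Finset.sum_coe_sort (Q \ P), ← Equiv.sum_comp e]
    obtain ⟨x, hx⟩ := hne
    exact Finset.sum_lt_sum_of_nonempty ⟨⟨x, hx⟩, Finset.mem_univ _⟩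
      (fun i _ => hlt i i.2 (e i) (e i).2)
  omega

end CLx


namespace CLx

/-- The Clements–Lindström inequality for a box. -/
def CL {n : ℕ} (l h : Fin n → ℕ) : Prop :=
  ∀ d : ℕ, ∀ A S : Finset (Fin n → ℕ), A ⊆ Box l h d → IsSeg l h d S → S.card ≤ A.card →
    (up l h S).card ≤ (up l h A).card

/-- slice of a finset -/
def sl {n : ℕ} (i : Fin n) (t : ℕ) (Y : Finset (Fin n → ℕ)) : Finset (Fin n → ℕ) :=
  Y.filter (fun u => u i = t)

theorem mem_sl {n : ℕ} {i : Fin n} {t : ℕ} {Y : Finset (Fin n → ℕ)} {u : Fin n → ℕ} :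
    u ∈ sl i t Y ↔ u ∈ Y ∧ u i = t := by simp [sl]

theorem sum_sl {n : ℕ} (i : Fin n) (Y : Finset (Fin n → ℕ)) (N : ℕ) (hN : ∀ u ∈ Y, u i ≤ N)
    (f : (Fin n → ℕ) → ℕ) :
    ∑ t ∈ Finset.range (N + 1), ∑ u ∈ sl i t Y, f u = ∑ u ∈ Y, f u := by
  unfold sl
  apply Finset.sum_fiberwise_of_maps_to
  intro u hu
  have := hN u hu
  simp; omega

theorem card_sl {n : ℕ} (i : Fin n) (Y : Finset (Fin n → ℕ)) (N : ℕ) (hN : ∀ u ∈ Y, u i ≤ N) :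
    ∑ t ∈ Finset.range (N + 1), (sl i t Y).card = Y.card := by
  simpa using sum_sl i Y N hN (fun _ => 1)

theorem sl_Box {n : ℕ} {l h : Fin n → ℕ} {i : Fin n} {t d : ℕ} (h1 : l i ≤ t) (h2 : t ≤ h i) :
    sl i t (Box l h d) = Box (Function.update l i t) (Function.update h i t) d := by
  ext u
  simp only [mem_sl, mem_Box]
  constructor
  · rintro ⟨⟨a, b, c⟩, e⟩
    refine ⟨fun j => ?_, fun j => ?_, c⟩
    · by_cases hj : j = i
      · subst hj; simp [e]
      · simp [hj, a j]
    · by_cases hj : j = i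
      · subst hj; simp [e]
      · simp [hj, b j]
  · rintro ⟨a, b, c⟩
    have e : u i = t := by
      have := a i; have := b i; simp at *; omega
    refine ⟨⟨fun j => ?_, fun j => ?_, c⟩, e⟩
    · by_cases hj : j = i
      · subst hj; omega
      · have := a j; simpa [hj] using this
    · by_cases hj : j = i
      · subst hj; omega
      · have := b j; simpa [hj] using this

/-- compression -/
noncomputable def cmp {n : ℕ} (l h : Fin n → ℕ) (d : ℕ) (i : Fin n) (A : Finset (Fin n → ℕ)) :
    Finset (Fin n → ℕ) := by
  classical
  exact (Box l h d).filter (fun u => u ∈ ini (sl i (u i) (Box l h d)) (sl i (u i) A).card)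

theorem sl_cmp {n : ℕ} (l h : Fin n → ℕ) (d : ℕ) (i : Fin n) (A : Finset (Fin n → ℕ)) (t : ℕ) :
    sl i t (cmp l h d i A) = ini (sl i t (Box l h d)) (sl i t A).card := by
  classical
  ext u
  simp only [mem_sl, cmp, Finset.mem_filter]
  constructor
  · rintro ⟨⟨h1, h2⟩, rfl⟩; exact h2
  · intro hu
    have := ini_subset _ _ hu
    rw [mem_sl] at this
    obtain ⟨h1, rfl⟩ := this
    exact ⟨⟨h1, hu⟩, rfl⟩

theorem sl_mono {n : ℕ} {i : Fin n} {t : ℕ} {A B : Finset (Fin n → ℕ)} (h : A ⊆ B) :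
    sl i t A ⊆ sl i t B := Finset.filter_subset_filter _ h

theorem card_sl_cmp {n : ℕ} {l h : Fin n → ℕ} {d : ℕ} (i : Fin n) {A : Finset (Fin n → ℕ)}
    (hA : A ⊆ Box l h d) (t : ℕ) : (sl i t (cmp l h d i A)).card = (sl i t A).card := by
  rw [sl_cmp]
  exact card_ini _ _ (Finset.card_le_card (sl_mono hA))

theorem cmp_subset {n : ℕ} (l h : Fin n → ℕ) (d : ℕ) (i : Fin n) (A : Finset (Fin n → ℕ)) :
    cmp l h d i A ⊆ Box l h d := by
  classical
  exact Finset.filter_subset _ _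

theorem card_cmp {n : ℕ} {l h : Fin n → ℕ} {d : ℕ} (i : Fin n) {A : Finset (Fin n → ℕ)}
    (hA : A ⊆ Box l h d) : (cmp l h d i A).card = A.card := by
  rw [← card_sl i A (h i) (fun u hu => (mem_Box.1 (hA hu)).2.1 i),
    ← card_sl i _ (h i) (fun u hu => (mem_Box.1 (cmp_subset l h d i A hu)).2.1 i)]
  exact Finset.sum_congr rfl (fun t _ => card_sl_cmp i hA t)

theorem cmp_upper {n : ℕ} {l h : Fin n → ℕ} {d : ℕ} {i : Fin n} {A : Finset (Fin n → ℕ)}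
    {v u : Fin n → ℕ} (hv : v ∈ cmp l h d i A) (hu : u ∈ Box l h d) (hi : u i = v i)
    (hle : toLex v ≤ toLex u) : u ∈ cmp l h d i A := by
  have h1 : v ∈ sl i (v i) (cmp l h d i A) := mem_sl.2 ⟨hv, rfl⟩
  rw [sl_cmp] at h1
  have h2 := ini_upper h1 (mem_sl.2 ⟨hu, hi⟩) hle
  rw [← sl_cmp] at h2
  exact (mem_sl.1 h2).1

theorem cmp_potential {n : ℕ} {l h : Fin n → ℕ} {d : ℕ} {i : Fin n} {A : Finset (Fin n → ℕ)}
    (hA : A ⊆ Box l h d) (hne : cmp l h d i A ≠ A) :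
    ∑ u ∈ cmp l h d i A, rk (Box l h d) u < ∑ u ∈ A, rk (Box l h d) u := by
  classical
  have key : ∀ t, ∀ x ∈ sl i t (cmp l h d i A) \ sl i t A,
      ∀ y ∈ sl i t A \ sl i t (cmp l h d i A), rk (Box l h d) x < rk (Box l h d) y := by
    intro t x hx y hy
    rw [Finset.mem_sdiff] at hx hy
    apply rk_lt (cmp_subset l h d i A (mem_sl.1 hx.1).1)
    by_contra hc
    apply hy.2
    have hy1 := mem_sl.1 hy.1
    have hx1 := mem_sl.1 hx.1
    exact mem_sl.2 ⟨cmp_upper hx1.1 (hA hy1.1) (by omega) (not_lt.1 hc), hy1.2⟩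
  rw [← sum_sl i A (h i) (fun u hu => (mem_Box.1 (hA hu)).2.1 i),
    ← sum_sl i _ (h i) (fun u hu => (mem_Box.1 (cmp_subset l h d i A hu)).2.1 i)]
  apply Finset.sum_lt_sum
  · intro t _
    exact (sum_lt_of_swap _ (card_sl_cmp i hA t) (key t)).1
  · by_contra hcon
    push Not at hcon
    apply hne
    have : ∀ t ∈ Finset.range (h i + 1), sl i t (cmp l h d i A) = sl i t A := by
      intro t ht
      by_contra hc
      exact absurd ((sum_lt_of_swap _ (card_sl_cmp i hA t) (key t)).2 hc) (not_lt.2 (hcon t ht))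
    ext u
    constructor
    · intro hu
      have hb := (mem_Box.1 (cmp_subset l h d i A hu)).2.1 i
      have : u ∈ sl i (u i) A := by
        rw [← this (u i) (by simp; omega)]; exact mem_sl.2 ⟨hu, rfl⟩
      exact (mem_sl.1 this).1
    · intro hu
      have hb := (mem_Box.1 (hA hu)).2.1 i
      have : u ∈ sl i (u i) (cmp l h d i A) := by
        rw [this (u i) (by simp; omega)]; exact mem_sl.2 ⟨hu, rfl⟩
      exact (mem_sl.1 this).1

theorem mem_up_slice {n : ℕ} {l h : Fin n → ℕ} {d : ℕ} {i : Fin n} {t : ℕ}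
    {Y : Finset (Fin n → ℕ)} (hY : Y ⊆ Box l h d) (h1 : l i ≤ t) (h2 : t ≤ h i) :
    up (Function.update l i t) (Function.update h i t) (sl i t Y) ⊆ sl i t (up l h Y) := by
  have hY' : sl i t Y ⊆ Box (Function.update l i t) (Function.update h i t) d := by
    rw [← sl_Box h1 h2]; exact sl_mono hY
  intro y hy
  have hB := up_subset_Box hY' hy
  rw [← sl_Box h1 h2, mem_sl, mem_Box] at hB
  obtain ⟨_, _, u, hu, j, rfl⟩ := mem_up.1 hy
  exact mem_sl.2 ⟨mem_up.2 ⟨hB.1.1, hB.1.2.1, u, (mem_sl.1 hu).1, j, rfl⟩, hB.2⟩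

theorem cmp_up {n : ℕ} {l h : Fin n → ℕ} {d : ℕ} {i : Fin n} {A : Finset (Fin n → ℕ)}
    (hA : A ⊆ Box l h d)
    (IH : ∀ t, l i ≤ t → t ≤ h i → CL (Function.update l i t) (Function.update h i t)) :
    (up l h (cmp l h d i A)).card ≤ (up l h A).card := by
  classical
  set D := cmp l h d i A with hD
  have hDB : D ⊆ Box l h d := cmp_subset l h d i A
  rw [← card_sl i (up l h D) (h i) (fun u hu => (mem_up.1 hu).2.1 i),
    ← card_sl i (up l h A) (h i) (fun u hu => (mem_up.1 hu).2.1 i)]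
  apply Finset.sum_le_sum
  intro t ht
  have ht2 : t ≤ h i := by simp at ht; omega
  by_cases ht1 : l i ≤ t
  swap
  · have : sl i t (up l h D) = ∅ := by
      rw [Finset.eq_empty_iff_forall_notMem]
      intro y hy
      have := (mem_up.1 (mem_sl.1 hy).1).1 i
      have := (mem_sl.1 hy).2
      omega
    rw [this]; simp
  have hsB : ∀ e, sl i t (Box l h e) = Box (Function.update l i t) (Function.update h i t) e :=
    fun e => sl_Box ht1 ht2
  set l' := Function.update l i t
  set h' := Function.update h i t
  have segD : IsSeg l' h' d (sl i t D) := by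
    rw [hD, sl_cmp, hsB]; exact ini_seg _ _ _ _
  have hP : (up l' h' (sl i t D)).card ≤ (sl i t (up l h A)).card := by
    refine le_trans (IH t ht1 ht2 d (sl i t A) _ ?_ segD ?_)
      (Finset.card_le_card (mem_up_slice hA ht1 ht2))
    · rw [← hsB]; exact sl_mono hA
    · rw [hD, card_sl_cmp i hA]
  let Q : Finset (Fin n → ℕ) := (D.filter (fun u => u i + 1 = t)).image (fun u => u + Pi.single i 1)
  have memQ : ∀ y, y ∈ Q ↔ ∃ u ∈ D, u i + 1 = t ∧ u + Pi.single i 1 = y := by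
    intro y; simp [Q, and_assoc]
  have box_add : ∀ u ∈ Box l h d, u i + 1 = t → u + Pi.single i 1 ∈ sl i t (Box l h (d+1)) := by
    intro u hu hut
    obtain ⟨b1, b2, b3⟩ := mem_Box.1 hu
    refine mem_sl.2 ⟨mem_Box.2 ⟨fun j => ?_, fun j => ?_, by rw [sum_add_single, b3]⟩, by simpa⟩
    · have := b1 j; simp; omega
    · by_cases hj : j = i
      · subst hj; simp; omega
      · simpa [hj] using b2 j
  have hQ : Q.card ≤ (sl i t (up l h A)).card := by
    have e1 : Q.card = (D.filter (fun u => u i + 1 = t)).card :=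
      Finset.card_image_of_injective _ (add_left_injective _)
    have e2 : (D.filter (fun u => u i + 1 = t)).card = (A.filter (fun u => u i + 1 = t)).card := by
      rcases t with _ | t
      · simp
      · have := card_sl_cmp i hA t
        simpa [sl] using this
    have e3 : (A.filter (fun u => u i + 1 = t)).card =
        ((A.filter (fun u => u i + 1 = t)).image (fun u => u + Pi.single i 1)).card :=
      (Finset.card_image_of_injective _ (add_left_injective _)).symm
    rw [e1, e2, e3]
    apply Finset.card_le_card
    intro y hy
    simp only [Finset.mem_image, Finset.mem_filter] at hy
    obtain ⟨u, ⟨hu, hut⟩, rfl⟩ := hy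
    have := box_add u (hA hu) hut
    rw [mem_sl, mem_Box] at this
    exact mem_sl.2 ⟨mem_up.2 ⟨this.1.1, this.1.2.1, u, hu, i, rfl⟩, this.2⟩
  have segQ : IsSeg l' h' (d+1) Q := by
    refine ⟨?_, ?_⟩
    · intro y hy
      obtain ⟨u, hu, hut, rfl⟩ := (memQ y).1 hy
      rw [← hsB]; exact box_add u (hDB hu) hut
    · intro v hv w hw hle
      obtain ⟨u, hu, hut, rfl⟩ := (memQ v).1 hv
      rw [← hsB, mem_sl] at hw
      have hlu := (mem_Box.1 (hDB hu)).1 i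
      obtain ⟨z, hz, rfl⟩ := exists_sub hw.1 (j := i) (by omega)
      have hzi : z i + 1 = t := by have := hw.2; simpa using this
      exact (memQ _).2 ⟨z, cmp_upper hu hz (by omega) ((lex_add_le _).1 hle), hzi, rfl⟩
  have hsub : sl i t (up l h D) ⊆ up l' h' (sl i t D) ∪ Q := by
    intro y hy
    have hy1 := mem_sl.1 hy
    have hyB : y ∈ Box l' h' (d+1) := by
      rw [← hsB]; exact mem_sl.2 ⟨up_subset_Box hDB hy1.1, hy1.2⟩
    obtain ⟨c1, c2, u, hu, j, rfl⟩ := mem_up.1 hy1.1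
    by_cases hj : j = i
    · subst hj
      exact Finset.mem_union_right _ ((memQ _).2 ⟨u, hu, by have := hy1.2; simpa using this, rfl⟩)
    · have hyB' := mem_Box.1 hyB
      refine Finset.mem_union_left _ (mem_up.2 ⟨hyB'.1, hyB'.2.1, u, mem_sl.2 ⟨hu, ?_⟩, j, rfl⟩)
      have := hy1.2
      simpa [Ne.symm hj] using this
  refine (Finset.card_le_card hsub).trans ?_
  rcases seg_subset (up_seg segD) segQ with h | h
  · rw [Finset.union_eq_right.2 h]; exact hQ
  · rw [Finset.union_eq_left.2 h]; exact hP

end CLx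


namespace CLx

/-- Compressed in every free direction. -/
def Cpr {n : ℕ} (l h : Fin n → ℕ) (d : ℕ) (A : Finset (Fin n → ℕ)) : Prop :=
  ∀ i, l i < h i → ∀ v ∈ A, ∀ u ∈ Box l h d, u i = v i → toLex v ≤ toLex u → u ∈ A

theorem exists_lower {n : ℕ} (l : Fin n → ℕ) (Q : Finset (Fin n)) :
    ∀ (k : ℕ) (z : Fin n → ℕ), (∀ j ∈ Q, l j ≤ z j) → ∑ j ∈ Q, l j + k ≤ ∑ j ∈ Q, z j →
    ∃ w : Fin n → ℕ, (∀ j ∉ Q, w j = z j) ∧ (∀ j ∈ Q, l j ≤ w j) ∧ (∀ j, w j ≤ z j) ∧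
      ∑ j, w j + k = ∑ j, z j := by
  intro k
  induction k with
  | zero => intro z hz _; exact ⟨z, by simp, hz, by simp, by simp⟩
  | succ k ih =>
    intro z hz hs
    have : ∃ j ∈ Q, l j < z j := by
      by_contra hc
      push Not at hc
      have := Finset.sum_le_sum hc
      omega
    obtain ⟨j, hj, hlt⟩ := this
    have key : z = (Function.update z j (z j - 1)) + Pi.single j 1 := by
      funext q
      by_cases hq : q = j
      · subst hq; simp; omega
      · simp [hq]
    have hle : ∀ q, Function.update z j (z j - 1) q ≤ z q := by
      intro q
      by_cases hq : q = j
      · subst hq; simp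
      · simp [hq]
    have hsum := sum_add_single (Function.update z j (z j - 1)) j
    rw [← key] at hsum
    have hsumQ : ∑ q ∈ Q, z q = ∑ q ∈ Q, Function.update z j (z j - 1) q + 1 := by
      conv_lhs => rw [key]
      simp [Finset.sum_add_distrib, Pi.single_apply, hj]
    obtain ⟨w, w1, w2, w3, w4⟩ := ih (Function.update z j (z j - 1)) (by
      intro q hq
      by_cases hqj : q = j
      · subst hqj; simp; omega
      · simpa [hqj] using hz q hq) (by omega)
    refine ⟨w, ?_, w2, fun q => (w3 q).trans (hle q), by omega⟩
    intro q hq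
    rw [w1 q hq]
    have : q ≠ j := by rintro rfl; exact hq hj
    simp [this]

/-- swapping the last element of `A` with the first missing one -/
theorem swap_up {n : ℕ} {l h : Fin n → ℕ} {d : ℕ} {A : Finset (Fin n → ℕ)} {u v : Fin n → ℕ}
    (hA : A ⊆ Box l h d) (hv : v ∈ A) (hvmin : ∀ w ∈ A, toLex v ≤ toLex w)
    (hu : u ∈ Box l h d) (humax : ∀ w ∈ Box l h d, toLex u < toLex w → w ∈ A)
    (hvu : toLex v < toLex u) (r : Fin n) (hr : ∀ j, l j < h j → j ≤ r) (hlt : v r < u r) :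
    (up l h (insert u (A.erase v))).card ≤ (up l h A).card := by
  classical
  obtain ⟨u1, u2, u3⟩ := mem_Box.1 hu
  obtain ⟨v1, v2, v3⟩ := mem_Box.1 (hA hv)
  have hvr : v + Pi.single r 1 ∈ up l h A := by
    refine mem_up.2 ⟨fun j => ?_, fun j => ?_, v, hv, r, rfl⟩
    · have := v1 j; simp; omega
    · by_cases hj : j = r
      · subst hj; have := u2 j; simp; omega
      · simpa [hj] using v2 j
  have hsub : up l h (insert u (A.erase v)) ⊆
      insert (u + Pi.single r 1) ((up l h A).erase (v + Pi.single r 1)) := by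
    intro y hy
    obtain ⟨y1, y2, w, hw, j, rfl⟩ := mem_up.1 hy
    rw [Finset.mem_insert] at hw
    rcases hw with rfl | hw
    · by_cases hj : j = r
      · subst hj; exact Finset.mem_insert_self _ _
      · apply Finset.mem_insert_of_mem
        have hjT : l j < h j := by have := y2 j; have := u1 j; simp at *; omega
        have hjr : j < r := lt_of_le_of_ne (hr j hjT) hj
        have hyB : w + Pi.single j 1 ∈ Box l h (d+1) :=
          mem_Box.2 ⟨y1, y2, by rw [sum_add_single, u3]⟩
        obtain ⟨z, hz, hze⟩ := exists_sub hyB (j := r) (by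
          have := v1 r
          simp [Ne.symm hj]; omega)
        have hzw : toLex w < toLex z := by
          have hq : ∀ q, q ≠ r → z q = w q + (Pi.single j 1 : Fin n → ℕ) q := by
            intro q hq
            have := congrFun hze q
            simp [hq] at this
            omega
          apply lex_lt_of j
          · intro q hqj; rw [hq q (hqj.trans hjr).ne]; omega
          · rw [hq j hj]; simp
        rw [hze]
        refine Finset.mem_erase.2 ⟨?_, mem_up.2 ⟨by rw [← hze]; exact y1, by rw [← hze]; exact y2,
          z, humax z hz hzw, r, rfl⟩⟩
        intro hc
        have := add_right_cancel hc
        subst this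
        exact lt_asymm hzw hvu
    · apply Finset.mem_insert_of_mem
      rw [Finset.mem_erase] at hw
      refine Finset.mem_erase.2 ⟨?_, mem_up.2 ⟨y1, y2, w, hw.2, j, rfl⟩⟩
      intro hc
      obtain ⟨w1, w2, w3⟩ := mem_Box.1 (hA hw.2)
      have hjr : j ≠ r := by
        rintro rfl; exact hw.1 (add_right_cancel hc)
      have hcj := congrFun hc j
      simp [hjr] at hcj
      have hjT : l j < h j := by have := w1 j; have := v2 j; omega
      have hjr : j < r := lt_of_le_of_ne (hr j hjT) hjr
      have hlt : toLex w < toLex v := by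
        apply lex_lt_of j
        · intro q hq
          have := congrFun hc q
          simp [hq.ne, (hq.trans hjr).ne] at this
          omega
        · omega
      exact absurd (hvmin w hw.2) (not_le.2 hlt)
  refine (Finset.card_le_card hsub).trans ((Finset.card_insert_le _ _).trans ?_)
  rw [Finset.card_erase_of_mem hvr]
  have := Finset.card_pos.2 ⟨_, hvr⟩
  omega

theorem cpr_last {n : ℕ} {l h : Fin n → ℕ} {d : ℕ} {A : Finset (Fin n → ℕ)} {u v : Fin n → ℕ}
    (hA : A ⊆ Box l h d) (hC : Cpr l h d A) (hv : v ∈ A) (hu : u ∈ Box l h d) (huA : u ∉ A)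
    (hvu : toLex v < toLex u) {a b r : Fin n} (ha : l a < h a) (hb : l b < h b) (hr : l r < h r)
    (hab : a < b) (hbr : b < r) (hmin : ∀ j, l j < h j → j = a ∨ b ≤ j)
    (hmax : ∀ j, l j < h j → j ≤ r) : v r < u r := by
  classical
  obtain ⟨u1, u2, u3⟩ := mem_Box.1 hu
  obtain ⟨v1, v2, v3⟩ := mem_Box.1 (hA hv)
  have hfix : ∀ w : Fin n → ℕ, (∀ i, l i ≤ w i) → (∀ i, w i ≤ h i) → ∀ j, ¬ l j < h j → w j = l j := by
    intro w w1 w2 j hj; have := w1 j; have := w2 j; omega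
  have hdiff : ∀ i, l i < h i → u i ≠ v i := fun i hi he => huA (hC i hi v hv u hu he hvu.le)
  -- first coordinate
  have h0 : v a < u a := by
    obtain ⟨p, hp1, hp2⟩ := lex_lt_iff.1 hvu
    have hpT : l p < h p := by have := v1 p; have := u2 p; omega
    rcases hmin p hpT with rfl | hp
    · exact hp2
    · exact absurd (hp1 a (hab.trans_le hp)).symm (hdiff a ha)
  have hno : ∀ w ∈ Box l h d, ∀ i j, l i < h i → l j < h j → w i = v i → toLex v ≤ toLex w →
      w j = u j → toLex w ≤ toLex u → False := by
    intro w hw i j hi hj e1 l1 e2 l2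
    exact huA (hC j hj w (hC i hi v hv w hw e1 l1) u hu e2.symm l2)
  -- splitting sums
  have split2 : ∀ (f : Fin n → ℕ) (x y : Fin n), x ≠ y →
      ∑ j, f j = f x + f y + ∑ j ∈ (Finset.univ.erase x).erase y, f j := by
    intro f x y hxy
    rw [← Finset.add_sum_erase _ f (Finset.mem_univ x),
      ← Finset.add_sum_erase _ f (Finset.mem_erase.2 ⟨hxy.symm, Finset.mem_univ y⟩), add_assoc]
  have split3 : ∀ (f : Fin n → ℕ), ∑ j, f j =
      f a + f b + f r + ∑ j ∈ ((Finset.univ.erase a).erase b).erase r, f j := by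
    intro f
    have hm : r ∈ (Finset.univ.erase a).erase b := by simp [hbr.ne', (hab.trans hbr).ne']
    have := Finset.add_sum_erase _ f hm
    rw [split2 f a b hab.ne]
    omega
  -- second coordinate
  have h1 : u b < v b := by
    by_contra hcon
    have hlt : v b < u b := lt_of_le_of_ne (not_lt.1 hcon) (hdiff b hb).symm
    obtain ⟨Q, hQ⟩ : ∃ Q, Q = (Finset.univ.erase a).erase b := ⟨_, rfl⟩
    have e1 := split2 v a b hab.ne
    have e2 := split2 u a b hab.ne
    rw [← hQ] at e1 e2
    have e3 : ∑ j ∈ Q, l j ≤ ∑ j ∈ Q, u j := Finset.sum_le_sum (fun j _ => u1 j)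
    have hz : ∀ j ∈ Q, Function.update v b (u b) j = v j := by
      intro j hj
      have : j ≠ b := by simp [hQ] at hj; exact hj.1
      simp [this]
    have e4 : ∑ j ∈ Q, Function.update v b (u b) j = ∑ j ∈ Q, v j := Finset.sum_congr rfl hz
    obtain ⟨w, w1, w2, w3, w4⟩ := exists_lower l Q (u b - v b) (Function.update v b (u b))
      (by intro j hj; rw [hz j hj]; exact v1 j) (by rw [e4]; omega)
    have e5 := split2 (Function.update v b (u b)) a b hab.ne
    rw [← hQ, e4] at e5
    have wa : w a = v a := by rw [w1 a (by simp [hQ])]; simp [hab.ne]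
    have wb : w b = u b := by rw [w1 b (by simp [hQ])]; simp
    rw [Function.update_self, Function.update_of_ne hab.ne] at e5
    have wl : ∀ i, l i ≤ w i := by
      intro j
      by_cases hj : j ∈ Q
      · exact w2 j hj
      · have : j = a ∨ j = b := by simp [hQ] at hj; tauto
        rcases this with rfl | rfl
        · rw [wa]; exact v1 _
        · rw [wb]; exact u1 _
    have wh : ∀ i, w i ≤ h i := by
      intro j
      by_cases hj : j = b
      · subst hj; rw [wb]; exact u2 _
      · have := w3 j; simp [hj] at this; exact this.trans (v2 j)
    have hwB : w ∈ Box l h d := mem_Box.2 ⟨wl, wh, by omega⟩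
    refine hno w hwB a b ha hb wa (lex_lt_of b ?_ (by omega)).le wb
      (lex_lt_of a ?_ (by omega)).le
    · intro q hq
      by_cases hqT : l q < h q
      · rcases hmin q hqT with rfl | hh
        · exact wa.ge
        · exact absurd hq (not_lt.2 hh)
      · rw [hfix w wl wh q hqT, hfix v v1 v2 q hqT]
    · intro q hq
      have : ¬ l q < h q := by
        intro hqT
        rcases hmin q hqT with rfl | hh
        · exact lt_irrefl _ hq
        · exact absurd (hq.trans hab) (not_lt.2 hh)
      rw [hfix w wl wh q this, hfix u u1 u2 q this]
  by_contra hcon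
  have h2 : u r < v r := lt_of_le_of_ne (not_lt.1 hcon) (hdiff r hr)
  have har := hab.trans hbr
  obtain ⟨Q, hQ⟩ : ∃ Q, Q = (Finset.univ.erase a).erase r := ⟨_, rfl⟩
  have e1 := split2 v a r har.ne
  have e2 := split2 u a r har.ne
  rw [← hQ] at e1 e2
  have notT : ∀ q, q < a → ¬ l q < h q := by
    intro q hq hqT
    rcases hmin q hqT with rfl | hh
    · exact lt_irrefl _ hq
    · exact absurd (hq.trans hab) (not_lt.2 hh)
  by_cases hcase : ∑ j ∈ Q, l j + (v r - u r) ≤ ∑ j ∈ Q, u j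
  · have hz : ∀ j ∈ Q, Function.update u r (v r) j = u j := by
      intro j hj
      have : j ≠ r := by simp [hQ] at hj; exact hj.1
      simp [this]
    have e4 : ∑ j ∈ Q, Function.update u r (v r) j = ∑ j ∈ Q, u j := Finset.sum_congr rfl hz
    obtain ⟨w, w1, w2, w3, w4⟩ := exists_lower l Q (v r - u r) (Function.update u r (v r))
      (by intro j hj; rw [hz j hj]; exact u1 j) (by rw [e4]; omega)
    have e5 := split2 (Function.update u r (v r)) a r har.ne
    rw [← hQ, e4] at e5
    have wa : w a = u a := by rw [w1 a (by simp [hQ])]; simp [har.ne]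
    have wr : w r = v r := by rw [w1 r (by simp [hQ])]; simp
    rw [Function.update_self, Function.update_of_ne har.ne] at e5
    have wu : ∀ j, j ≠ r → w j ≤ u j := by
      intro j hj; have := w3 j; simpa [hj] using this
    have wl : ∀ i, l i ≤ w i := by
      intro j
      by_cases hj : j ∈ Q
      · exact w2 j hj
      · have : j = a ∨ j = r := by simp [hQ] at hj; tauto
        rcases this with rfl | rfl
        · rw [wa]; exact u1 _
        · rw [wr]; exact v1 _
    have wh : ∀ i, w i ≤ h i := by
      intro j
      by_cases hj : j = r
      · subst hj; rw [wr]; exact v2 _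
      · exact (wu j hj).trans (u2 j)
    have hsum : ∑ i, w i = d := by omega
    have hwB : w ∈ Box l h d := mem_Box.2 ⟨wl, wh, hsum⟩
    have hex : ∃ j, j ≠ r ∧ w j < u j := by
      by_contra hc
      push Not at hc
      have : u = w := eq_of_le_of_sum (fun i => by
        by_cases hi : i = r
        · subst hi; omega
        · exact hc i hi) (by omega)
      rw [this] at h2; omega
    obtain ⟨j, hjr, hj⟩ := hex
    have hjT : l j < h j := by have := wl j; have := u2 j; omega
    have hjr' : j < r := lt_of_le_of_ne (hmax j hjT) hjr
    refine hno w hwB r a hr ha wr (lex_lt_of a ?_ (by omega)).le wa (lex_lt_of j ?_ hj).le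
    · intro q hq
      rw [hfix w wl wh q (notT q hq), hfix v v1 v2 q (notT q hq)]
    · intro q hq; exact wu q (hq.trans hjr').ne
  · obtain ⟨Q3, hQ3⟩ : ∃ Q3, Q3 = ((Finset.univ.erase a).erase b).erase r := ⟨_, rfl⟩
    have f1 := split3 v
    have f2 := split3 u
    rw [← hQ3] at f1 f2
    have f3 : ∑ j ∈ Q3, l j ≤ ∑ j ∈ Q3, v j := Finset.sum_le_sum (fun j _ => v1 j)
    have f3' : ∑ j ∈ Q3, l j ≤ ∑ j ∈ Q3, u j := Finset.sum_le_sum (fun j _ => u1 j)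
    have eQ : ∀ f : Fin n → ℕ, ∑ j ∈ Q, f j = f b + ∑ j ∈ Q3, f j := by
      intro f
      have g1 := split2 f a r har.ne
      have g2 := split3 f
      rw [← hQ3] at g2; rw [← hQ] at g1
      omega
    have f4 := eQ u
    have f5 := eQ l
    have f6 := u1 b
    obtain ⟨W, hW⟩ : ∃ W, W + u b + v r + ∑ j ∈ Q3, l j = d :=
      ⟨d - (u b + v r + ∑ j ∈ Q3, l j), by omega⟩
    have hWv : v a < W := by omega
    have hWu : W < u a := by omega
    let w : Fin n → ℕ := fun j => if j = a then W else if j = b then u b else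
      if j = r then v r else l j
    have wa : w a = W := by simp [w]
    have wb : w b = u b := by simp [w, hab.ne']
    have wr : w r = v r := by simp [w, har.ne', hbr.ne']
    have wo : ∀ j, j ≠ a → j ≠ b → j ≠ r → w j = l j := by
      intro j j1 j2 j3; simp [w, j1, j2, j3]
    have hb : ∀ j, l j ≤ w j ∧ w j ≤ h j := by
      intro j
      by_cases j1 : j = a
      · subst j1; rw [wa]; have := v1 j; have := u2 j; omega
      by_cases j2 : j = b
      · subst j2; rw [wb]; exact ⟨u1 _, u2 _⟩
      by_cases j3 : j = r
      · subst j3; rw [wr]; exact ⟨v1 _, v2 _⟩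
      rw [wo j j1 j2 j3]
      exact ⟨le_rfl, (u1 j).trans (u2 j)⟩
    have wl := fun j => (hb j).1
    have wh := fun j => (hb j).2
    have f7 := split3 w
    have f8 : ∑ j ∈ Q3, w j = ∑ j ∈ Q3, l j := Finset.sum_congr rfl (fun j hj => by
      simp [hQ3] at hj
      exact wo j hj.2.2 hj.2.1 hj.1)
    rw [← hQ3, f8, wa, wb, wr] at f7
    have hwB : w ∈ Box l h d := mem_Box.2 ⟨wl, wh, by omega⟩
    refine hno w hwB r b hr (by omega) wr (lex_lt_of a ?_ (by omega)).le wb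
      (lex_lt_of a ?_ (by omega)).le
    · intro q hq
      rw [hfix w wl wh q (notT q hq), hfix v v1 v2 q (notT q hq)]
    · intro q hq
      rw [hfix w wl wh q (notT q hq), hfix u u1 u2 q (notT q hq)]

end CLx


namespace CLx

theorem cl_two {n : ℕ} {l h : Fin n → ℕ} {d : ℕ} {A S : Finset (Fin n → ℕ)} {u : Fin n → ℕ}
    {i j : Fin n} (hij : i < j) (hi : l i < h i) (hj : l j < h j)
    (hT : ∀ q, l q < h q → q = i ∨ q = j) (hs : h i + l j ≤ h j + l i)
    (hA : A ⊆ Box l h d) (hS : IsSeg l h d S) (hc : S.card ≤ A.card)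
    (hu : u ∈ Box l h d) (huA : u ∉ A) :
    (up l h S).card ≤ (up l h A).card := by
  classical
  -- basic facts
  have hoff : ∀ x ∈ Box l h d, ∀ q, q ≠ i → q ≠ j → x q = l q := by
    intro x hx q q1 q2
    obtain ⟨x1, x2, -⟩ := mem_Box.1 hx
    have := x1 q
    have := x2 q
    have : ¬ l q < h q := fun hh => (hT q hh).elim q1 q2
    omega
  have split : ∀ x ∈ Box l h d, x i + x j + ∑ q ∈ (Finset.univ.erase i).erase j, l q = d := by
    intro x hx
    obtain ⟨x1, x2, x3⟩ := mem_Box.1 hx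
    rw [← x3, ← Finset.add_sum_erase _ x (Finset.mem_univ i),
      ← Finset.add_sum_erase _ x (Finset.mem_erase.2 ⟨hij.ne', Finset.mem_univ j⟩), add_assoc]
    congr 2
    refine Finset.sum_congr rfl fun q hq => ?_
    simp at hq
    exact (hoff x hx q hq.2 hq.1).symm
  obtain ⟨R, hR⟩ : ∃ R, R = ∑ q ∈ (Finset.univ.erase i).erase j, l q := ⟨_, rfl⟩
  rw [← hR] at split
  have hext : ∀ x ∈ Box l h d, ∀ y ∈ Box l h d, x i = y i → x = y := by
    intro x hx y hy he
    have := split x hx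
    have := split y hy
    funext q
    by_cases q1 : q = i
    · rw [q1, he]
    by_cases q2 : q = j
    · rw [q2]; omega
    rw [hoff x hx q q1 q2, hoff y hy q q1 q2]
  have hlex : ∀ x ∈ Box l h d, ∀ y ∈ Box l h d, x i ≤ y i → toLex x ≤ toLex y := by
    intro x hx y hy hle
    rcases hle.lt_or_eq with hlt | he
    · refine (lex_lt_of i ?_ hlt).le
      intro q hq
      rw [hoff x hx q hq.ne (hq.trans hij).ne, hoff y hy q hq.ne (hq.trans hij).ne]
    · rw [hext x hx y hy he]
  rcases S.eq_empty_or_nonempty with rfl | hne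
  · have : up l h ∅ = ∅ := by
      ext y; simp [mem_up]
    rw [this]; simp
  obtain ⟨p, hp, hpmax⟩ := S.exists_max_image (fun x => x i) hne
  obtain ⟨p1, p2, p3⟩ := mem_Box.1 (hS.1 hp)
  have hPB := hS.1 hp
  have hupS : up l h S ⊆ insert (p + Pi.single i 1) (S.image (fun x => x + Pi.single j 1)) := by
    intro y hy
    obtain ⟨y1, y2, w, hw, k, rfl⟩ := mem_up.1 hy
    obtain ⟨w1, w2, w3⟩ := mem_Box.1 (hS.1 hw)
    have hk : l k < h k := by have := y2 k; have := w1 k; simp at *; omega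
    rcases hT k hk with rfl | rfl
    · rcases (hpmax w hw).lt_or_eq with hlt | he
      · have s1 := split w (hS.1 hw)
        have s2 := split p hPB
        have := p1 j
        obtain ⟨z, hz, hze⟩ := exists_sub (up_subset_Box hS.1 hy) (j := j) (by
          simp [hij.ne']; omega)
        rw [hze]
        apply Finset.mem_insert_of_mem
        refine Finset.mem_image.2 ⟨z, hS.2 w hw z hz (hlex w (hS.1 hw) z hz ?_), rfl⟩
        have := congrFun hze k
        simp [hij.ne] at this
        omega
      · rw [hext w (hS.1 hw) p hPB he]; exact Finset.mem_insert_self _ _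
    · exact Finset.mem_insert_of_mem (Finset.mem_image_of_mem _ hw)
  have hinj : ∀ k : Fin n, Function.Injective (fun x : Fin n → ℕ => x + Pi.single k 1) :=
    fun k x y hxy => add_right_cancel hxy
  have hup : ∀ x ∈ A, ∀ k, x k < h k → x + Pi.single k 1 ∈ up l h A := by
    intro x hx k hk
    obtain ⟨x1, x2, x3⟩ := mem_Box.1 (hA hx)
    refine mem_up.2 ⟨fun q => ?_, fun q => ?_, x, hx, k, rfl⟩
    · have := x1 q; simp; omega
    · by_cases hq : q = k
      · subst hq; simp; omega
      · simpa [hq] using x2 q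
  by_cases hpi : p i = h i
  · have h1 : up l h S ⊆ S.image (fun x => x + Pi.single j 1) := by
      intro y hy
      rcases Finset.mem_insert.1 (hupS hy) with rfl | h1
      · have := (mem_up.1 hy).2.1 i
        simp at this; omega
      · exact h1
    have h2 := (Finset.card_le_card h1).trans Finset.card_image_le
    refine h2.trans (hc.trans ?_)
    obtain ⟨u1, u2, u3⟩ := mem_Box.1 hu
    have su := split u hu
    refine Finset.card_le_card_of_injOn
      (fun w => if w i < u i then w + Pi.single i 1 else w + Pi.single j 1) ?_ ?_
    · intro w hw
      have sw := split w (hA hw)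
      have := u2 i
      have := u2 j
      have hne : w i ≠ u i := fun he => huA (hext w (hA hw) u hu he ▸ hw)
      by_cases hh : w i < u i
      · simp only [hh, if_true]; exact hup w hw i (by omega)
      · simp only [hh, if_false]; exact hup w hw j (by omega)
    · intro w hw x hx he
      have hnew : w i ≠ u i := fun he => huA (hext w (hA hw) u hu he ▸ hw)
      have hnex : x i ≠ u i := fun he => huA (hext x (hA hx) u hu he ▸ hx)
      have hei := congrFun he i
      dsimp only at he hei
      split_ifs at he hei with g1 g2 g2
      · exact add_right_cancel he
      · simp [hij.ne] at hei; omega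
      · simp [hij.ne] at hei; omega
      · exact add_right_cancel he
  · have hpj : p j = l j := by
      by_contra hcon
      have hlt : l j < p j := lt_of_le_of_ne (p1 j) (Ne.symm hcon)
      have hB : p + Pi.single i 1 ∈ Box l h (d + 1) := by
        refine mem_Box.2 ⟨fun q => ?_, fun q => ?_, by rw [sum_add_single, p3]⟩
        · have := p1 q; simp; omega
        · by_cases hq : q = i
          · subst hq; have := p2 q; simp; omega
          · simpa [hq] using p2 q
      obtain ⟨z, hz, hze⟩ := exists_sub hB (j := j) (by simp [hij.ne']; exact hlt)
      have hzi := congrFun hze i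
      simp [hij.ne] at hzi
      have := hpmax z (hS.2 p hp z hz (hlex p hPB z hz (by omega)))
      omega
    have sp := split p hPB
    have hi' : ∀ x ∈ Box l h d, x i < h i ∧ x j < h j := by
      intro x hx
      obtain ⟨x1, x2, x3⟩ := mem_Box.1 hx
      have := x1 i
      have := x1 j
      have := split x hx
      have := p2 i
      omega
    have hAne : A.Nonempty := by
      rw [← Finset.card_pos]; exact lt_of_lt_of_le (Finset.card_pos.2 hne) hc
    obtain ⟨m, hm, hmin⟩ := A.exists_min_image (fun x => x i) hAne
    have h1 : insert (m + Pi.single j 1) (A.image (fun x => x + Pi.single i 1)) ⊆ up l h A := by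
      intro y hy
      rcases Finset.mem_insert.1 hy with rfl | hy
      · exact hup m hm j (hi' m (hA hm)).2
      · obtain ⟨x, hx, rfl⟩ := Finset.mem_image.1 hy
        exact hup x hx i (hi' x (hA hx)).1
    have h2 := Finset.card_le_card h1
    rw [Finset.card_insert_of_notMem, Finset.card_image_of_injective _ (hinj i)] at h2
    · have h3 := (Finset.card_le_card hupS).trans (Finset.card_insert_le _ _)
      rw [Finset.card_image_of_injective _ (hinj j)] at h3
      omega
    · intro hmem
      obtain ⟨x, hx, hxe⟩ := Finset.mem_image.1 hmem
      have := congrFun hxe i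
      have := hmin x hx
      simp [hij.ne] at *
      omega

/-- the set of free coordinates -/
def fr {n : ℕ} (l h : Fin n → ℕ) : Finset (Fin n) := Finset.univ.filter (fun j => l j < h j)

theorem mem_fr {n : ℕ} {l h : Fin n → ℕ} {j : Fin n} : j ∈ fr l h ↔ l j < h j := by simp [fr]

theorem CL_main {n : ℕ} : ∀ (N : ℕ) (l h : Fin n → ℕ), (fr l h).card = N →
    (∀ i j, i < j → l i < h i → l j < h j → h i + l j ≤ h j + l i) → CL l h := by
  classical
  intro N
  induction N with
  | zero =>
    intro l h hN hs d A S hA hS hc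
    have hTe : ∀ q, ¬ l q < h q := by
      intro q hq
      have := Finset.card_eq_zero.1 hN
      have h2 := mem_fr.2 hq
      rw [this] at h2; simp at h2
    have : up l h S = ∅ := by
      ext y
      simp only [Finset.notMem_empty, iff_false]
      intro hy
      obtain ⟨y1, y2, w, hw, k, rfl⟩ := mem_up.1 hy
      have := (mem_Box.1 (hS.1 hw)).1 k
      have := y2 k
      have := hTe k
      simp at *
      omega
    rw [this]; simp
  | succ N ih =>
    intro l h hN hs d A S hA hS hc
    have IH : ∀ i, l i < h i → ∀ t, l i ≤ t → t ≤ h i →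
        CL (Function.update l i t) (Function.update h i t) := by
      intro i hi t _ _
      have key : ∀ q, Function.update l i t q < Function.update h i t q ↔ q ≠ i ∧ l q < h q := by
        intro q
        by_cases hq : q = i
        · subst hq; simp
        · simp [hq]
      refine ih _ _ ?_ ?_
      · have : fr (Function.update l i t) (Function.update h i t) = (fr l h).erase i := by
          ext q; rw [mem_fr, key, Finset.mem_erase, mem_fr]
        rw [this, Finset.card_erase_of_mem (mem_fr.2 hi), hN]; simp
      · intro x y hxy hx hy
        rw [key] at hx hy
        simpa [hx.1, hy.1] using hs x y hxy hx.2 hy.2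
    obtain ⟨F, hF⟩ : ∃ F, F = ∑ u ∈ A, rk (Box l h d) u := ⟨_, rfl⟩
    induction F using Nat.strong_induction_on generalizing A with
    | _ F ihF =>
    by_cases hseg : IsSeg l h d A
    · exact Finset.card_le_card (up_mono (seg_subset_of_card hS hseg hc))
    by_cases hcmp : ∃ i, l i < h i ∧ cmp l h d i A ≠ A
    · obtain ⟨i, hi, hne⟩ := hcmp
      refine le_trans ?_ (cmp_up hA (IH i hi))
      refine ihF _ ?_ (cmp l h d i A) (cmp_subset _ _ _ _ _) (by rwa [card_cmp i hA]) rfl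
      rw [hF]; exact cmp_potential hA hne
    push Not at hcmp
    have hC : Cpr l h d A := by
      intro i hi v hv u hu he hle
      rw [← hcmp i hi] at hv ⊢
      exact cmp_upper hv hu he hle
    have hex : ∃ v ∈ A, ∃ u ∈ Box l h d, toLex v ≤ toLex u ∧ u ∉ A := by
      by_contra hcon
      push Not at hcon
      exact hseg ⟨hA, hcon⟩
    obtain ⟨v0, hv0, u0, hu0, hle0, hu0A⟩ := hex
    obtain ⟨v, hv, hvmin⟩ := A.exists_min_image (fun x => toLex x) ⟨v0, hv0⟩
    obtain ⟨u, hu, humax⟩ := (Box l h d \ A).exists_max_image (fun x => toLex x)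
      ⟨u0, Finset.mem_sdiff.2 ⟨hu0, hu0A⟩⟩
    rw [Finset.mem_sdiff] at hu
    have hvu : toLex v < toLex u := by
      refine lt_of_le_of_ne ((hvmin v0 hv0).trans (hle0.trans
        (humax u0 (Finset.mem_sdiff.2 ⟨hu0, hu0A⟩)))) ?_
      intro he
      exact hu.2 (toLex_inj.1 he ▸ hv)
    -- first free coordinate
    have hne : (fr l h).Nonempty := by rw [← Finset.card_pos]; omega
    obtain ⟨a, ha, hamin⟩ := (fr l h).exists_min_image id hne
    rw [mem_fr] at ha
    by_cases h1 : ((fr l h).erase a).Nonempty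
    swap
    · exfalso
      rw [Finset.not_nonempty_iff_eq_empty] at h1
      have hq : ∀ q, q ≠ a → ¬ l q < h q := by
        intro q hq hlt
        have : q ∈ (fr l h).erase a := Finset.mem_erase.2 ⟨hq, mem_fr.2 hlt⟩
        rw [h1] at this; simp at this
      obtain ⟨u1, u2, u3⟩ := mem_Box.1 hu.1
      obtain ⟨v1, v2, v3⟩ := mem_Box.1 (hA hv)
      have hoff : ∀ q, q ≠ a → v q = u q := by
        intro q hqa
        have := hq q hqa
        have := u1 q; have := u2 q; have := v1 q; have := v2 q
        omega
      have : v a = u a := by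
        have e1 := Finset.add_sum_erase _ u (Finset.mem_univ a)
        have e2 := Finset.add_sum_erase _ v (Finset.mem_univ a)
        have e3 : ∑ q ∈ Finset.univ.erase a, v q = ∑ q ∈ Finset.univ.erase a, u q :=
          Finset.sum_congr rfl fun q hq => hoff q (Finset.mem_erase.1 hq).1
        omega
      have : v = u := by
        funext q
        by_cases hqa : q = a
        · rw [hqa, this]
        · exact hoff q hqa
      rw [this] at hvu
      exact lt_irrefl _ hvu
    obtain ⟨b, hb, hbmin⟩ := ((fr l h).erase a).exists_min_image id h1
    rw [Finset.mem_erase, mem_fr] at hb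
    have hab : a < b := lt_of_le_of_ne (hamin b (mem_fr.2 hb.2)) (Ne.symm hb.1)
    obtain ⟨r, hr, hrmax⟩ := (fr l h).exists_max_image id hne
    rw [mem_fr] at hr
    have hbr : b ≤ r := hrmax b (mem_fr.2 hb.2)
    rcases hbr.eq_or_lt with rfl | hbr
    · refine cl_two hab ha hb.2 ?_ (hs a b hab ha hb.2) hA hS hc hu.1 hu.2
      intro q hq
      by_cases hqa : q = a
      · exact Or.inl hqa
      · exact Or.inr (le_antisymm (hrmax q (mem_fr.2 hq))
          (hbmin q (Finset.mem_erase.2 ⟨hqa, mem_fr.2 hq⟩)))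
    have hmax : ∀ j, l j < h j → j ≤ r := fun j hj => hrmax j (mem_fr.2 hj)
    have hlt := cpr_last hA hC hv hu.1 hu.2 hvu ha hb.2 hr hab hbr (by
      intro j hj
      by_cases hja : j = a
      · exact Or.inl hja
      · exact Or.inr (hbmin j (Finset.mem_erase.2 ⟨hja, mem_fr.2 hj⟩))) hmax
    have hsw := swap_up hA hv hvmin hu.1 (fun w hw hlt => by
      by_contra hwA
      exact absurd (humax w (Finset.mem_sdiff.2 ⟨hw, hwA⟩)) (not_le.2 hlt)) hvu r hmax hlt
    refine le_trans ?_ hsw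
    have huE : u ∉ A.erase v := fun hh => hu.2 (Finset.mem_erase.1 hh).2
    have hcard : (insert u (A.erase v)).card = A.card := by
      rw [Finset.card_insert_of_notMem huE, Finset.card_erase_add_one hv]
    refine ihF _ ?_ (insert u (A.erase v)) ?_ (by rwa [hcard]) rfl
    · rw [Finset.sum_insert huE, hF, ← Finset.add_sum_erase A _ hv]
      have := rk_lt hu.1 hvu
      omega
    · intro x hx
      rcases Finset.mem_insert.1 hx with rfl | hx
      · exact hu.1
      · exact hA (Finset.mem_erase.1 hx).2

end CLx


namespace CLx
open MvPolynomial

/-- ideal generated by the first `m` members of a sequence -/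
def Pre {R : Type} [CommRing R] (f : ℕ → R) (m : ℕ) : Ideal R := Ideal.span (f '' Set.Iio m)

/-- weak regularity of the first `r` members of a sequence -/
def WR {R : Type} [CommRing R] (f : ℕ → R) (r : ℕ) : Prop :=
  ∀ i < r, ∀ g, f i * g ∈ Pre f i → g ∈ Pre f i

theorem Pre_mono {R : Type} [CommRing R] (f : ℕ → R) {m k : ℕ} (h : m ≤ k) :
    Pre f m ≤ Pre f k :=
  Ideal.span_mono (Set.image_mono (Set.Iio_subset_Iio h))

theorem mem_Pre_self {R : Type} [CommRing R] (f : ℕ → R) {i m : ℕ} (h : i < m) :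
    f i ∈ Pre f m := Ideal.subset_span ⟨i, h, rfl⟩

theorem mem_Pre_succ {R : Type} [CommRing R] (f : ℕ → R) (m : ℕ) (x : R) :
    x ∈ Pre f (m + 1) ↔ ∃ w, x - f m * w ∈ Pre f m := by
  have : f '' Set.Iio (m + 1) = insert (f m) (f '' Set.Iio m) := by
    rw [← Set.image_insert_eq]; congr 1; ext i; simp
  unfold Pre
  rw [this, Ideal.mem_span_insert']
  constructor
  · rintro ⟨a, ha⟩; exact ⟨-a, by convert ha using 1; ring⟩
  · rintro ⟨a, ha⟩; exact ⟨-a, by convert ha using 1; ring⟩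

theorem map_Pre {R S : Type} [CommRing R] [CommRing S] (φ : R →+* S) (f : ℕ → R) (m : ℕ) :
    (Pre f m).map φ = Pre (fun i => φ (f i)) m := by
  unfold Pre
  rw [Ideal.map_span, Set.image_image]

theorem WR_mono {R : Type} [CommRing R] {f : ℕ → R} {r m : ℕ} (h : WR f r) (hm : m ≤ r) :
    WR f m := fun i hi => h i (hi.trans_le hm)

variable {K : Type} [Field K]

/-- the linear form `x_last - ∑ c_i x_i` -/
noncomputable def ell {n : ℕ} (c : Fin n → K) : MvPolynomial (Fin (n + 1)) K :=
  X (Fin.last n) - ∑ i, C (c i) * X i.castSucc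

/-- restriction to the hyperplane `ell c = 0` -/
noncomputable def phi {n : ℕ} (c : Fin n → K) :
    MvPolynomial (Fin (n + 1)) K →ₐ[K] MvPolynomial (Fin n) K :=
  aeval (Fin.snoc (α := fun _ => MvPolynomial (Fin n) K) X (∑ i, C (c i) * X i))

/-- section of `phi` -/
noncomputable def iot (K : Type) [Field K] (n : ℕ) :
    MvPolynomial (Fin n) K →ₐ[K] MvPolynomial (Fin (n + 1)) K := rename Fin.castSucc

theorem phi_castSucc {n : ℕ} (c : Fin n → K) (i : Fin n) : phi c (X i.castSucc) = X i := by
  simp [phi]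

theorem phi_last {n : ℕ} (c : Fin n → K) : phi c (X (Fin.last n)) = ∑ i, C (c i) * X i := by
  simp [phi]

theorem phi_C {n : ℕ} (c : Fin n → K) (x : K) : phi c (C x) = C x := by
  simp [phi, algebraMap_eq]

theorem phi_ell {n : ℕ} (c : Fin n → K) : phi c (ell c) = 0 := by
  simp only [ell, map_sub, map_sum, map_mul, phi_castSucc, phi_last, phi_C, sub_self]

theorem phi_iot {n : ℕ} (c : Fin n → K) (p : MvPolynomial (Fin n) K) :
    phi c (iot K n p) = p := by
  have : (phi c).comp (iot K n) = AlgHom.id K _ := by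
    apply MvPolynomial.algHom_ext
    intro i
    simp [iot, phi_castSucc]
  exact DFunLike.congr_fun this p

theorem phi_surj {n : ℕ} (c : Fin n → K) : Function.Surjective (phi c) :=
  fun p => ⟨iot K n p, phi_iot c p⟩

theorem sub_iot_phi {n : ℕ} (c : Fin n → K) (p : MvPolynomial (Fin (n + 1)) K) :
    ell c ∣ p - iot K n (phi c p) := by
  induction p using MvPolynomial.induction_on with
  | C a => simp [phi_C, iot]
  | add p q hp hq =>
    have := dvd_add hp hq
    rw [map_add, map_add]
    convert this using 1; ring
  | mul_X p i hp =>
    have hX : ell c ∣ X i - iot K n (phi c (X i)) := by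
      refine Fin.lastCases ?_ (fun j => ?_) i
      · rw [phi_last]
        simp [iot, ell]
      · rw [phi_castSucc]; simp [iot]
    rw [map_mul, map_mul]
    have := dvd_add (hp.mul_right (X i)) (hX.mul_left (iot K n (phi c p)))
    convert this using 1; ring

theorem phi_eq_zero {n : ℕ} (c : Fin n → K) (p : MvPolynomial (Fin (n + 1)) K) :
    phi c p = 0 ↔ ell c ∣ p := by
  constructor
  · intro h
    have := sub_iot_phi c p
    rwa [h, map_zero, sub_zero] at this
  · rintro ⟨q, rfl⟩
    rw [map_mul, phi_ell, zero_mul]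

theorem phi_mem_map {n : ℕ} (c : Fin n → K) (I : Ideal (MvPolynomial (Fin (n + 1)) K))
    (x : MvPolynomial (Fin (n + 1)) K) :
    phi c x ∈ I.map (phi c) ↔ ∃ v, x - ell c * v ∈ I := by
  constructor
  · intro h
    obtain ⟨y, hy, he⟩ := (Ideal.mem_map_iff_of_surjective _ (phi_surj c)).1 h
    have : phi c (x - y) = 0 := by rw [map_sub, he, sub_self]
    obtain ⟨v, hv⟩ := (phi_eq_zero c _).1 this
    exact ⟨v, by rw [← hv]; simpa using hy⟩
  · rintro ⟨v, hv⟩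
    have := Ideal.mem_map_of_mem (phi c) hv
    rwa [map_sub, map_mul, phi_ell, zero_mul, sub_zero] at this

theorem phi_mem_Pre {n : ℕ} (c : Fin n → K) (f : ℕ → MvPolynomial (Fin (n + 1)) K) (m : ℕ)
    (x : MvPolynomial (Fin (n + 1)) K) :
    phi c x ∈ Pre (fun i => phi c (f i)) m ↔ ∃ v, x - ell c * v ∈ Pre f m := by
  rw [← phi_mem_map]
  have := map_Pre (phi c).toRingHom f m
  exact iff_of_eq (congrArg (fun J => phi c x ∈ J) this.symm)

theorem cc_phi {n : ℕ} (c : Fin n → K) (p : MvPolynomial (Fin (n + 1)) K) :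
    constantCoeff (phi c p) = constantCoeff p := by
  have : (constantCoeff).comp (phi c).toRingHom =
      (constantCoeff : MvPolynomial (Fin (n + 1)) K →+* K) := by
    apply MvPolynomial.ringHom_ext
    · intro a; simp [phi_C]
    · intro i
      refine Fin.lastCases ?_ (fun j => ?_) i
      · simp [phi_last]
      · simp [phi_castSucc]
  exact DFunLike.congr_fun this p

/-- the socle statement -/
def SOC (K : Type) [Field K] (r : ℕ) : Prop :=
  ∀ n, r < n → ∀ f : ℕ → MvPolynomial (Fin n) K, (∀ i < r, constantCoeff (f i) = 0) → WR f r →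
    ∀ u, (∀ j, X j * u ∈ Pre f r) → u ∈ Pre f r

theorem gen_ell [Infinite K] {r n : ℕ} (hS : ∀ m ≤ r, SOC K m) (hr : r < n + 1)
    (f : ℕ → MvPolynomial (Fin (n + 1)) K) (hf : ∀ i < r, constantCoeff (f i) = 0) (hW : WR f r) :
    ∃ c : Fin n → K, ∀ m ≤ r, ∀ g, ell c * g ∈ Pre f m → g ∈ Pre f m := by
  classical
  let R := MvPolynomial (Fin (n + 1)) K
  let L : (Fin (n + 1) → K) →ₗ[K] R := ∑ i, (LinearMap.proj i).smulRight (X i : R)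
  have hL : ∀ c, L c = ∑ i, c i • (X i : R) := by intro c; simp [L]
  let V : Ideal R → Submodule K (Fin (n + 1) → K) := fun p => (p.restrictScalars K).comap L
  let AP : Set (Ideal R) := ⋃ m ∈ Set.Iic r, associatedPrimes R (R ⧸ Pre f m)
  have hAP : AP.Finite := (Set.finite_Iic r).biUnion fun m _ => associatedPrimes.finite R _
  let W0 : Submodule K (Fin (n + 1) → K) := LinearMap.ker (LinearMap.proj (Fin.last n))
  let s : Finset (Subspace K (Fin (n + 1) → K)) := insert W0 (hAP.toFinset.image V)
  have hs : ⊤ ∉ s := by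
    intro ht
    rcases Finset.mem_insert.1 ht with h0 | h1
    · have : (Pi.single (Fin.last n) 1 : Fin (n + 1) → K) ∈ W0 := by rw [← h0]; trivial
      simp [W0] at this
    · obtain ⟨p, hp, hV⟩ := Finset.mem_image.1 h1
      rw [Set.Finite.mem_toFinset] at hp
      obtain ⟨m, hm, hp⟩ := Set.mem_iUnion₂.1 hp
      obtain ⟨hprime, x, hx⟩ := (isAssociatedPrime_iff).1 hp
      obtain ⟨x, rfl⟩ := Ideal.Quotient.mk_surjective x
      have hmem : ∀ y : R, y ∈ p ↔ y * x ∈ Pre f m := by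
        intro y
        rw [hx, Submodule.mem_colon_singleton, Submodule.mem_bot, ← Ideal.Quotient.eq_zero_iff_mem,
          map_mul]
        rfl
      have hX : ∀ j, (X j : R) ∈ p := by
        intro j
        have : (Pi.single j 1 : Fin (n + 1) → K) ∈ V p := by rw [hV]; trivial
        have h2 : L (Pi.single j 1) ∈ p := this
        rw [hL, Finset.sum_eq_single j] at h2
        · simpa using h2
        · intro b _ hb; simp [hb]
        · simp
      have hxm : x ∈ Pre f m := hS m hm (n + 1) (lt_of_le_of_lt hm hr) f
        (fun i hi => hf i (hi.trans_le hm)) (WR_mono hW hm) x (fun j => (hmem _).1 (hX j))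
      apply hprime.ne_top
      rw [Ideal.eq_top_iff_one, hmem, one_mul]
      exact hxm
  have hne := Subspace.biUnion_ne_univ_of_top_notMem hs
  obtain ⟨c, hc⟩ := (Set.ne_univ_iff_exists_notMem _).1 hne
  have hc' : ∀ p ∈ s, c ∉ p := by
    intro p hp hcp
    exact hc (Set.mem_iUnion₂.2 ⟨p, hp, hcp⟩)
  have hc0 : c (Fin.last n) ≠ 0 := by
    intro h0
    exact hc' W0 (Finset.mem_insert_self _ _) (by simpa [W0] using h0)
  let c' : Fin n → K := fun i => - (c (Fin.last n))⁻¹ * c i.castSucc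
  have hell : L c = C (c (Fin.last n)) * ell c' := by
    rw [hL, Fin.sum_univ_castSucc, ell, mul_sub, Finset.mul_sum, MvPolynomial.smul_eq_C_mul,
      add_comm, sub_eq_add_neg, ← Finset.sum_neg_distrib]
    congr 1
    refine Finset.sum_congr rfl fun i _ => ?_
    rw [MvPolynomial.smul_eq_C_mul, ← mul_assoc, ← C_mul, ← neg_mul, ← C_neg]
    congr 2
    simp only [c']
    field_simp
  refine ⟨c', fun m hm g hg => ?_⟩
  by_contra hgm
  have hz : ell c' ∈ ({y | ∃ x : R ⧸ Pre f m, x ≠ 0 ∧ y • x = 0} : Set R) := by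
    refine ⟨Ideal.Quotient.mk _ g, ?_, ?_⟩
    · rwa [Ne, Ideal.Quotient.eq_zero_iff_mem]
    · have : Ideal.Quotient.mk (Pre f m) (ell c' * g) = 0 := Ideal.Quotient.eq_zero_iff_mem.2 hg
      rw [map_mul] at this
      exact this
  rw [← biUnion_associatedPrimes_eq_zero_divisors] at hz
  obtain ⟨p, hp, hep⟩ := Set.mem_iUnion₂.1 hz
  refine hc' (V p) (Finset.mem_insert_of_mem (Finset.mem_image_of_mem _ ?_)) ?_
  · rw [Set.Finite.mem_toFinset]
    exact Set.mem_iUnion₂.2 ⟨m, hm, hp⟩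
  · change L c ∈ p
    rw [hell]
    exact Ideal.mul_mem_left _ _ hep

theorem WR_phi {r n : ℕ} (f : ℕ → MvPolynomial (Fin (n + 1)) K) (hW : WR f r) (c : Fin n → K)
    (hc : ∀ m ≤ r, ∀ g, ell c * g ∈ Pre f m → g ∈ Pre f m) : WR (fun i => phi c (f i)) r := by
  intro i hi g hg
  obtain ⟨u, rfl⟩ := phi_surj c g
  dsimp only at hg
  rw [← map_mul, phi_mem_Pre] at hg
  obtain ⟨v, hv⟩ := hg
  have h1 : ell c * v ∈ Pre f (i + 1) := by
    have h2 : f i * u ∈ Pre f (i + 1) := Ideal.mul_mem_right _ _ (mem_Pre_self f (Nat.lt_succ_self i))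
    have := sub_mem h2 (Pre_mono f (Nat.le_succ i) hv)
    simpa using this
  obtain ⟨w, hw⟩ := (mem_Pre_succ f i v).1 (hc (i + 1) hi v h1)
  rw [phi_mem_Pre]
  refine ⟨w, hW i hi _ ?_⟩
  have := add_mem hv (Ideal.mul_mem_left _ (ell c) hw)
  convert this using 1; ring

theorem SOC_all [Infinite K] (r : ℕ) : SOC K r := by
  induction r using Nat.strong_induction_on with
  | _ r ih =>
  rcases r with _ | r
  · intro n hn f _ _ u hu
    have : Pre f 0 = ⊥ := by simp [Pre]
    rw [this] at hu ⊢
    have h0 := hu ⟨0, hn⟩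
    rw [Ideal.mem_bot] at h0 ⊢
    exact (mul_eq_zero.1 h0).resolve_left (X_ne_zero _)
  · intro n hn f hf hW u hu
    obtain ⟨n, rfl⟩ : ∃ n', n = n' + 1 := ⟨n - 1, by omega⟩
    have hW' := WR_mono hW (Nat.le_succ r)
    have hf' : ∀ i < r, constantCoeff (f i) = 0 := fun i hi => hf i (by omega)
    obtain ⟨c, hc⟩ := gen_ell (fun m hm => ih m (by omega)) (by omega) f hf' hW'
    choose w hw using fun j => (mem_Pre_succ f r _).1 (hu j)
    -- ell * u
    obtain ⟨v, hv⟩ : ∃ v, ell c * u - f r * v ∈ Pre f r := by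
      refine (mem_Pre_succ f r _).1 ?_
      rw [ell, sub_mul, Finset.sum_mul]
      refine sub_mem (hu _) (Ideal.sum_mem _ fun i _ => ?_)
      rw [mul_assoc]
      exact Ideal.mul_mem_left _ _ (hu _)
    have h1 : ∀ j, X j * v - ell c * w j ∈ Pre f r := by
      intro j
      apply hW r (Nat.lt_succ_self r)
      have := sub_mem (Ideal.mul_mem_left _ (ell c) (hw j)) (Ideal.mul_mem_left _ (X j) hv)
      convert this using 1; ring
    have h2 : phi c v ∈ Pre (fun i => phi c (f i)) r := by
      refine ih r (by omega) n (by omega) _ (fun i hi => ?_) (WR_phi f hW' c hc) _ ?_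
      · rw [cc_phi]; exact hf' i hi
      · intro j
        rw [← phi_castSucc c j, ← map_mul, phi_mem_Pre]
        exact ⟨_, h1 _⟩
    obtain ⟨w', hw'⟩ := (phi_mem_Pre c f r v).1 h2
    rw [mem_Pre_succ]
    refine ⟨w', hc r le_rfl _ ?_⟩
    have := add_mem hv (Ideal.mul_mem_left _ (f r) hw')
    convert this using 1; ring

end CLx


namespace CLx
open MvPolynomial

variable {K : Type} [Field K] {n : ℕ}

/-- function to finsupp -/
noncomputable abbrev toF (u : Fin n → ℕ) : Fin n →₀ ℕ := Finsupp.equivFunOnFinite.symm u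

theorem toF_coe (u : Fin n →₀ ℕ) : toF (⇑u) = u := by simp [toF]

theorem degree_toF (u : Fin n → ℕ) : (toF u).degree = ∑ i, u i := by
  simp [toF, Finsupp.degree_eq_sum]

/-- all exponents of degree `d` -/
def Mon (n d : ℕ) : Finset (Fin n → ℕ) := Box 0 (fun _ => d) d

theorem mem_Mon {d : ℕ} {u : Fin n → ℕ} : u ∈ Mon n d ↔ ∑ i, u i = d := by
  unfold Mon
  rw [mem_Box]
  constructor
  · exact fun h => h.2.2
  · intro h
    refine ⟨fun i => Nat.zero_le _, fun i => ?_, h⟩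
    rw [← h]
    exact Finset.single_le_sum (f := u) (fun _ _ => Nat.zero_le _) (Finset.mem_univ i)

/-- `u` is the leading exponent of `p` -/
def IsLd (p : MvPolynomial (Fin n) K) (u : Fin n → ℕ) : Prop :=
  coeff (toF u) p ≠ 0 ∧ ∀ w : Fin n → ℕ, toLex u < toLex w → coeff (toF w) p = 0

/-- leading exponents of degree `d` -/
noncomputable def Dd (I : Ideal (MvPolynomial (Fin n) K)) (d : ℕ) : Finset (Fin n → ℕ) := by
  classical
  exact (Mon n d).filter (fun u => ∃ p ∈ I, p.IsHomogeneous d ∧ IsLd p u)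

theorem mem_Dd {I : Ideal (MvPolynomial (Fin n) K)} {d : ℕ} {u : Fin n → ℕ} :
    u ∈ Dd I d ↔ ∑ i, u i = d ∧ ∃ p ∈ I, p.IsHomogeneous d ∧ IsLd p u := by
  classical
  simp [Dd, mem_Mon]

theorem coeff_toF_of_hom {p : MvPolynomial (Fin n) K} {d : ℕ} (hp : p.IsHomogeneous d)
    {u : Fin n → ℕ} (hu : coeff (toF u) p ≠ 0) : ∑ i, u i = d := by
  by_contra hne
  exact hu (hp.coeff_eq_zero (by rwa [degree_toF]))

theorem exists_ld {p : MvPolynomial (Fin n) K} {d : ℕ} (hp : p.IsHomogeneous d) (h0 : p ≠ 0) :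
    ∃ u, ∑ i, u i = d ∧ IsLd p u := by
  classical
  obtain ⟨m, hm⟩ := MvPolynomial.ne_zero_iff.1 h0
  obtain ⟨u, hu, hmax⟩ := ((Mon n d).filter (fun u => coeff (toF u) p ≠ 0)).exists_max_image
    (fun x => toLex x) ⟨⇑m, by
      have : coeff (toF ⇑m) p ≠ 0 := by rwa [toF_coe]
      exact Finset.mem_filter.2 ⟨mem_Mon.2 (coeff_toF_of_hom hp this), this⟩⟩
  rw [Finset.mem_filter] at hu
  refine ⟨u, mem_Mon.1 hu.1, hu.2, fun w hw => ?_⟩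
  by_contra hne
  exact absurd (hmax w (Finset.mem_filter.2 ⟨mem_Mon.2 (coeff_toF_of_hom hp hne), hne⟩))
    (not_le.2 hw)

theorem hilb_finite (I : Ideal (MvPolynomial (Fin n) K)) (d : ℕ) :
    Module.Finite K ↥(Submodule.restrictScalars K I ⊓ homogeneousSubmodule (Fin n) K d) ∧
    hilb I d ≤ (Dd I d).card := by
  let W := Submodule.restrictScalars K I ⊓ homogeneousSubmodule (Fin n) K d
  let L : W →ₗ[K] (↥(Dd I d) → K) :=
    LinearMap.pi (fun u => (lcoeff K (toF u.1)).comp W.subtype)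
  have hL : Function.Injective L := by
    rw [← LinearMap.ker_eq_bot, LinearMap.ker_eq_bot']
    intro p hp
    by_contra hne
    have hne' : p.1 ≠ 0 := fun h => hne (Subtype.ext h)
    have hh : p.1.IsHomogeneous d := p.2.2
    obtain ⟨u, hu, hl⟩ := exists_ld hh hne'
    have := congrFun hp ⟨u, mem_Dd.2 ⟨hu, p.1, p.2.1, hh, hl⟩⟩
    exact hl.1 this
  refine ⟨Module.Finite.of_injective L hL, ?_⟩
  have := LinearMap.finrank_le_finrank_of_injective hL
  rw [Module.finrank_fintype_fun_eq_card, Fintype.card_coe] at this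
  exact this

theorem hilb_eq (I : Ideal (MvPolynomial (Fin n) K)) (d : ℕ) : hilb I d = (Dd I d).card := by
  classical
  refine le_antisymm (hilb_finite I d).2 ?_
  have := (hilb_finite I d).1
  let W := Submodule.restrictScalars K I ⊓ homogeneousSubmodule (Fin n) K d
  choose P hP1 hP2 hP3 using fun u : ↥(Dd I d) => (mem_Dd.1 u.2).2
  let M : (↥(Dd I d) → K) →ₗ[K] W :=
    ∑ u, (LinearMap.proj u).smulRight (⟨P u, hP1 u, hP2 u⟩ : W)
  have hM : ∀ c, (M c).1 = ∑ u, c u • P u := by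
    intro c
    simp [M]
  have hinj : Function.Injective M := by
    rw [← LinearMap.ker_eq_bot, LinearMap.ker_eq_bot']
    intro c hc
    by_contra hne
    obtain ⟨u0, hu0⟩ := Function.ne_iff.1 hne
    obtain ⟨u, hu, hmax⟩ := (Finset.univ.filter (fun u => c u ≠ 0)).exists_max_image
      (fun x => toLex x.1) ⟨u0, by simpa using hu0⟩
    have h0 : coeff (toF u.1) (M c).1 = 0 := by rw [hc]; simp
    rw [hM, coeff_sum, Finset.sum_eq_single u] at h0
    · rw [coeff_smul, smul_eq_mul] at h0
      exact (mul_ne_zero (by simpa using hu) (hP3 u).1) h0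
    · intro w _ hw
      rw [coeff_smul, smul_eq_mul]
      by_cases hcw : c w = 0
      · rw [hcw, zero_mul]
      · rw [(hP3 w).2 u.1, mul_zero]
        refine lt_of_le_of_ne (hmax w (by simpa using hcw)) ?_
        intro he
        exact hw (Subtype.ext (toLex_inj.1 he))
    · simp
  have := LinearMap.finrank_le_finrank_of_injective hinj
  simpa [hilb] using this

theorem hilb_mono {I J : Ideal (MvPolynomial (Fin n) K)} (h : I ≤ J) (d : ℕ) :
    hilb I d ≤ hilb J d := by
  rw [hilb_eq, hilb_eq]
  refine Finset.card_le_card fun u hu => ?_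
  obtain ⟨h1, p, hp, h2⟩ := mem_Dd.1 hu
  exact mem_Dd.2 ⟨h1, p, h hp, h2⟩

theorem toF_add_single (u : Fin n → ℕ) (i : Fin n) :
    toF (u + Pi.single i 1) = toF u + Finsupp.single i 1 := by
  ext j
  simp [toF, Finsupp.single_apply, Pi.single_apply, eq_comm]

theorem Dd_add {I : Ideal (MvPolynomial (Fin n) K)} {d : ℕ} {u : Fin n → ℕ} (hu : u ∈ Dd I d)
    (i : Fin n) : u + Pi.single i 1 ∈ Dd I (d + 1) := by
  obtain ⟨h1, p, hp, h2, h3, h4⟩ := mem_Dd.1 hu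
  refine mem_Dd.2 ⟨by rw [sum_add_single, h1], p * X i, Ideal.mul_mem_right _ _ hp,
    h2.mul (isHomogeneous_X K i), ?_, ?_⟩
  · rw [toF_add_single, coeff_mul_X]; exact h3
  · intro w hw
    by_cases hwi : w i = 0
    · rw [coeff_mul_X']
      simp [hwi]
    · have key : w = (Function.update w i (w i - 1)) + Pi.single i 1 := by
        funext q
        by_cases hq : q = i
        · subst hq; simp; omega
        · simp [hq]
      rw [key] at hw ⊢
      rw [toF_add_single, coeff_mul_X]
      exact h4 _ ((lex_add _).1 hw)

theorem ld_monomial (u : Fin n → ℕ) : IsLd (monomial (toF u) (1 : K)) u := by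
  refine ⟨by simp, fun w hw => ?_⟩
  rw [coeff_monomial, if_neg]
  intro he
  have : u = w := Finsupp.equivFunOnFinite.symm.injective he
  rw [this] at hw
  exact lt_irrefl _ hw

end CLx


namespace CLx
open MvPolynomial

/-- The inductive claim: there is a monotone assignment of ideals with pure powers. -/
def Claim (K : Type) [Field K] {r : ℕ} (a : Fin r → ℕ) (n : ℕ) (h : r ≤ n) : Prop :=
  ∀ f : Fin r → MvPolynomial (Fin n) K, IsRegSeq f → (∀ i, (f i).IsHomogeneous (a i)) →
    ∃ Λ : Ideal (MvPolynomial (Fin n) K) → Ideal (MvPolynomial (Fin n) K),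
      (∀ I, IsHomog I → (∀ i, f i ∈ I) →
        (∀ i : Fin r, (X (Fin.castLE h i) : MvPolynomial (Fin n) K) ^ a i ∈ Λ I) ∧
        ∀ d, hilb (Λ I) d = hilb I d) ∧
      ∀ I I', IsHomog I → (∀ i, f i ∈ I) → IsHomog I' → I ≤ I' → Λ I ≤ Λ I'

variable {K : Type} [Field K] {r : ℕ}

/-- number of exponents of degree `d` outside of the box -/
def Nn (a : Fin r → ℕ) (d : ℕ) : ℕ := (Mon r d \ Box 0 (fun i => a i - 1) d).card

/-- lex-plus-powers exponents -/
def lexSet (a : Fin r → ℕ) (H : ℕ → ℕ) : Set (Fin r → ℕ) :=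
  {u | (∃ i, a i ≤ u i) ∨
    u ∈ ini (Box 0 (fun i => a i - 1) (∑ i, u i)) (H (∑ i, u i) - Nn a (∑ i, u i))}

/-- lex-plus-powers ideal -/
noncomputable def LPP (K : Type) [Field K] (a : Fin r → ℕ) (H : ℕ → ℕ) :
    Ideal (MvPolynomial (Fin r) K) :=
  Ideal.span ((fun u => monomial u (1 : K)) '' {u | ⇑u ∈ lexSet a H})

theorem ini_mono {n : ℕ} (Y : Finset (Fin n → ℕ)) {m k : ℕ} (h : m ≤ k) : ini Y m ⊆ ini Y k := by
  classical
  intro u hu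
  simp only [ini, Finset.mem_filter] at hu ⊢
  exact ⟨hu.1, by omega⟩

theorem lexSet_mono (a : Fin r → ℕ) {H H' : ℕ → ℕ} (h : ∀ d, H d ≤ H' d) :
    lexSet a H ⊆ lexSet a H' := by
  rintro u (hu | hu)
  · exact Or.inl hu
  · exact Or.inr (ini_mono _ (Nat.sub_le_sub_right (h _) _) hu)

theorem not_box {a : Fin r → ℕ} (ha : ∀ i, 2 ≤ a i) {u : Fin r → ℕ} {d : ℕ} (hd : ∑ i, u i = d) :
    u ∉ Box 0 (fun i => a i - 1) d ↔ ∃ i, a i ≤ u i := by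
  rw [mem_Box]
  constructor
  · intro h
    by_contra hc
    push Not at hc
    exact h ⟨fun i => Nat.zero_le _, fun i => by have := hc i; omega, hd⟩
  · rintro ⟨i, hi⟩ ⟨-, h, -⟩
    have := h i
    have := ha i
    omega

theorem nonbox_mem_Dd {a : Fin r → ℕ} {J : Ideal (MvPolynomial (Fin r) K)}
    (hJ : ∀ i, (X i : MvPolynomial (Fin r) K) ^ a i ∈ J) {u : Fin r → ℕ} {d : ℕ}
    (hd : ∑ i, u i = d) (hu : ∃ i, a i ≤ u i) : u ∈ Dd J d := by
  obtain ⟨i, hi⟩ := hu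
  refine mem_Dd.2 ⟨hd, monomial (toF u) 1, ?_, ?_, ld_monomial u⟩
  · have : (monomial (toF u) (1 : K)) =
        monomial (toF u - Finsupp.single i (a i)) 1 * X i ^ a i := by
      rw [X_pow_eq_monomial, monomial_mul, one_mul, tsub_add_cancel_of_le]
      rw [Finsupp.single_le_iff]
      exact hi
    rw [this]
    exact Ideal.mul_mem_left _ _ (hJ i)
  · apply isHomogeneous_monomial
    rw [degree_toF, hd]

theorem card_A {a : Fin r → ℕ} (ha : ∀ i, 2 ≤ a i) {D : Finset (Fin r → ℕ)} {d : ℕ}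
    (hD : D ⊆ Mon r d) (hn : ∀ u, ∑ i, u i = d → (∃ i, a i ≤ u i) → u ∈ D) :
    (D ∩ Box 0 (fun i => a i - 1) d).card + Nn a d = D.card := by
  classical
  rw [← Finset.card_inter_add_card_sdiff D (Box 0 (fun i => a i - 1) d)]
  unfold Nn
  congr 2
  ext u
  simp only [Finset.mem_sdiff]
  constructor
  · rintro ⟨h1, h2⟩
    exact ⟨hn u (mem_Mon.1 h1) ((not_box ha (mem_Mon.1 h1)).1 h2), h2⟩
  · rintro ⟨h1, h2⟩
    exact ⟨hD h1, h2⟩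

theorem Dd_sub (J : Ideal (MvPolynomial (Fin r) K)) (d : ℕ) : Dd J d ⊆ Mon r d :=
  fun _ hu => mem_Mon.2 (mem_Dd.1 hu).1

section
variable {a : Fin r → ℕ} {J : Ideal (MvPolynomial (Fin r) K)}

theorem hilb_card (ha : ∀ i, 2 ≤ a i)
    (hJ : ∀ i, (X i : MvPolynomial (Fin r) K) ^ a i ∈ J)
    (d : ℕ) : (Dd J d ∩ Box 0 (fun i => a i - 1) d).card = hilb J d - Nn a d ∧
    Nn a d ≤ hilb J d := by
  have := card_A ha (Dd_sub J d) (fun u hd hu => nonbox_mem_Dd hJ hd hu)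
  rw [hilb_eq]; omega

theorem lexSet_succ (ha : ∀ i, 2 ≤ a i) (hmono : Monotone a)
    (hJ : ∀ i, (X i : MvPolynomial (Fin r) K) ^ a i ∈ J)
    {u : Fin r → ℕ} (hu : u ∈ lexSet a (hilb J)) (i : Fin r) :
    u + Pi.single i 1 ∈ lexSet a (hilb J) := by
  classical
  by_cases hne : ∃ j, a j ≤ (u + Pi.single i 1 : Fin r → ℕ) j
  · exact Or.inl hne
  right
  rcases hu with ⟨j, hj⟩ | hu
  · exact absurd ⟨j, hj.trans (by simp)⟩ hne
  have hs := sum_add_single u i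
  have hB : u + Pi.single i 1 ∈ Box 0 (fun i => a i - 1) (∑ j, u j + 1) := by
    by_contra hc
    exact hne ((not_box ha hs).1 hc)
  rw [hs]
  obtain ⟨d, hd⟩ : ∃ d, d = ∑ j, u j := ⟨_, rfl⟩
  rw [← hd] at hu hB ⊢
  obtain ⟨c1, c2⟩ := hilb_card ha hJ d
  obtain ⟨c3, c4⟩ := hilb_card ha hJ (d + 1)
  rw [← c1] at hu
  rw [← c3]
  set A := Dd J d ∩ Box 0 (fun i => a i - 1) d with hA
  set A' := Dd J (d + 1) ∩ Box 0 (fun i => a i - 1) (d + 1) with hA'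
  have hAB : A ⊆ Box 0 (fun i => a i - 1) d := Finset.inter_subset_right
  have hAB' : A' ⊆ Box 0 (fun i => a i - 1) (d + 1) := Finset.inter_subset_right
  have hup : up 0 (fun i => a i - 1) A ⊆ A' := by
    intro y hy
    refine Finset.mem_inter.2 ⟨?_, up_subset_Box hAB hy⟩
    obtain ⟨-, -, w, hw, k, rfl⟩ := mem_up.1 hy
    exact Dd_add (Finset.mem_inter.1 hw).1 k
  have hCL : CL (0 : Fin r → ℕ) (fun i => a i - 1) := by
    refine CL_main _ _ _ rfl ?_
    intro x y hxy _ _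
    have := hmono hxy.le
    simp; omega
  have hle := hCL d A _ hAB (ini_seg 0 (fun i => a i - 1) d A.card)
    (card_ini _ _ (Finset.card_le_card hAB)).le
  have hsub := seg_subset_of_card (up_seg (ini_seg 0 (fun i => a i - 1) d A.card))
    (ini_seg 0 (fun i => a i - 1) (d + 1) A'.card) (by
      rw [card_ini _ _ (Finset.card_le_card hAB')]
      exact hle.trans (Finset.card_le_card hup))
  obtain ⟨b1, b2, -⟩ := mem_Box.1 hB
  exact hsub (mem_up.2 ⟨b1, b2, u, hu, i, rfl⟩)

theorem lexSet_add (ha : ∀ i, 2 ≤ a i) (hmono : Monotone a)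
    (hJ : ∀ i, (X i : MvPolynomial (Fin r) K) ^ a i ∈ J)
    {u : Fin r → ℕ} (hu : u ∈ lexSet a (hilb J)) (w : Fin r →₀ ℕ) :
    u + ⇑w ∈ lexSet a (hilb J) := by
  induction w using Finsupp.induction_linear generalizing u with
  | zero => simpa using hu
  | add f g hf hg =>
    have := hg (hf hu)
    rw [Finsupp.coe_add, ← add_assoc]; exact this
  | single i m =>
    induction m with
    | zero => simpa using hu
    | succ m ih =>
      have := lexSet_succ ha hmono hJ ih i
      convert this using 1
      rw [add_assoc]
      congr 1
      rw [Finsupp.single_add, Finsupp.coe_add]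
      congr 1
      ext q
      simp [Finsupp.single_apply, Pi.single_apply, eq_comm]

theorem mem_LPP (ha : ∀ i, 2 ≤ a i) (hmono : Monotone a)
    (hJ : ∀ i, (X i : MvPolynomial (Fin r) K) ^ a i ∈ J)
    (p : MvPolynomial (Fin r) K) :
    p ∈ LPP K a (hilb J) ↔ ∀ u ∈ p.support, ⇑u ∈ lexSet a (hilb J) := by
  unfold LPP
  rw [mem_ideal_span_monomial_image]
  refine forall₂_congr fun u _ => ?_
  constructor
  · rintro ⟨s, hs, hle⟩
    have := lexSet_add ha hmono hJ hs (u - s)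
    rwa [← Finsupp.coe_add, add_tsub_cancel_of_le hle] at this
  · intro hu
    exact ⟨u, hu, le_rfl⟩

theorem hilb_LPP (ha : ∀ i, 2 ≤ a i) (hmono : Monotone a)
    (hJ : ∀ i, (X i : MvPolynomial (Fin r) K) ^ a i ∈ J)
    (d : ℕ) : hilb (LPP K a (hilb J)) d = hilb J d := by
  classical
  rw [hilb_eq]
  have hmem : ∀ u : Fin r → ℕ, u ∈ Dd (LPP K a (hilb J)) d ↔
      ∑ i, u i = d ∧ u ∈ lexSet a (hilb J) := by
    intro u
    rw [mem_Dd]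
    refine and_congr_right fun hd => ?_
    constructor
    · rintro ⟨p, hp, -, hl, -⟩
      exact (mem_LPP ha hmono hJ p).1 hp (toF u) (mem_support_iff.2 hl)
    · intro hu
      refine ⟨monomial (toF u) 1, Ideal.subset_span ⟨toF u, hu, rfl⟩, ?_, ld_monomial u⟩
      exact isHomogeneous_monomial _ (by rw [degree_toF, hd])
  obtain ⟨c1, c2⟩ := hilb_card ha hJ d
  rw [← card_A ha (Dd_sub _ d) (fun u hd hu => (hmem u).2 ⟨hd, Or.inl hu⟩)]
  have : Dd (LPP K a (hilb J)) d ∩ Box 0 (fun i => a i - 1) d =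
      ini (Box 0 (fun i => a i - 1) d) (hilb J d - Nn a d) := by
    ext u
    rw [Finset.mem_inter, hmem]
    constructor
    · rintro ⟨⟨h1, h2⟩, h3⟩
      rcases h2 with h2 | h2
      · exact absurd h3 ((not_box ha h1).2 h2)
      · rwa [h1] at h2
    · intro hu
      have hB := ini_subset _ _ hu
      have h1 := (mem_Box.1 hB).2.2
      exact ⟨⟨h1, Or.inr (by rwa [h1])⟩, hB⟩
  rw [this, card_ini]
  · omega
  · rw [← c1]; exact Finset.card_le_card Finset.inter_subset_right
end

theorem claim_base {a : Fin r → ℕ} (ha : ∀ i, 2 ≤ a i) (hmono : Monotone a)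
    (hE : EGHnr K r r le_rfl a) : Claim K a r le_rfl := by
  intro f hf hdeg
  refine ⟨fun I => LPP K a (hilb I), ?_, ?_⟩
  · intro I hI hfI
    obtain ⟨J, hJ, hh⟩ := hE I hI ⟨f, hf, hdeg, hfI⟩
    have hJ' : ∀ i, (X i : MvPolynomial (Fin r) K) ^ a i ∈ J := by
      intro i; simpa using hJ i
    have he : hilb I = hilb J := funext hh
    dsimp only
    rw [he]
    refine ⟨fun i => ?_, fun d => hilb_LPP ha hmono hJ' d⟩
    rw [X_pow_eq_monomial]
    refine Ideal.subset_span ⟨_, Or.inl ⟨i, ?_⟩, rfl⟩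
    simp
  · intro I I' _ _ _ hle
    exact Ideal.span_mono (Set.image_mono fun u hu => lexSet_mono a (hilb_mono hle) hu)

end CLx


namespace CLx
open MvPolynomial

variable {K : Type} [Field K]

theorem phi_hom {n : ℕ} (c : Fin n → K) {p : MvPolynomial (Fin (n + 1)) K} {d : ℕ}
    (hp : p.IsHomogeneous d) : (phi c p).IsHomogeneous d := by
  have := hp.aeval (S := K)
    (Fin.snoc (α := fun _ => MvPolynomial (Fin n) K) X (∑ i, C (c i) * X i)) (n := 1) (by
    intro i
    refine Fin.lastCases ?_ (fun j => ?_) i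
    · rw [Fin.snoc_last]
      exact IsHomogeneous.sum _ _ _ fun i _ => isHomogeneous_C_mul_X _ _
    · rw [Fin.snoc_castSucc]
      exact isHomogeneous_X _ _)
  rwa [one_mul] at this

theorem ell_hom {n : ℕ} (c : Fin n → K) : (ell c).IsHomogeneous 1 := by
  unfold ell
  exact (isHomogeneous_X _ _).sub (IsHomogeneous.sum _ _ _ fun i _ => isHomogeneous_C_mul_X _ _)

theorem ell_ne {n : ℕ} (c : Fin n → K) : ell c ≠ 0 := by
  intro h
  have : coeff (Finsupp.single (Fin.last n) 1) (ell c) = 1 := by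
    unfold ell
    rw [coeff_sub, coeff_X, coeff_sum, Finset.sum_eq_zero, sub_zero]
    · simp
    intro i _
    rw [coeff_C_mul, coeff_X', if_neg, mul_zero]
    intro he
    have := (Finsupp.single_left_inj (one_ne_zero)).1 he
    exact (Fin.castSucc_lt_last i).ne this
  rw [h] at this
  simp at this

theorem comp_graded {m n : ℕ} (T : MvPolynomial (Fin m) K →ₗ[K] MvPolynomial (Fin n) K) (s : ℕ)
    (hT : ∀ p d, p.IsHomogeneous d → (T p).IsHomogeneous (d + s)) (p : MvPolynomial (Fin m) K)
    (d : ℕ) : homogeneousComponent (d + s) (T p) = T (homogeneousComponent d p) := by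
  conv_lhs => rw [← sum_homogeneousComponent p, map_sum, map_sum]
  by_cases hd : d ∈ Finset.range (p.totalDegree + 1)
  · rw [Finset.sum_eq_single_of_mem d hd]
    · exact homogeneousComponent_eq_self (hT _ _ (homogeneousComponent_isHomogeneous d p))
    · intro b _ hb
      have := homogeneousComponent_of_mem (m := d + s)
        (hT _ _ (homogeneousComponent_isHomogeneous b p))
      rw [this, if_neg]; omega
  · have h1 : p.totalDegree < d := by simpa using hd
    rw [homogeneousComponent_eq_zero _ _ h1, map_zero]
    refine Finset.sum_eq_zero fun b hb => ?_
    have := homogeneousComponent_of_mem (m := d + s)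
        (hT _ _ (homogeneousComponent_isHomogeneous b p))
    rw [this, if_neg]
    rintro h2
    have : d = b := by omega
    exact hd (this ▸ hb)

theorem comp_phi {n : ℕ} (c : Fin n → K) (p : MvPolynomial (Fin (n + 1)) K) (d : ℕ) :
    homogeneousComponent d (phi c p) = phi c (homogeneousComponent d p) :=
  comp_graded (phi c).toLinearMap 0 (fun _ _ hp => phi_hom c hp) p d

theorem comp_ell {n : ℕ} (c : Fin n → K) (p : MvPolynomial (Fin (n + 1)) K) (d : ℕ) :
    homogeneousComponent (d + 1) (ell c * p) = ell c * homogeneousComponent d p :=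
  comp_graded (LinearMap.mulLeft K (ell c)) 1
    (fun _ d hp => by rw [add_comm d 1]; exact (ell_hom c).mul hp) p d

theorem hom_of_ell_mul {n : ℕ} (c : Fin n → K) {p : MvPolynomial (Fin (n + 1)) K} {d : ℕ}
    (hp : (ell c * p).IsHomogeneous (d + 1)) : p.IsHomogeneous d := by
  have h1 := comp_ell c p d
  rw [homogeneousComponent_eq_self hp] at h1
  have := mul_left_cancel₀ (ell_ne c) h1
  rw [this]
  exact homogeneousComponent_isHomogeneous d p

theorem zero_of_ell_mul {n : ℕ} (c : Fin n → K) {p : MvPolynomial (Fin (n + 1)) K}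
    (hp : (ell c * p).IsHomogeneous 0) : p = 0 := by
  have h1 : ∀ d, homogeneousComponent d p = 0 := by
    intro d
    have h1 := comp_ell c p d
    rw [homogeneousComponent_of_mem hp, if_neg (by omega)] at h1
    exact (mul_eq_zero.1 h1.symm).resolve_left (ell_ne c)
  rw [← sum_homogeneousComponent p]
  exact Finset.sum_eq_zero fun d _ => h1 d

/-- colon ideal -/
def col {R : Type} [CommRing R] (x : R) (I : Ideal R) : Ideal R where
  carrier := {p | x * p ∈ I}
  add_mem' := by intro p q hp hq; simpa [mul_add] using add_mem hp hq
  zero_mem' := by simp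
  smul_mem' := by
    intro a p hp
    have := I.mul_mem_left a hp
    simpa [mul_left_comm] using this

theorem mem_col {R : Type} [CommRing R] {x p : R} {I : Ideal R} : p ∈ col x I ↔ x * p ∈ I :=
  Iff.rfl

theorem le_col {R : Type} [CommRing R] (x : R) (I : Ideal R) : I ≤ col x I :=
  fun _ hp => I.mul_mem_left x hp

theorem col_mono {R : Type} [CommRing R] (x : R) : Monotone (col x) := fun _ _ h _ hp => h hp

theorem homog_col {n : ℕ} (c : Fin n → K) {I : Ideal (MvPolynomial (Fin (n + 1)) K)}
    (hI : IsHomog I) : IsHomog (col (ell c) I) := by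
  intro p hp d
  rw [mem_col, ← comp_ell]
  exact hI _ hp _

theorem homog_map {n : ℕ} (c : Fin n → K) {I : Ideal (MvPolynomial (Fin (n + 1)) K)}
    (hI : IsHomog I) : IsHomog (I.map (phi c)) := by
  intro q hq d
  obtain ⟨p, hp, rfl⟩ := (Ideal.mem_map_iff_of_surjective _ (phi_surj c)).1 hq
  rw [comp_phi]
  exact Ideal.mem_map_of_mem _ (hI _ hp _)

/-- homogeneous lifting property -/
def Lift {n : ℕ} (c : Fin n → K) (I : Ideal (MvPolynomial (Fin (n + 1)) K)) : Prop :=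
  ∀ q d, q ∈ I.map (phi c) → q.IsHomogeneous d → ∃ p ∈ I, p.IsHomogeneous d ∧ phi c p = q

theorem lift_of_homog {n : ℕ} (c : Fin n → K) {I : Ideal (MvPolynomial (Fin (n + 1)) K)}
    (hI : IsHomog I) : Lift c I := by
  intro q d hq hd
  obtain ⟨p, hp, rfl⟩ := (Ideal.mem_map_iff_of_surjective _ (phi_surj c)).1 hq
  refine ⟨homogeneousComponent d p, hI _ hp _, homogeneousComponent_isHomogeneous d p, ?_⟩
  rw [← comp_phi, homogeneousComponent_eq_self hd]

/-- graded piece -/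
noncomputable abbrev pc {n : ℕ} (I : Ideal (MvPolynomial (Fin n) K)) (d : ℕ) :
    Submodule K (MvPolynomial (Fin n) K) :=
  Submodule.restrictScalars K I ⊓ homogeneousSubmodule (Fin n) K d

theorem hilb_split {n : ℕ} (c : Fin n → K) {I : Ideal (MvPolynomial (Fin (n + 1)) K)}
    (hL : Lift c I) (d : ℕ) :
    ∃ g : pc I d →ₗ[K] pc (I.map (phi c)) d, (∀ p, (g p).1 = phi c p.1) ∧
      hilb I d = hilb (I.map (phi c)) d + Module.finrank K (LinearMap.ker g) := by
  have := (hilb_finite I d).1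
  let g : pc I d →ₗ[K] pc (I.map (phi c)) d :=
    ((phi c).toLinearMap.comp (pc I d).subtype).codRestrict _ (fun p =>
      ⟨Ideal.mem_map_of_mem (phi c) p.2.1, phi_hom c p.2.2⟩)
  have hg : ∀ p, (g p).1 = phi c p.1 := fun p => rfl
  refine ⟨g, hg, ?_⟩
  have hsurj : LinearMap.range g = ⊤ := by
    rw [LinearMap.range_eq_top]
    rintro ⟨q, hq1, hq2⟩
    obtain ⟨p, hp1, hp2, hp3⟩ := hL q d hq1 hq2
    exact ⟨⟨p, hp1, hp2⟩, Subtype.ext hp3⟩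
  have := LinearMap.finrank_range_add_finrank_ker g
  rw [hsurj, finrank_top] at this
  exact this.symm

theorem hilb_zero_step {n : ℕ} (c : Fin n → K) {I : Ideal (MvPolynomial (Fin (n + 1)) K)}
    (hL : Lift c I) : hilb I 0 = hilb (I.map (phi c)) 0 := by
  obtain ⟨g, hg, he⟩ := hilb_split c hL 0
  have : LinearMap.ker g = ⊥ := by
    rw [LinearMap.ker_eq_bot']
    intro p hp
    have h1 : phi c p.1 = 0 := by rw [← hg, hp]; rfl
    obtain ⟨q, hq⟩ := (phi_eq_zero c _).1 h1
    have h2 : p.1.IsHomogeneous 0 := p.2.2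
    rw [hq] at h2
    have := zero_of_ell_mul c h2
    apply Subtype.ext
    rw [hq, this, mul_zero]; rfl
  rw [he, this, finrank_bot, add_zero]

theorem hilb_succ_step {n : ℕ} (c : Fin n → K) {I : Ideal (MvPolynomial (Fin (n + 1)) K)}
    (hL : Lift c I) (d : ℕ) :
    hilb I (d + 1) = hilb (I.map (phi c)) (d + 1) + hilb (col (ell c) I) d := by
  obtain ⟨g, hg, he⟩ := hilb_split c hL (d + 1)
  rw [he]
  congr 1
  let m : pc (col (ell c) I) d →ₗ[K] pc I (d + 1) :=
    ((LinearMap.mulLeft K (ell c)).comp (pc (col (ell c) I) d).subtype).codRestrict _ (fun p =>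
      ⟨p.2.1, by
        have h2 : p.1.IsHomogeneous d := p.2.2
        have := (ell_hom c).mul h2
        rwa [add_comm 1 d] at this⟩)
  have hm : ∀ p, (m p).1 = ell c * p.1 := fun p => rfl
  have hinj : Function.Injective m := by
    intro p q hpq
    have := congrArg Subtype.val hpq
    rw [hm, hm] at this
    exact Subtype.ext (mul_left_cancel₀ (ell_ne c) this)
  have hr : LinearMap.ker g = LinearMap.range m := by
    ext p
    rw [LinearMap.mem_ker, LinearMap.mem_range]
    constructor
    · intro hp
      have h1 : phi c p.1 = 0 := by rw [← hg, hp]; rfl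
      obtain ⟨q, hq⟩ := (phi_eq_zero c _).1 h1
      have h2 : p.1.IsHomogeneous (d + 1) := p.2.2
      have h3 : p.1 ∈ I := p.2.1
      rw [hq] at h2 h3
      exact ⟨⟨q, h3, hom_of_ell_mul c h2⟩, Subtype.ext hq.symm⟩
    · rintro ⟨q, rfl⟩
      apply Subtype.ext
      rw [hg, hm, map_mul, phi_ell, zero_mul]; rfl
  rw [hr, LinearMap.finrank_range_of_inj hinj]
  rfl

/-- view the last variable as a polynomial variable -/
noncomputable def ee (K : Type) [Field K] (n : ℕ) :
    MvPolynomial (Fin (n + 1)) K →ₐ[K] Polynomial (MvPolynomial (Fin n) K) :=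
  aeval (Fin.snoc (α := fun _ => Polynomial (MvPolynomial (Fin n) K))
    (fun i => Polynomial.C (X i)) Polynomial.X)

theorem ee_castSucc {n : ℕ} (i : Fin n) : ee K n (X i.castSucc) = Polynomial.C (X i) := by
  simp [ee]

theorem ee_last {n : ℕ} : ee K n (X (Fin.last n)) = Polynomial.X := by
  simp [ee]

theorem ee_iot {n : ℕ} (p : MvPolynomial (Fin n) K) : ee K n (iot K n p) = Polynomial.C p := by
  have : (ee K n).comp (iot K n) = Polynomial.CAlgHom (R := K) (A := MvPolynomial (Fin n) K) := by
    apply MvPolynomial.algHom_ext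
    intro i
    simp [iot, ee_castSucc]
  exact DFunLike.congr_fun this p

theorem ell_zero {n : ℕ} : ell (0 : Fin n → K) = X (Fin.last n) := by
  simp [ell]

theorem ee_coeff_zero {n : ℕ} (p : MvPolynomial (Fin (n + 1)) K) :
    (ee K n p).coeff 0 = phi 0 p := by
  have h1 := ee_iot (phi 0 p)
  obtain ⟨q, hq⟩ := sub_iot_phi (0 : Fin n → K) p
  have h2 := congrArg (ee K n) hq
  rw [map_sub, h1, map_mul, ell_zero, ee_last] at h2
  have h3 := congrArg (fun z => Polynomial.coeff z 0) h2
  simp at h3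
  exact sub_eq_zero.1 h3

def chainIdeal {R : Type} [CommRing R] (M : ℕ → Ideal R) (hM : Monotone M) :
    Ideal (Polynomial R) where
  carrier := {q | ∀ j, q.coeff j ∈ M j}
  add_mem' := by
    intro p q hp hq j
    rw [Polynomial.coeff_add]
    exact add_mem (hp j) (hq j)
  zero_mem' := by
    intro j
    simp
  smul_mem' := by
    intro p q hq j
    rw [smul_eq_mul, Polynomial.coeff_mul]
    refine Ideal.sum_mem _ fun x hx => Ideal.mul_mem_left _ _ (hM ?_ (hq x.2))
    have := Finset.HasAntidiagonal.mem_antidiagonal.1 hx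
    omega

theorem exists_chain {R : Type} [CommRing R] (M : ℕ → Ideal R) (hM : Monotone M) :
    ∃ Q : Ideal (Polynomial R), ∀ q, q ∈ Q ↔ ∀ j, q.coeff j ∈ M j :=
  ⟨chainIdeal M hM, fun _ => Iff.rfl⟩

theorem claim_succ [Infinite K] {r : ℕ} {a : Fin r → ℕ} (ha : ∀ i, 2 ≤ a i) {n : ℕ} (h : r ≤ n)
    (ih : Claim K a n h) : Claim K a (n + 1) (h.trans (Nat.le_succ n)) := by
  classical
  intro f hf hdeg
  -- generic hyperplane
  have hcc : ∀ i, constantCoeff (f i) = 0 := by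
    intro i
    rw [constantCoeff_eq]
    apply (hdeg i).coeff_eq_zero
    have := ha i
    simp; omega
  let F : ℕ → MvPolynomial (Fin (n + 1)) K := fun i => if hi : i < r then f ⟨i, hi⟩ else 0
  have hF : ∀ i : Fin r, F i = f i := by intro i; simp [F]
  have himg : ∀ {m : ℕ} (φ : MvPolynomial (Fin (n + 1)) K → MvPolynomial (Fin m) K) (i : Fin r),
      (fun k => φ (F k)) '' Set.Iio (i : ℕ) = (fun j => φ (f j)) '' {j : Fin r | j < i} := by
    intro m φ i
    ext x
    constructor
    · rintro ⟨k, hk, rfl⟩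
      have hk' : k < (i : ℕ) := hk
      exact ⟨⟨k, hk'.trans i.2⟩, hk', by dsimp only; rw [← hF]⟩
    · rintro ⟨j, hj, rfl⟩
      exact ⟨j, hj, by dsimp only; rw [hF]⟩
  have hPre : ∀ i : Fin r, Pre F i = Ideal.span (f '' {j | j < i}) :=
    fun i => congrArg Ideal.span (himg id i)
  have hW : WR F r := by
    intro i hi g hg
    have h1 := hPre ⟨i, hi⟩
    have h2 := hF ⟨i, hi⟩
    simp only at h1 h2
    rw [h1, h2] at hg
    rw [h1]
    exact hf.2 _ _ hg
  obtain ⟨c, hc⟩ := gen_ell (K := K) (fun m _ => SOC_all m) (Nat.lt_succ_of_le h) F (by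
    intro i hi
    rw [show F i = f ⟨i, hi⟩ from hF ⟨i, hi⟩, hcc]) hW
  have hW' := WR_phi F hW c hc
  have hreg : IsRegSeq (fun i => phi c (f i)) := by
    constructor
    · intro htop
      have h1 : Ideal.span (Set.range fun i => phi c (f i)) ≤
          RingHom.ker (constantCoeff : MvPolynomial (Fin n) K →+* K) := by
        rw [Ideal.span_le]
        rintro _ ⟨i, rfl⟩
        change constantCoeff (phi c (f i)) = 0
        rw [cc_phi, hcc]
      rw [htop] at h1
      have h2 : (1 : MvPolynomial (Fin n) K) ∈
        RingHom.ker (constantCoeff : MvPolynomial (Fin n) K →+* K) := h1 trivial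
      rw [RingHom.mem_ker, map_one] at h2
      exact one_ne_zero h2
    · intro i g hg
      have h1 := congrArg Ideal.span (himg (phi c) i)
      have h2 := hW' i i.2 g
      dsimp only at h2
      rw [hF] at h2
      rw [← h1] at hg ⊢
      exact h2 hg
  obtain ⟨Λ, hΛ1, hΛ2⟩ := ih _ hreg (fun i => phi_hom c (hdeg i))
  -- admissible ideals
  let M : Ideal (MvPolynomial (Fin (n + 1)) K) → ℕ → Ideal (MvPolynomial (Fin n) K) :=
    fun I j => Λ (((col (ell c))^[j] I).map (phi c))
  let Adm : Ideal (MvPolynomial (Fin (n + 1)) K) → Prop := fun I => IsHomog I ∧ ∀ i, f i ∈ I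
  have hcol : ∀ I, Adm I → Adm (col (ell c) I) := fun I hI =>
    ⟨homog_col c hI.1, fun i => le_col _ _ (hI.2 i)⟩
  have hiter : ∀ j I, Adm I → Adm ((col (ell c))^[j] I) := by
    intro j
    induction j with
    | zero => intro I hI; exact hI
    | succ j ihj => intro I hI; exact ihj _ (hcol I hI)
  have hmap : ∀ I, Adm I → IsHomog (I.map (phi c)) ∧ ∀ i, phi c (f i) ∈ I.map (phi c) :=
    fun I hI => ⟨homog_map c hI.1, fun i => Ideal.mem_map_of_mem _ (hI.2 i)⟩
  have hΛm : ∀ I I', Adm I → Adm I' → I ≤ I' → Λ (I.map (phi c)) ≤ Λ (I'.map (phi c)) :=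
    fun I I' hI hI' hle => hΛ2 _ _ (hmap I hI).1 (hmap I hI).2 (hmap I' hI').1 (Ideal.map_mono hle)
  have hMmono : ∀ I, Adm I → Monotone (M I) := by
    intro I hI
    refine monotone_nat_of_le_succ fun j => ?_
    refine hΛm _ _ (hiter j I hI) (hiter (j + 1) I hI) ?_
    rw [Function.iterate_succ_apply']
    exact le_col _ _
  have hex : ∀ I, ∃ J : Ideal (MvPolynomial (Fin (n + 1)) K), Adm I →
      ∀ p, p ∈ J ↔ ∀ j, (ee K n p).coeff j ∈ M I j := by
    intro I
    by_cases hI : Adm I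
    · obtain ⟨Q, hQ⟩ := exists_chain (M I) (hMmono I hI)
      exact ⟨Q.comap (ee K n), fun _ p => by rw [Ideal.mem_comap]; exact hQ _⟩
    · exact ⟨⊥, fun hh => absurd hh hI⟩
  choose Λ' hΛ' using hex
  have hiot : ∀ I, Adm I → ∀ q ∈ Λ (I.map (phi c)), iot K n q ∈ Λ' I := by
    intro I hI q hq
    rw [hΛ' I hI]
    intro j
    rw [ee_iot, Polynomial.coeff_C]
    split_ifs with hj
    · subst hj; exact hq
    · exact zero_mem _
  have hphi : ∀ I, Adm I → ∀ p ∈ Λ' I, phi 0 p ∈ Λ (I.map (phi c)) := by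
    intro I hI p hp
    rw [← ee_coeff_zero]
    exact (hΛ' I hI p).1 hp 0
  have hmapΛ : ∀ I, Adm I → (Λ' I).map (phi 0) = Λ (I.map (phi c)) := by
    intro I hI
    apply le_antisymm
    · rw [Ideal.map_le_iff_le_comap]
      intro p hp
      exact hphi I hI p hp
    · intro q hq
      rw [← phi_iot 0 q]
      exact Ideal.mem_map_of_mem _ (hiot I hI q hq)
  have hlift : ∀ I, Adm I → Lift 0 (Λ' I) := by
    intro I hI q d hq hd
    rw [hmapΛ I hI] at hq
    exact ⟨iot K n q, hiot I hI q hq, hd.rename_isHomogeneous, phi_iot 0 q⟩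
  have hcolΛ : ∀ I, Adm I → col (ell 0) (Λ' I) = Λ' (col (ell c) I) := by
    intro I hI
    ext p
    rw [mem_col, hΛ' I hI, hΛ' _ (hcol I hI), ell_zero, map_mul, ee_last]
    constructor
    · intro hp j
      have := hp (j + 1)
      rw [Polynomial.coeff_X_mul] at this
      exact this
    · intro hp j
      rcases j with _ | j
      · simp
      · rw [Polynomial.coeff_X_mul]
        exact hp j
  have hH : ∀ d I, Adm I → hilb (Λ' I) d = hilb I d := by
    intro d
    induction d with
    | zero =>
      intro I hI
      rw [hilb_zero_step 0 (hlift I hI), hilb_zero_step c (lift_of_homog c hI.1), hmapΛ I hI]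
      exact (hΛ1 _ (hmap I hI).1 (hmap I hI).2).2 0
    | succ d ihd =>
      intro I hI
      rw [hilb_succ_step 0 (hlift I hI), hilb_succ_step c (lift_of_homog c hI.1), hmapΛ I hI,
        hcolΛ I hI, ihd _ (hcol I hI)]
      rw [(hΛ1 _ (hmap I hI).1 (hmap I hI).2).2 (d + 1)]
  refine ⟨Λ', ?_, ?_⟩
  · intro I hI hfI
    refine ⟨fun i => ?_, fun d => hH d I ⟨hI, hfI⟩⟩
    have h1 := hiot I ⟨hI, hfI⟩ _ ((hΛ1 _ (hmap I ⟨hI, hfI⟩).1 (hmap I ⟨hI, hfI⟩).2).1 i)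
    rw [map_pow, iot, rename_X] at h1
    exact h1
  · intro I I' hI hfI hI' hle p hp
    have hA : Adm I := ⟨hI, hfI⟩
    have hA' : Adm I' := ⟨hI', fun i => hle (hfI i)⟩
    rw [hΛ' I hA] at hp
    rw [hΛ' I' hA']
    intro j
    exact hΛm _ _ (hiter j I hA) (hiter j I' hA') ((col_mono (ell c)).iterate j hle) (hp j)

end CLx

theorem stmt10 {K : Type} [Field K] [Infinite K] {r : ℕ} (a : Fin r → ℕ)
    (ha2 : ∀ i, 2 ≤ a i) (hmono : Monotone a)
    (hEGH : EGHnr K r r le_rfl a) :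
    ∀ n : ℕ, ∀ h : r ≤ n, EGHnr K n r h a := by
  have key : ∀ n : ℕ, ∀ h : r ≤ n, CLx.Claim K a n h := by
    intro n h
    induction n, h using Nat.le_induction with
    | base => exact CLx.claim_base ha2 hmono hEGH
    | succ n h ih => exact CLx.claim_succ ha2 h ih
  intro n h I hI hf
  obtain ⟨f, hf1, hf2, hf3⟩ := hf
  obtain ⟨Λ, hΛ, -⟩ := key n h f hf1 hf2
  obtain ⟨h1, h2⟩ := hΛ I hI hf3
  exact ⟨Λ I, h1, fun d => (h2 d).symm⟩
end
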